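/- Let μ be a probability measure on ℝⁿ with a regular, log-concave density ρ, and let λ₀ = 1/C_P(μ). For θ ∈ ℝⁿ and t > 0 let μ_{t,θ} be the probability measure with density p_{t,θ}(x) = e^{⟨θ,x⟩ − t|x|²/2} ρ(x) / Z(t,θ), let A(t,θ) be its covariance matrix and λ(t,θ) = 1/C_P(μ_{t,θ}). Let X be a random vector with law μ and W an independent Gaussian random vector in ℝⁿ with mean 0 and covariance t·Id, and set θ_t = tX + W, λ_t = λ(t,θ_t), A_t = A(t,θ_t). Then there is a universal constant C > 0 such that for any A > 0 and 0 < t < A λ₀, one has λ₀^{−1} ≤ C (A+1) · E[λ_t^{−1}] ≤ C (A+1) · E[ √(‖A_t‖_op) ] / √t. -/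

import Mathlib

open MeasureTheory Real
open scoped ENNReal RealInnerProductSpace

noncomputable section

abbrev Euc (n : ℕ) := EuclideanSpace ℝ (Fin n)

/-- A nonnegative function `g` is log-concave: `g(ax+by) ≥ g(x)^a g(y)^b`. -/
def IsLogConcaveFun {n : ℕ} (g : Euc n → ℝ) : Prop :=
  (∀ x, 0 ≤ g x) ∧
  ∀ x y : Euc n, ∀ a b : ℝ, 0 ≤ a → 0 ≤ b → a + b = 1 →
    g x ^ a * g y ^ b ≤ g (a • x + b • y)

def IsLogConcaveMeasure {n : ℕ} (μ : Measure (Euc n)) : Prop :=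
  ∃ ρ : Euc n → ℝ, Measurable ρ ∧ IsLogConcaveFun ρ ∧
    μ = volume.withDensity (fun x => ENNReal.ofReal (ρ x))

def poincareSet {n : ℕ} (μ : Measure (Euc n)) : Set ℝ :=
  {C : ℝ | 0 ≤ C ∧ ∀ f : Euc n → ℝ, LocallyLipschitz f →
    Integrable (fun x => ‖gradient f x‖ ^ 2) μ →
    ∫ x, f x ^ 2 ∂μ - (∫ x, f x ∂μ) ^ 2 ≤ C * ∫ x, ‖gradient f x‖ ^ 2 ∂μ}

def poincareConst {n : ℕ} (μ : Measure (Euc n)) : ℝ := sInf (poincareSet μ)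

def covMatrix {n : ℕ} (μ : Measure (Euc n)) : Matrix (Fin n) (Fin n) ℝ :=
  Matrix.of fun i j => ∫ x, x i * x j ∂μ - (∫ x, x i ∂μ) * (∫ x, x j ∂μ)

def opNorm {n : ℕ} (M : Matrix (Fin n) (Fin n) ℝ) : ℝ :=
  ‖Matrix.toEuclideanCLM (𝕜 := ℝ) M‖

def IsIsotropic {n : ℕ} (μ : Measure (Euc n)) : Prop :=
  (∫ x, x ∂μ) = 0 ∧ ∀ i j, ∫ x, x i * x j ∂μ = if i = j then 1 else 0

def UniformlyLogConcave {n : ℕ} (t : ℝ) (μ : Measure (Euc n)) : Prop :=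
  ∃ g : Euc n → ℝ, Measurable g ∧ IsLogConcaveFun g ∧
    μ = volume.withDensity (fun x => ENNReal.ofReal (Real.exp (-t * ‖x‖ ^ 2 / 2) * g x))

def IsRegularPotential {n : ℕ} (ψ : Euc n → ℝ) : Prop :=
  ContDiff ℝ (⊤ : ℕ∞) ψ ∧
  (∃ ε : ℝ, 0 < ε ∧ ∀ x v : Euc n,
    ε * ‖v‖ ^ 2 ≤ iteratedFDeriv ℝ 2 ψ x ![v, v] ∧
    iteratedFDeriv ℝ 2 ψ x ![v, v] ≤ ε⁻¹ * ‖v‖ ^ 2) ∧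
  (∀ m : ℕ, ∃ C : ℝ, ∃ k : ℕ, ∀ x, ‖iteratedFDeriv ℝ m ψ x‖ ≤ C * (1 + ‖x‖) ^ k)

def IsRegularMeasure {n : ℕ} (μ : Measure (Euc n)) (ψ : Euc n → ℝ) : Prop :=
  IsRegularPotential ψ ∧ μ = volume.withDensity (fun x => ENNReal.ofReal (Real.exp (-ψ x)))

def IsTempered {n : ℕ} (ρ : Euc n → ℝ) (f : Euc n → ℝ) : Prop :=
  ContDiff ℝ (⊤ : ℕ∞) f ∧ ∀ m : ℕ, ∃ C : ℝ, 0 < C ∧ ∃ a : ℝ, 0 < a ∧ ∀ x,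
    ‖iteratedFDeriv ℝ m f x‖ ≤ C / Real.sqrt (ρ x) * Real.exp (-a * ‖x‖)

def lap {n : ℕ} (f : Euc n → ℝ) (x : Euc n) : ℝ :=
  ∑ i, iteratedFDeriv ℝ 2 f x ![EuclideanSpace.single i (1:ℝ), EuclideanSpace.single i (1:ℝ)]

def Lop {n : ℕ} (ψ u : Euc n → ℝ) (x : Euc n) : ℝ :=
  lap u x - ⟪gradient ψ x, gradient u x⟫

def gaussDensity (n : ℕ) (s : ℝ) (x : Euc n) : ℝ :=
  (2 * π * s) ^ (-(n : ℝ) / 2) * Real.exp (-‖x‖ ^ 2 / (2 * s))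

def gaussMeasure (n : ℕ) (s : ℝ) : Measure (Euc n) :=
  volume.withDensity fun x => ENNReal.ofReal (gaussDensity n s x)

def tiltZ {n : ℕ} (ρ : Euc n → ℝ) (t : ℝ) (θ : Euc n) : ℝ :=
  ∫ x, Real.exp (⟪θ, x⟫ - t * ‖x‖ ^ 2 / 2) * ρ x

def tiltDensity {n : ℕ} (ρ : Euc n → ℝ) (t : ℝ) (θ : Euc n) (x : Euc n) : ℝ :=
  Real.exp (⟪θ, x⟫ - t * ‖x‖ ^ 2 / 2) * ρ x / tiltZ ρ t θ

def tiltMeasure {n : ℕ} (ρ : Euc n → ℝ) (t : ℝ) (θ : Euc n) : Measure (Euc n) :=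
  volume.withDensity fun x => ENNReal.ofReal (tiltDensity ρ t θ x)

def varD {n : ℕ} (p : Euc n → ℝ) (f : Euc n → ℝ) : ℝ :=
  (∫ x, f x ^ 2 * p x) - (∫ x, f x * p x) ^ 2

end

open MeasureTheory Real
open scoped ENNReal RealInnerProductSpace

noncomputable section PartA
open scoped ContDiff

variable {n : ℕ}

/-- directional derivative -/
def dd (v : Euc n) (f : Euc n → ℝ) : Euc n → ℝ := fun x => fderiv ℝ f x v

/-- the i-th basis vector -/
def eb (i : Fin n) : Euc n := EuclideanSpace.single i (1:ℝ)

/-- smooth with compact support -/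
structure CS (f : Euc n → ℝ) : Prop where
  smooth : ContDiff ℝ ∞ f
  cpt : HasCompactSupport f

lemma dd_smooth {f : Euc n → ℝ} (hf : ContDiff ℝ ∞ f) (v : Euc n) : ContDiff ℝ ∞ (dd v f) :=
  (hf.fderiv_right (m := ∞) (by simp)).clm_apply contDiff_const

lemma CS.dd {f : Euc n → ℝ} (hf : CS f) (v : Euc n) : CS (dd v f) :=
  ⟨dd_smooth hf.smooth v, hf.cpt.fderiv_apply (𝕜 := ℝ) v⟩

lemma CS.mul_left {f g : Euc n → ℝ} (hf : CS f) (hg : ContDiff ℝ ∞ g) :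
    CS (fun x => f x * g x) := ⟨hf.smooth.mul hg, hf.cpt.mul_right⟩

lemma CS.mul_right {f g : Euc n → ℝ} (hf : CS f) (hg : ContDiff ℝ ∞ g) :
    CS (fun x => g x * f x) := ⟨hg.mul hf.smooth, hf.cpt.mul_left⟩

lemma CS.add {f g : Euc n → ℝ} (hf : CS f) (hg : CS g) : CS (fun x => f x + g x) :=
  ⟨hf.smooth.add hg.smooth, hf.cpt.add hg.cpt⟩

lemma CS.neg {f : Euc n → ℝ} (hf : CS f) : CS (fun x => - f x) :=
  ⟨hf.smooth.neg, hf.cpt.neg⟩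

lemma CS.sub {f g : Euc n → ℝ} (hf : CS f) (hg : CS g) : CS (fun x => f x - g x) := by
  simpa [sub_eq_add_neg] using hf.add hg.neg

lemma CS.zero : CS (fun _ : Euc n => (0:ℝ)) := ⟨contDiff_const, HasCompactSupport.zero⟩

lemma CS.sum {ι : Type*} (s : Finset ι) {f : ι → Euc n → ℝ} (hf : ∀ i, CS (f i)) :
    CS (fun x => ∑ i ∈ s, f i x) := by
  classical
  induction s using Finset.induction_on with
  | empty => simpa using CS.zero
  | insert a s ha ih => simpa [Finset.sum_insert ha] using (hf a).add ih

lemma CS.integrable {f : Euc n → ℝ} (hf : CS f) : Integrable f :=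
  hf.smooth.continuous.integrable_of_hasCompactSupport hf.cpt

lemma diffAt {f : Euc n → ℝ} (hf : ContDiff ℝ ∞ f) (x : Euc n) : DifferentiableAt ℝ f x :=
  (hf.differentiable (by simp)) x

lemma dd_mul {f g : Euc n → ℝ} (hf : ContDiff ℝ ∞ f) (hg : ContDiff ℝ ∞ g) (v x : Euc n) :
    dd v (fun x => f x * g x) x = dd v f x * g x + f x * dd v g x := by
  simp only [dd]
  rw [fderiv_fun_mul (diffAt hf x) (diffAt hg x)]
  simp; ring

lemma dd_add {f g : Euc n → ℝ} (hf : ContDiff ℝ ∞ f) (hg : ContDiff ℝ ∞ g) (v x : Euc n) :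
    dd v (fun x => f x + g x) x = dd v f x + dd v g x := by
  simp only [dd]
  rw [fderiv_fun_add (diffAt hf x) (diffAt hg x)]
  simp

lemma dd_neg {f : Euc n → ℝ} (v x : Euc n) :
    dd v (fun x => - f x) x = - dd v f x := by
  simp only [dd]
  rw [fderiv_fun_neg]
  simp

lemma dd_sub {f g : Euc n → ℝ} (hf : ContDiff ℝ ∞ f) (hg : ContDiff ℝ ∞ g) (v x : Euc n) :
    dd v (fun x => f x - g x) x = dd v f x - dd v g x := by
  simp only [dd]
  rw [fderiv_fun_sub (diffAt hf x) (diffAt hg x)]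
  simp

lemma dd_dd {f : Euc n → ℝ} (hf : ContDiff ℝ ∞ f) (u v x : Euc n) :
    dd u (dd v f) x = fderiv ℝ (fderiv ℝ f) x u v := by
  have h : DifferentiableAt ℝ (fderiv ℝ f) x :=
    ((hf.fderiv_right (m := ∞) (by simp)).differentiable (by simp)) x
  simp only [dd]
  rw [show dd v f = fun x => (fderiv ℝ f x) ((fun _ => v) x) from rfl,
    fderiv_clm_apply h (differentiableAt_const v)]
  simp

lemma dd_comm {f : Euc n → ℝ} (hf : ContDiff ℝ ∞ f) (u v x : Euc n) :
    dd u (dd v f) x = dd v (dd u f) x := by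
  rw [dd_dd hf, dd_dd hf]
  have : IsSymmSndFDerivAt ℝ f x :=
    (hf.contDiffAt).isSymmSndFDerivAt (by simp; exact WithTop.coe_le_coe.2 le_top)
  exact this u v

lemma ibp {f g : Euc n → ℝ} (hf : ContDiff ℝ ∞ f) (hg : CS g) (v : Euc n) :
    ∫ x, f x * dd v g x = - ∫ x, dd v f x * g x := by
  refine integral_mul_fderiv_eq_neg_fderiv_mul_of_integrable ?_ ?_ ?_ ?_ ?_
  · exact (hg.mul_right (dd_smooth hf v)).integrable
  · exact ((hg.dd v).mul_right hf).integrable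
  · exact (hg.mul_right hf).integrable
  · exact fun x _ => diffAt hf x
  · exact fun x _ => diffAt hg.smooth x

lemma grad_inner (f : Euc n → ℝ) (x v : Euc n) : ⟪gradient f x, v⟫ = fderiv ℝ f x v := by
  simp [gradient]

lemma grad_sq (f : Euc n → ℝ) (x : Euc n) : ‖gradient f x‖ ^ 2 = ∑ i, (dd (eb i) f x) ^ 2 := by
  rw [EuclideanSpace.norm_sq_eq]
  refine Finset.sum_congr rfl fun i _ => ?_
  rw [dd, ← grad_inner, eb, EuclideanSpace.inner_single_right]
  simp

lemma grad_norm (f : Euc n → ℝ) (x : Euc n) : ‖gradient f x‖ = ‖fderiv ℝ f x‖ := by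
  simp [gradient]

lemma sum_eb (v : Euc n) : ∑ i, v i • eb i = v := by
  ext j
  simp [eb, Finset.sum_apply, Pi.single_apply]

/-- potentials -/
structure Pot (φ : Euc n → ℝ) (m : ℝ) : Prop where
  smooth : ContDiff ℝ ∞ φ
  m_pos : 0 < m
  lower : ∀ x v : Euc n, m * ‖v‖ ^ 2 ≤ fderiv ℝ (fderiv ℝ φ) x v v

/-- density -/
def rho (φ : Euc n → ℝ) : Euc n → ℝ := fun x => Real.exp (-φ x)

def nu (φ : Euc n → ℝ) : Measure (Euc n) :=
  volume.withDensity (fun x => ENNReal.ofReal (Real.exp (-φ x)))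

lemma rho_pos (φ : Euc n → ℝ) (x : Euc n) : 0 < rho φ x := Real.exp_pos _

lemma rho_smooth {φ : Euc n → ℝ} (h : ContDiff ℝ ∞ φ) : ContDiff ℝ ∞ (rho φ) :=
  Real.contDiff_exp.comp h.neg

lemma dd_rho {φ : Euc n → ℝ} (h : ContDiff ℝ ∞ φ) (v x : Euc n) :
    dd v (rho φ) x = - dd v φ x * rho φ x := by
  rw [dd, show rho φ = fun x => Real.exp (-φ x) from rfl]
  rw [fderiv_exp (diffAt h.neg x)]
  simp [fderiv_fun_neg, dd]; ring

lemma nu_integral {φ : Euc n → ℝ} (h : Continuous φ) (f : Euc n → ℝ) :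
    ∫ x, f x ∂(nu φ) = ∫ x, f x * rho φ x := by
  rw [nu, integral_withDensity_eq_integral_toReal_smul (by fun_prop) (by simp)]
  refine integral_congr_ae (Filter.Eventually.of_forall fun x => ?_)
  simp [rho, ENNReal.toReal_ofReal (Real.exp_pos _).le, mul_comm]

lemma nu_integrable {φ : Euc n → ℝ} (h : Continuous φ) (f : Euc n → ℝ) :
    Integrable f (nu φ) ↔ Integrable (fun x => f x * rho φ x) := by
  rw [nu, integrable_withDensity_iff (by fun_prop) (by simp)]
  refine integrable_congr (Filter.Eventually.of_forall fun x => ?_)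
  simp [rho, ENNReal.toReal_ofReal (Real.exp_pos _).le]

/-- adjoint derivative -/
def ad (φ : Euc n → ℝ) (v : Euc n) (u : Euc n → ℝ) : Euc n → ℝ :=
  fun x => - dd v u x + dd v φ x * u x

lemma ad_CS {φ u : Euc n → ℝ} (h : ContDiff ℝ ∞ φ) (hu : CS u) (v : Euc n) : CS (ad φ v u) :=
  (hu.dd v).neg.add (hu.mul_right (dd_smooth h v))

lemma ad_adj {φ u w : Euc n → ℝ} (h : ContDiff ℝ ∞ φ) (hu : CS u) (hw : ContDiff ℝ ∞ w)
    (v : Euc n) : ∫ x, ad φ v u x * w x * rho φ x = ∫ x, u x * dd v w x * rho φ x := by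
  have h1 := ibp hw (hu.mul_left (rho_smooth h)) v
  have e1 : ∀ x, ad φ v u x * w x * rho φ x = - (w x * dd v (fun x => u x * rho φ x) x) := by
    intro x
    rw [dd_mul hu.smooth (rho_smooth h), dd_rho h, ad]; ring
  simp_rw [e1]
  rw [integral_neg, h1, neg_neg]
  congr 1; ext x; ring

lemma dd_ad {φ u : Euc n → ℝ} (h : ContDiff ℝ ∞ φ) (hu : CS u) (v w x : Euc n) :
    dd w (ad φ v u) x = ad φ v (dd w u) x + dd w (dd v φ) x * u x := by
  unfold ad
  rw [dd_add (dd_smooth hu.smooth v).neg ((dd_smooth h v).mul hu.smooth), dd_neg,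
    dd_mul (dd_smooth h v) hu.smooth, dd_comm hu.smooth w v]
  ring

/-- generator -/
def LL (φ : Euc n → ℝ) (h : Euc n → ℝ) : Euc n → ℝ :=
  fun x => ∑ i, (dd (eb i) (dd (eb i) h) x - dd (eb i) φ x * dd (eb i) h x)

lemma LL_eq (φ h : Euc n → ℝ) (x : Euc n) : LL φ h x = - ∑ i, ad φ (eb i) (dd (eb i) h) x := by
  rw [LL, ← Finset.sum_neg_distrib]
  refine Finset.sum_congr rfl fun i _ => ?_
  simp [ad]; ring

lemma LL_CS {φ h : Euc n → ℝ} (hφ : ContDiff ℝ ∞ φ) (hh : CS h) : CS (LL φ h) := by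
  have : LL φ h = fun x => - ∑ i, ad φ (eb i) (dd (eb i) h) x := by ext x; exact LL_eq φ h x
  rw [this]
  exact (CS.sum _ fun i => ad_CS hφ (hh.dd _) _).neg

lemma LL_adj {φ h w : Euc n → ℝ} (hφ : ContDiff ℝ ∞ φ) (hh : CS h) (hw : ContDiff ℝ ∞ w) :
    ∫ x, w x * LL φ h x * rho φ x = - ∫ x, (∑ i, dd (eb i) w x * dd (eb i) h x) * rho φ x := by
  have e : ∀ x, w x * LL φ h x * rho φ x
      = - ∑ i, ad φ (eb i) (dd (eb i) h) x * w x * rho φ x := by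
    intro x; rw [LL_eq, ← Finset.sum_mul, ← Finset.sum_mul]; ring
  simp_rw [e]
  rw [integral_neg, integral_finsetSum]
  · congr 1
    simp_rw [Finset.sum_mul]
    rw [integral_finsetSum]
    · refine Finset.sum_congr rfl fun i _ => ?_
      rw [ad_adj hφ (hh.dd _) hw]
      congr 1; ext x; ring
    · intro i _
      exact (((hh.dd _).mul_right (dd_smooth hw _)).mul_left (rho_smooth hφ)).integrable
  · intro i _
    exact (((ad_CS hφ (hh.dd _) _).mul_left hw).mul_left (rho_smooth hφ)).integrable

lemma ad_ad {φ u w : Euc n → ℝ} (hφ : ContDiff ℝ ∞ φ) (hu : CS u) (hw : CS w) (a b : Euc n) :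
    ∫ x, ad φ a u x * ad φ b w x * rho φ x =
      ∫ x, (dd b u x * dd a w x + dd a (dd b φ) x * u x * w x) * rho φ x := by
  rw [ad_adj hφ hu (ad_CS hφ hw b).smooth]
  have e : ∀ x, u x * dd a (ad φ b w) x * rho φ x =
      ad φ b (dd a w) x * u x * rho φ x + dd a (dd b φ) x * u x * w x * rho φ x := by
    intro x; rw [dd_ad hφ hw]; ring
  simp_rw [e]
  have i1 : Integrable fun x => dd a (dd b φ) x * u x * w x * rho φ x :=
    ((hw.mul_right ((dd_smooth (dd_smooth hφ b) a).mul hu.smooth)).mul_left (rho_smooth hφ)).integrable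
  rw [integral_add (((ad_CS hφ (hw.dd a) b).mul_left hu.smooth).mul_left (rho_smooth hφ)).integrable
    i1, ad_adj hφ (hw.dd a) hu.smooth, ← integral_add _ i1]
  · congr 1; ext x; ring
  · exact (((hw.dd a).mul_left (dd_smooth hu.smooth b)).mul_left (rho_smooth hφ)).integrable

/-- Bochner inequality -/
lemma bochner {φ h : Euc n → ℝ} {m : ℝ} (hp : Pot φ m) (hh : CS h) :
    (∑ i, ∫ x, ‖gradient (dd (eb i) h) x‖ ^ 2 * rho φ x) + m * ∫ x, ‖gradient h x‖ ^ 2 * rho φ x ≤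
      ∫ x, (LL φ h x) ^ 2 * rho φ x := by
  have hφ := hp.smooth
  have e : ∀ x, (LL φ h x) ^ 2 * rho φ x = ∑ i, ∑ j,
      ad φ (eb i) (dd (eb i) h) x * ad φ (eb j) (dd (eb j) h) x * rho φ x := by
    intro x
    rw [LL_eq, neg_sq, sq, Finset.sum_mul_sum, Finset.sum_mul]
    simp_rw [Finset.sum_mul]
  have i2 : ∀ i j, Integrable fun x => (dd (eb j) (dd (eb i) h) x * dd (eb i) (dd (eb j) h) x +
          dd (eb i) (dd (eb j) φ) x * dd (eb i) h x * dd (eb j) h x) * rho φ x := by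
    intro i j
    refine CS.integrable (CS.mul_left (CS.add ?_ ?_) (rho_smooth hφ))
    · exact ((hh.dd _).dd _).mul_left (dd_smooth (dd_smooth hh.smooth _) _)
    · exact (hh.dd _).mul_right ((dd_smooth (dd_smooth hφ _) _).mul (dd_smooth hh.smooth _))
  have e2 : ∫ x, (LL φ h x) ^ 2 * rho φ x = ∫ x, ∑ i, ∑ j,
      (dd (eb j) (dd (eb i) h) x * dd (eb i) (dd (eb j) h) x +
          dd (eb i) (dd (eb j) φ) x * dd (eb i) h x * dd (eb j) h x) * rho φ x := by
    simp_rw [e]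
    rw [integral_finsetSum, integral_finsetSum]
    · refine Finset.sum_congr rfl fun i _ => ?_
      rw [integral_finsetSum, integral_finsetSum]
      · refine Finset.sum_congr rfl fun j _ => ?_
        exact ad_ad hφ (hh.dd _) (hh.dd _) _ _
      · intro j _; exact i2 i j
      · intro j _
        exact (((ad_CS hφ (hh.dd _) _).mul_left (ad_CS hφ (hh.dd _) _).smooth).mul_left
          (rho_smooth hφ)).integrable
    · intro i _; exact integrable_finsetSum _ fun j _ => i2 i j
    · intro i _; exact integrable_finsetSum _ fun j _ =>
        (((ad_CS hφ (hh.dd _) _).mul_left (ad_CS hφ (hh.dd _) _).smooth).mul_left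
          (rho_smooth hφ)).integrable
  have i3 : ∀ {u : Euc n → ℝ}, CS u → Integrable fun x => ‖gradient u x‖ ^ 2 * rho φ x := by
    intro u hu
    simp_rw [grad_sq, sq]
    exact CS.integrable (CS.mul_left (CS.sum _ fun i => (hu.dd _).mul_left (hu.dd _).smooth)
      (rho_smooth hφ))
  rw [e2, ← integral_finsetSum _ (fun i _ => i3 (hh.dd _)), ← integral_const_mul,
    ← integral_add (integrable_finsetSum _ fun i _ => i3 (hh.dd _)) ((i3 hh).const_mul m)]
  refine integral_mono ((integrable_finsetSum _ fun i _ => i3 (hh.dd _)).add ((i3 hh).const_mul m))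
    (integrable_finsetSum _ fun i _ => integrable_finsetSum _ fun j _ => i2 i j) fun x => ?_
  simp only
  rw [← Finset.sum_mul, ← mul_assoc, ← add_mul]
  simp_rw [← Finset.sum_mul]
  refine mul_le_mul_of_nonneg_right ?_ (rho_pos φ x).le
  simp_rw [Finset.sum_add_distrib]
  refine add_le_add (le_of_eq ?_) ?_
  · refine Finset.sum_congr rfl fun i _ => ?_
    rw [grad_sq]
    refine Finset.sum_congr rfl fun j _ => ?_
    rw [dd_comm hh.smooth (eb i) (eb j), sq]
  · refine (hp.lower x (gradient h x)).trans (le_of_eq ?_)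
    have hg : gradient h x = ∑ i, dd (eb i) h x • eb i := by
      conv_lhs => rw [← sum_eb (gradient h x)]
      refine Finset.sum_congr rfl fun i _ => ?_
      rw [dd, ← grad_inner, eb, EuclideanSpace.inner_single_right]
      simp
    rw [hg]
    simp only [map_sum, map_smul, _root_.sum_apply, _root_.smul_apply,
      smul_eq_mul]
    rw [Finset.sum_comm]
    refine Finset.sum_congr rfl fun i _ => ?_
    rw [Finset.mul_sum]
    refine Finset.sum_congr rfl fun j _ => ?_
    rw [dd_dd hφ]; ring

end PartA

open MeasureTheory Real
open scoped ENNReal RealInnerProductSpace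

noncomputable section PartA2
open scoped ContDiff Convolution Topology
open Filter

variable {n : ℕ}

lemma pot_growth {φ : Euc n → ℝ} {m : ℝ} (hp : Pot φ m) (x : Euc n) :
    φ 0 + fderiv ℝ φ 0 x + m / 2 * ‖x‖ ^ 2 ≤ φ x := by
  have hs := hp.smooth
  set g : ℝ → ℝ := fun s => φ (s • x) - m / 2 * ‖x‖ ^ 2 * s ^ 2 with hg
  set g1 : ℝ → ℝ := fun s => dd x φ (s • x) - m * ‖x‖ ^ 2 * s with hg1
  have hl : ∀ s : ℝ, HasDerivAt (fun s : ℝ => s • x) x s := fun s => by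
    simpa using (hasDerivAt_id s).smul_const x
  have key : ∀ {F : Euc n → ℝ}, ContDiff ℝ ∞ F → ∀ s : ℝ,
      HasDerivAt (fun s : ℝ => F (s • x)) (dd x F (s • x)) s := by
    intro F hF s
    exact (diffAt hF (s • x)).hasFDerivAt.comp_hasDerivAt s (hl s)
  have d1 : ∀ s, HasDerivAt g (g1 s) s := by
    intro s
    have := (key hs s).sub (((hasDerivAt_id s).pow 2).const_mul (m / 2 * ‖x‖ ^ 2))
    convert! this using 1
    simp [hg1]; ring
  have d2 : ∀ s, HasDerivAt g1 (dd x (dd x φ) (s • x) - m * ‖x‖ ^ 2) s := by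
    intro s
    have := (key (dd_smooth hs x) s).sub ((hasDerivAt_id s).const_mul (m * ‖x‖ ^ 2))
    convert! this using 1
    simp
  have mono : Monotone g1 := by
    refine monotone_of_deriv_nonneg (fun s => (d2 s).differentiableAt) fun s => ?_
    rw [(d2 s).deriv, dd_dd hs]
    linarith [hp.lower (s • x) x]
  obtain ⟨c, hc, hc'⟩ := exists_hasDerivAt_eq_slope g g1 (zero_lt_one)
    (fun s _ => (d1 s).continuousAt.continuousWithinAt) (fun s _ => d1 s)
  have := mono hc.1.le
  rw [hc'] at this
  simp [hg, hg1, dd] at this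
  linarith

lemma gauss_int {b : ℝ} (hb : 0 < b) : Integrable (fun x : Euc n => Real.exp (-b * ‖x‖ ^ 2)) := by
  have := (GaussianFourier.integrable_cexp_neg_mul_sq_norm_add (b := (b:ℂ)) (V := Euc n)
    (by simpa using hb) 0 0).norm
  refine this.congr (Filter.Eventually.of_forall fun x => ?_)
  simp only [zero_mul, add_zero, Complex.norm_exp]
  congr 1
  rw [← Complex.ofReal_neg, ← Complex.ofReal_pow, ← Complex.ofReal_mul, Complex.ofReal_re]

lemma pot_exp_int {φ : Euc n → ℝ} {m : ℝ} (hp : Pot φ m) (a : ℝ) :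
    Integrable (fun x => Real.exp (a * ‖x‖) * rho φ x) := by
  have hm := hp.m_pos
  set k := |a| + ‖fderiv ℝ φ 0‖ with hk
  have hk0 : 0 ≤ k := by positivity
  refine Integrable.mono' ((gauss_int (n := n) (b := m / 4) (by linarith)).const_mul
    (Real.exp (k ^ 2 / m - φ 0))) ?_ (Filter.Eventually.of_forall fun x => ?_)
  · have := (rho_smooth hp.smooth).continuous
    exact (by fun_prop : Continuous _).aestronglyMeasurable
  · rw [Real.norm_eq_abs, abs_of_pos (mul_pos (Real.exp_pos _) (rho_pos _ _)), rho,
      ← Real.exp_add, ← Real.exp_add]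
    refine Real.exp_le_exp.2 ?_
    have h1 := pot_growth hp x
    have h2 : -(‖fderiv ℝ φ 0‖ * ‖x‖) ≤ fderiv ℝ φ 0 x := by
      have := (fderiv ℝ φ 0).le_opNorm x
      rw [Real.norm_eq_abs] at this
      linarith [neg_abs_le (fderiv ℝ φ 0 x)]
    have h3 : a * ‖x‖ ≤ |a| * ‖x‖ := mul_le_mul_of_nonneg_right (le_abs_self a) (norm_nonneg _)
    have h4 : k * ‖x‖ ≤ k ^ 2 / m + m / 4 * ‖x‖ ^ 2 := by
      have : 0 ≤ (k - m / 2 * ‖x‖) ^ 2 / m := by positivity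
      have e : (k - m / 2 * ‖x‖) ^ 2 / m = k ^ 2 / m - k * ‖x‖ + m / 4 * ‖x‖ ^ 2 := by
        field_simp; ring
      linarith
    have h5 : k * ‖x‖ = |a| * ‖x‖ + ‖fderiv ℝ φ 0‖ * ‖x‖ := by rw [hk]; ring
    nlinarith

lemma pot_exp_int' {φ : Euc n → ℝ} {m : ℝ} (hp : Pot φ m) (a : ℝ) :
    Integrable (fun x => Real.exp (a * ‖x‖)) (nu φ) :=
  (nu_integrable hp.smooth.continuous _).2 (pot_exp_int hp a)

/-- functions with exponential growth are integrable -/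
lemma pot_int_of_le {φ : Euc n → ℝ} {m : ℝ} (hp : Pot φ m) {f : Euc n → ℝ}
    (hf : AEStronglyMeasurable f (nu φ)) (C a : ℝ) (h : ∀ x, |f x| ≤ C * Real.exp (a * ‖x‖)) :
    Integrable f (nu φ) :=
  ((pot_exp_int' hp a).const_mul C).mono' hf (Filter.Eventually.of_forall h)

lemma nu_ac {φ : Euc n → ℝ} : nu φ ≪ volume := withDensity_absolutelyContinuous _ _

lemma ac_nu {φ : Euc n → ℝ} (h : Continuous φ) : volume ≪ nu φ := by
  refine withDensity_absolutelyContinuous' (by fun_prop) (Filter.Eventually.of_forall fun x => ?_)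
  simp [Real.exp_pos]

/-- mollification -/
def mo (η w : Euc n → ℝ) : Euc n → ℝ := fun x => ∫ y, w y * η (x - y)

lemma mo_eq (η w : Euc n → ℝ) : mo η w = w ⋆[ContinuousLinearMap.mul ℝ ℝ, volume] η := rfl

lemma mo_smooth {η w : Euc n → ℝ} (hη : CS η) (hw : LocallyIntegrable w) :
    ContDiff ℝ ∞ (mo η w) := by
  rw [mo_eq]
  exact hη.cpt.contDiff_convolution_right _ hw hη.smooth

lemma dd_mo {η w : Euc n → ℝ} (hη : CS η) (hw : LocallyIntegrable w) (v : Euc n) :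
    dd v (mo η w) = mo (dd v η) w := by
  ext x
  rw [mo_eq, dd, (hη.cpt.hasFDerivAt_convolution_right (ContinuousLinearMap.mul ℝ ℝ) hw
    (hη.smooth.of_le (by simp)) x).fderiv,
    convolution_precompR_apply _ hw (hη.cpt.fderiv ℝ) (hη.smooth.continuous_fderiv (by simp))]
  rfl

lemma mo_int {η w : Euc n → ℝ} (hη : CS η) (hw : LocallyIntegrable w) (x : Euc n) :
    Integrable fun y => w y * η (x - y) :=
  hη.cpt.convolutionExists_right (ContinuousLinearMap.mul ℝ ℝ) hw hη.smooth.continuous x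

/-- mollifier -/
structure Mol (η : Euc n → ℝ) (ε : ℝ) : Prop where
  cs : CS η
  nonneg : ∀ x, 0 ≤ η x
  int : ∫ x, η x = 1
  supp : ∀ x, ε ≤ ‖x‖ → η x = 0

lemma bump_mol (b : ContDiffBump (0 : Euc n)) : Mol (b.normed volume) b.rOut where
  cs := ⟨b.contDiff_normed, b.hasCompactSupport_normed⟩
  nonneg := b.nonneg_normed
  int := b.integral_normed
  supp := by
    intro x hx
    have : x ∉ Function.support (b.normed volume) := by
      rw [b.support_normed_eq]; simpa using hx
    simpa using this

/-- concrete mollifier -/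
def mbump (n : ℕ) (ε : ℝ) (h : 0 < ε) : ContDiffBump (0 : Euc n) := ⟨ε / 2, ε, by linarith, by linarith⟩

lemma Mol.int_left {η : Euc n → ℝ} {ε : ℝ} (h : Mol η ε) (x : Euc n) : ∫ y, η (x - y) = 1 := by
  rw [integral_sub_left_eq_self (fun y => η y)]; exact h.int

lemma Mol.int_right {η : Euc n → ℝ} {ε : ℝ} (h : Mol η ε) (y : Euc n) : ∫ x, η (x - y) = 1 := by
  rw [integral_sub_right_eq_self (fun y => η y)]; exact h.int

end PartA2

open MeasureTheory Real
open scoped ENNReal RealInnerProductSpace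

noncomputable section PartC
open scoped ContDiff Convolution Topology
open Filter

variable {n : ℕ}

lemma opt_lemma {A B c : ℝ} (hc : 0 ≤ c) (hA : 0 ≤ A) (hB : 0 ≤ B)
    (h : ∀ s : ℝ, 0 < s → 2 * c * s ≤ s ^ 2 * A + B) : c ^ 2 ≤ A * B := by
  have : discrim A (-2 * c) B ≤ 0 := by
    refine discrim_le_zero fun s => ?_
    rcases le_or_gt s 0 with hs | hs
    · nlinarith [mul_nonneg hc (neg_nonneg.2 hs), mul_nonneg hA (sq_nonneg s)]
    · nlinarith [h s hs]
  rw [discrim] at this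
  nlinarith

/-- Cauchy-Schwarz with pointwise domination -/
lemma cs_dom {α : Type*} [MeasurableSpace α] {μ : Measure α} {F a b : α → ℝ}
    (hF : AEStronglyMeasurable F μ) (ha : Integrable a μ) (hb : Integrable b μ)
    (ha0 : ∀ᵐ x ∂μ, 0 ≤ a x) (hb0 : ∀ᵐ x ∂μ, 0 ≤ b x) (h : ∀ᵐ x ∂μ, F x ^ 2 ≤ a x * b x) :
    Integrable F μ ∧ (∫ x, F x ∂μ) ^ 2 ≤ (∫ x, a x ∂μ) * ∫ x, b x ∂μ := by
  have key : ∀ s : ℝ, 0 < s → ∀ᵐ x ∂μ, 2 * s * |F x| ≤ s ^ 2 * a x + b x := by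
    intro s hs
    filter_upwards [ha0, hb0, h] with x h1 h2 h3
    refine abs_le_of_sq_le_sq' ?_ (by positivity) |>.2
    have : (2 * s * |F x|) ^ 2 = 4 * s ^ 2 * F x ^ 2 := by rw [mul_pow, sq_abs]; ring
    rw [this]
    nlinarith [sq_nonneg (s ^ 2 * a x - b x), mul_le_mul_of_nonneg_left h3 (by positivity : 0 ≤ 4 * s ^ 2)]
  have hFi : Integrable F μ := by
    refine Integrable.mono' (ha.add hb) hF ?_
    filter_upwards [key 1 one_pos] with x hx
    rw [Real.norm_eq_abs, Pi.add_apply]; nlinarith [abs_nonneg (F x)]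
  refine ⟨hFi, ?_⟩
  have h1 : (∫ x, F x ∂μ) ^ 2 ≤ (∫ x, |F x| ∂μ) ^ 2 := by
    rw [← sq_abs]
    exact pow_le_pow_left₀ (abs_nonneg _) (abs_integral_le_integral_abs) 2
  refine h1.trans (opt_lemma (integral_nonneg fun x => abs_nonneg _) (integral_nonneg_of_ae ha0)
    (integral_nonneg_of_ae hb0) fun s hs => ?_)
  rw [← integral_const_mul (s ^ 2), ← integral_add (ha.const_mul _) hb,
    show 2 * (∫ x, |F x| ∂μ) * s = ∫ x, 2 * s * |F x| ∂μ by rw [integral_const_mul]; ring]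
  exact integral_mono_ae (hFi.abs.const_mul _) ((ha.const_mul _).add hb) (key s hs)

lemma li_mul {f c : Euc n → ℝ} (hf : LocallyIntegrable f) (hc : Continuous c) :
    LocallyIntegrable fun x => f x * c x := by
  rw [locallyIntegrable_iff] at hf ⊢
  intro k hk
  exact (hf k hk).mul_continuousOn hc.continuousOn hk

lemma dd_refl {η : Euc n → ℝ} (hη : ContDiff ℝ ∞ η) (x v y : Euc n) :
    dd v (fun y => η (x - y)) y = - dd v η (x - y) := by
  have h1 : HasFDerivAt (fun y : Euc n => x - y) (-(ContinuousLinearMap.id ℝ (Euc n))) y :=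
    (hasFDerivAt_id y).const_sub x
  have h2 := (diffAt hη (x - y)).hasFDerivAt.comp y h1
  have h3 : fderiv ℝ (fun y => η (x - y)) y = _ := h2.fderiv
  rw [dd, h3]
  simp [dd]

lemma refl_CS {η : Euc n → ℝ} (hη : CS η) (x : Euc n) : CS (fun y => η (x - y)) :=
  ⟨hη.smooth.comp (contDiff_const.sub contDiff_id),
    hη.cpt.comp_homeomorph (Homeomorph.subLeft x)⟩

lemma moll_pde {φ g η : Euc n → ℝ} (hφ : ContDiff ℝ ∞ φ) (hη : CS η)
    (hw : LocallyIntegrable fun x => g x * rho φ x)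
    (hLL : ∀ h, CS h → ∫ y, g y * LL φ h y * rho φ y = 0) (x : Euc n) :
    ∑ i, dd (eb i) (fun x => dd (eb i) (mo η (fun x => g x * rho φ x)) x +
      mo η (fun x => g x * rho φ x * dd (eb i) φ x) x) x = 0 := by
  have hw2 : ∀ i, LocallyIntegrable fun x => g x * rho φ x * dd (eb i) φ x := fun i =>
    li_mul hw (dd_smooth hφ _).continuous
  have h0 := hLL _ (refl_CS hη x)
  have e : ∀ y, g y * LL φ (fun y => η (x - y)) y * rho φ y = ∑ i,
      (g y * rho φ y * dd (eb i) (dd (eb i) η) (x - y) +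
        g y * rho φ y * dd (eb i) φ y * dd (eb i) η (x - y)) := by
    intro y
    rw [LL, mul_right_comm, Finset.mul_sum]
    refine Finset.sum_congr rfl fun i _ => ?_
    have e1 : dd (eb i) (fun y => η (x - y)) = fun y => - dd (eb i) η (x - y) := by
      ext y; exact dd_refl hη.smooth x _ y
    rw [e1, dd_neg, dd_refl (dd_smooth hη.smooth _)]
    ring
  simp_rw [e] at h0
  rw [integral_finsetSum] at h0
  · rw [← h0]
    refine Finset.sum_congr rfl fun i _ => ?_
    rw [integral_add (mo_int ((hη.dd _).dd _) hw x) (mo_int (hη.dd _) (hw2 i) x),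
      dd_add (dd_smooth (mo_smooth hη hw) _) (mo_smooth hη (hw2 i)), dd_mo hη hw,
      dd_mo (hη.dd _) hw, dd_mo hη (hw2 i)]
    rfl
  · intro i _
    exact (mo_int ((hη.dd _).dd _) hw x).add (mo_int (hη.dd _) (hw2 i) x)

lemma caccio {φ W χ : Euc n → ℝ} {b : Fin n → Euc n → ℝ} (hφ : ContDiff ℝ ∞ φ)
    (hW : ContDiff ℝ ∞ W) (hb : ∀ i, ContDiff ℝ ∞ (b i)) (hχ : CS χ)
    (hpde : ∀ x, ∑ i, dd (eb i) (fun x => dd (eb i) W x + b i x) x = 0) :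
    ∑ i, ∫ x, χ x ^ 2 * dd (eb i) (fun x => W x * Real.exp (φ x)) x ^ 2 * rho φ x ≤
      ∑ i, ∫ x, (4 * (χ x ^ 2 * ((b i x - dd (eb i) φ x * W x) ^ 2 * Real.exp (φ x))) +
        10 * (dd (eb i) χ x ^ 2 * (W x ^ 2 * Real.exp (φ x)))) := by
  have hE : ContDiff ℝ ∞ fun x => Real.exp (φ x) := Real.contDiff_exp.comp hφ
  set G : Euc n → ℝ := fun x => W x * Real.exp (φ x) with hG
  have hGs : ContDiff ℝ ∞ G := hW.mul hE
  have hEr : ∀ x, rho φ x * Real.exp (φ x) = 1 := by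
    intro x; rw [rho, ← Real.exp_add]; simp
  have dE : ∀ v x, dd v (fun x => Real.exp (φ x)) x = dd v φ x * Real.exp (φ x) := by
    intro v x
    rw [dd, fderiv_exp (diffAt hφ x)]; simp [dd]; ring
  have dG : ∀ v x, rho φ x * dd v G x = dd v W x + W x * dd v φ x := by
    intro v x
    rw [hG, dd_mul hW hE, dE]
    linear_combination (dd v W x + W x * dd v φ x) * hEr x
  have hζ : CS fun x => χ x * χ x * G x := (hχ.mul_left hχ.smooth).mul_left hGs
  have hF : ∀ i, ContDiff ℝ ∞ fun x => dd (eb i) W x + b i x := fun i =>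
    (dd_smooth hW _).add (hb i)
  have z : ∑ i, ∫ x, (dd (eb i) W x + b i x) * dd (eb i) (fun x => χ x * χ x * G x) x = 0 := by
    have : ∀ i, ∫ x, (dd (eb i) W x + b i x) * dd (eb i) (fun x => χ x * χ x * G x) x =
        - ∫ x, dd (eb i) (fun x => dd (eb i) W x + b i x) x * (χ x * χ x * G x) :=
      fun i => ibp (hF i) hζ _
    simp_rw [this]
    rw [Finset.sum_neg_distrib, ← integral_finsetSum]
    · simp_rw [← Finset.sum_mul, hpde]; simp
    · intro i _; exact (hζ.mul_right (dd_smooth (hF i) _)).integrable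
  have i1 : ∀ i, Integrable fun x =>
      (dd (eb i) W x + b i x) * dd (eb i) (fun x => χ x * χ x * G x) x := fun i =>
    ((hζ.dd _).mul_right (hF i)).integrable
  have hR : ∀ i, ContDiff ℝ ∞ fun x => (b i x - dd (eb i) φ x * W x) ^ 2 * Real.exp (φ x) :=
    fun i => (((hb i).sub ((dd_smooth hφ _).mul hW)).pow 2).mul hE
  have i2 : ∀ i, Integrable fun x =>
      (4 * (χ x ^ 2 * ((b i x - dd (eb i) φ x * W x) ^ 2 * Real.exp (φ x))) +
        10 * (dd (eb i) χ x ^ 2 * (W x ^ 2 * Real.exp (φ x)))) := by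
    intro i
    refine Integrable.add (Integrable.const_mul ?_ _) (Integrable.const_mul ?_ _)
    · simp_rw [sq (χ _)]
      exact ((hχ.mul_left hχ.smooth).mul_left (hR i)).integrable
    · simp_rw [sq (dd _ χ _)]
      exact (((hχ.dd _).mul_left (dd_smooth hχ.smooth _)).mul_left ((hW.pow 2).mul hE)).integrable
  have i3 : ∀ i, Integrable fun x => χ x ^ 2 * dd (eb i) G x ^ 2 * rho φ x := by
    intro i
    simp_rw [sq (χ _)]
    exact (((hχ.mul_left hχ.smooth).mul_left ((dd_smooth hGs _).pow 2)).mul_left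
      (rho_smooth hφ)).integrable
  have main : ∀ i, ∫ x, χ x ^ 2 * dd (eb i) G x ^ 2 * rho φ x ≤
      (∫ x, (4 * (χ x ^ 2 * ((b i x - dd (eb i) φ x * W x) ^ 2 * Real.exp (φ x))) +
        10 * (dd (eb i) χ x ^ 2 * (W x ^ 2 * Real.exp (φ x))))) +
      2 * ∫ x, (dd (eb i) W x + b i x) * dd (eb i) (fun x => χ x * χ x * G x) x := by
    intro i
    rw [← integral_const_mul, ← integral_add (i2 i) ((i1 i).const_mul 2)]
    refine integral_mono (i3 i) ((i2 i).add ((i1 i).const_mul 2)) fun x => ?_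
    simp only
    rw [dd_mul (hχ.smooth.mul hχ.smooth) hGs, dd_mul hχ.smooth hχ.smooth]
    have e1 : dd (eb i) W x + b i x = rho φ x * dd (eb i) G x + (b i x - dd (eb i) φ x * W x) := by
      rw [dG]; ring
    have e2 : W x = rho φ x * G x := by rw [hG]; linear_combination - W x * hEr x
    rw [e1]
    set R := b i x - dd (eb i) φ x * W x
    have e3 : W x ^ 2 * Real.exp (φ x) = rho φ x * G x ^ 2 := by
      rw [e2]; linear_combination rho φ x * G x ^ 2 * hEr x
    rw [e3]
    set r := rho φ x
    have hr : 0 < r := rho_pos _ _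
    have e4 : Real.exp (φ x) = 1 / r := by rw [eq_div_iff hr.ne']; linarith [hEr x]
    rw [e4]
    set p := χ x
    set q := dd (eb i) χ x
    set D := dd (eb i) G x
    set γ := G x
    have e5 : 4 * (p ^ 2 * (R ^ 2 * (1 / r))) + 10 * (q ^ 2 * (r * γ ^ 2)) +
        2 * ((r * D + R) * ((q * p + p * q) * γ + p * p * D)) - p ^ 2 * D ^ 2 * r =
        r * (1/2 * (p * D + 2 * p * R / r) ^ 2 + 1/2 * (p * D + 4 * q * γ) ^ 2
          + 2 * (p * R / r + q * γ) ^ 2 ) := by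
      field_simp; ring
    have : 0 ≤ r * (1/2 * (p * D + 2 * p * R / r) ^ 2 + 1/2 * (p * D + 4 * q * γ) ^ 2
          + 2 * (p * R / r + q * γ) ^ 2 ) := by positivity
    linarith
  calc _ ≤ ∑ i, _ := Finset.sum_le_sum fun i _ => main i
    _ = _ := by rw [Finset.sum_add_distrib, ← Finset.mul_sum, z]; ring

end PartC

open MeasureTheory Real
open scoped ENNReal RealInnerProductSpace

noncomputable section PartC2
open scoped ContDiff Convolution Topology
open Filter

variable {n : ℕ}

lemma moll_pw {φ g η q : Euc n → ℝ} {ε K : ℝ} (hφ : ContDiff ℝ ∞ φ) (hη : Mol η ε)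
    (hw : LocallyIntegrable fun x => g x * rho φ x)
    (hg2 : LocallyIntegrable fun x => g x ^ 2 * rho φ x) (hqc : Continuous q) (x : Euc n)
    (hr : ∀ y, ‖x - y‖ < ε → rho φ y ≤ 2 * rho φ x) (hq : ∀ y, ‖x - y‖ < ε → |q y| ≤ K) :
    (∫ y, g y * rho φ y * q y * η (x - y)) ^ 2 ≤
      mo η (fun x => g x ^ 2 * rho φ x) x * (2 * K ^ 2 * rho φ x) := by
  have hb : Integrable fun y => 2 * K ^ 2 * rho φ x * η (x - y) :=
    (refl_CS hη.cs x).integrable.const_mul _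
  have := (cs_dom (μ := volume) (F := fun y => g y * rho φ y * q y * η (x - y))
    (a := fun y => g y ^ 2 * rho φ y * η (x - y)) (b := fun y => 2 * K ^ 2 * rho φ x * η (x - y))
    (mo_int hη.cs (li_mul hw hqc) x).aestronglyMeasurable
    (mo_int hη.cs hg2 x) hb
    (Eventually.of_forall fun y => mul_nonneg (mul_nonneg (sq_nonneg _) (rho_pos _ _).le) (hη.nonneg _))
    (Eventually.of_forall fun y => mul_nonneg (mul_nonneg (by positivity) (rho_pos _ _).le) (hη.nonneg _))
    (Eventually.of_forall fun y => ?_)).2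
  · rw [integral_const_mul, hη.int_left, mul_one] at this
    exact this
  · rcases le_or_gt ε ‖x - y‖ with h | h
    · simp [hη.supp _ h]
    · have h1 := hr y h
      have h2 : q y ^ 2 ≤ K ^ 2 := by
        rw [← sq_abs (q y)]; exact pow_le_pow_left₀ (abs_nonneg _) (hq y h) 2
      have h3 : rho φ y * q y ^ 2 ≤ 2 * rho φ x * K ^ 2 :=
        mul_le_mul h1 h2 (sq_nonneg _) (mul_pos two_pos (rho_pos _ _)).le
      have h4 : 0 ≤ g y ^ 2 * rho φ y * η (x - y) ^ 2 :=
        mul_nonneg (mul_nonneg (sq_nonneg _) (rho_pos _ _).le) (sq_nonneg _)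
      nlinarith [mul_le_mul_of_nonneg_left h3 h4]

lemma unif_ball {V : Type*} [NormedAddCommGroup V] {F : Euc n → V} (hF : Continuous F) (r : ℝ)
    {om : ℝ} (ho : 0 < om) : ∃ ε0 > 0, ∀ x : Euc n, ‖x‖ ≤ r → ∀ y, ‖x - y‖ < ε0 → ‖F y - F x‖ ≤ om := by
  have hc : IsCompact (Metric.closedBall (0 : Euc n) (r + 1)) := isCompact_closedBall _ _
  have := hc.uniformContinuousOn_of_continuous hF.continuousOn
  rw [Metric.uniformContinuousOn_iff] at this
  obtain ⟨δ, hδ, h⟩ := this om ho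
  refine ⟨min δ 1, by positivity, fun x hx y hy => ?_⟩
  have h1 : ‖x - y‖ < 1 := hy.trans_le (min_le_right _ _)
  have h2 : ‖y‖ ≤ r + 1 := by
    have : ‖y‖ ≤ ‖x‖ + ‖x - y‖ := by
      have := norm_sub_le x (x - y); simpa using this
    linarith
  have := h y (by simpa using h2) x (by simp; linarith) (by
    rw [dist_eq_norm, norm_sub_rev]; exact hy.trans_le (min_le_left _ _))
  rw [← dist_eq_norm]; exact this.le

lemma norm_eb (i : Fin n) : ‖eb i‖ = 1 := by simp [eb]

lemma cutoff (n : ℕ) : ∃ K : ℝ, 0 ≤ K ∧ ∀ R : ℝ, 1 ≤ R → ∃ χ : Euc n → ℝ, CS χ ∧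
    (∀ x, ‖x‖ ≤ R → χ x = 1) ∧ (∀ x, 0 ≤ χ x) ∧ (∀ x, χ x ≤ 1) ∧
    (∀ v x, |dd v χ x| ≤ K / R * ‖v‖) ∧ (∀ x, 2 * R < ‖x‖ → χ x = 0 ∧ ∀ v, dd v χ x = 0) := by
  let b : ContDiffBump (0 : Euc n) := ⟨1, 2, by norm_num, by norm_num⟩
  have hbs : ContDiff ℝ ∞ b := b.contDiff
  have hbc : HasCompactSupport b := b.hasCompactSupport
  obtain ⟨K, hK⟩ := (hbc.fderiv ℝ).exists_bound_of_continuous (hbs.continuous_fderiv (by simp))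
  have hK0 : 0 ≤ K := (norm_nonneg _).trans (hK 0)
  refine ⟨K, hK0, fun R hR => ?_⟩
  have hR0 : 0 < R := by linarith
  set χ : Euc n → ℝ := fun x => b (R⁻¹ • x) with hχ
  have hz : ∀ x, 2 * R < ‖x‖ → χ x = 0 := by
    intro x hx
    have : R⁻¹ • x ∉ Function.support b := by
      rw [b.support_eq]
      simp only [Metric.mem_ball, dist_zero_right, norm_smul, norm_inv, Real.norm_eq_abs,
        abs_of_pos hR0, not_lt]
      show (2:ℝ) ≤ _
      rw [le_inv_mul_iff₀ hR0]; linarith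
    simpa using this
  have hsm : ContDiff ℝ ∞ χ := hbs.comp (contDiff_const_smul R⁻¹)
  refine ⟨χ, ⟨hsm, ?_⟩, ?_, fun x => b.nonneg, fun x => b.le_one, ?_, ?_⟩
  · refine HasCompactSupport.intro (isCompact_closedBall (0 : Euc n) (2 * R)) fun x hx => hz x ?_
    simpa using hx
  · intro x hx
    refine b.one_of_mem_closedBall ?_
    simp only [Metric.mem_closedBall, dist_zero_right, norm_smul, norm_inv, Real.norm_eq_abs,
        abs_of_pos hR0]
    show _ ≤ (1:ℝ)
    rw [inv_mul_le_iff₀ hR0]; linarith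
  · intro v x
    have h1 : HasFDerivAt (fun x : Euc n => R⁻¹ • x) (R⁻¹ • ContinuousLinearMap.id ℝ (Euc n)) x :=
      (hasFDerivAt_id x).const_smul R⁻¹
    have h2 : fderiv ℝ χ x = _ := ((diffAt hbs (R⁻¹ • x)).hasFDerivAt.comp x h1).fderiv
    rw [dd, h2]
    have h3 := (fderiv ℝ b (R⁻¹ • x)).le_opNorm (R⁻¹ • v)
    rw [norm_smul, norm_inv, Real.norm_eq_abs, Real.norm_eq_abs, abs_of_pos hR0] at h3
    have h4 : ‖fderiv ℝ b (R⁻¹ • x)‖ * (R⁻¹ * ‖v‖) ≤ K * (R⁻¹ * ‖v‖) :=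
      mul_le_mul_of_nonneg_right (hK _) (by positivity)
    refine (le_of_eq ?_).trans ((h3.trans h4).trans (le_of_eq ?_))
    · simp
    · field_simp
  · intro x hx
    refine ⟨hz x hx, fun v => ?_⟩
    have : χ =ᶠ[𝓝 x] fun _ => 0 := by
      filter_upwards [(isOpen_lt continuous_const continuous_norm).mem_nhds hx] with y hy
      exact hz y hy
    rw [dd, this.fderiv_eq]; simp

lemma mo_integral {η q : Euc n → ℝ} {ε : ℝ} (hη : Mol η ε) (hq : Integrable q) :
    Integrable (mo η q) ∧ ∫ x, mo η q x = ∫ x, q x := by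
  rw [mo_eq]
  refine ⟨hq.integrable_convolution _ hη.cs.integrable, ?_⟩
  rw [integral_convolution _ hq hη.cs.integrable, hη.int]; simp

lemma small_grad {φ g : Euc n → ℝ} (hφ : ContDiff ℝ ∞ φ)
    (hw : Integrable fun x => g x * rho φ x) (hg2 : Integrable fun x => g x ^ 2 * rho φ x)
    (hLL : ∀ h, CS h → ∫ y, g y * LL φ h y * rho φ y = 0) {κ : ℝ} (hκ : 0 < κ) (R0 : ℝ) :
    ∃ χ : Euc n → ℝ, CS χ ∧ (∀ x, ‖x‖ ≤ R0 → χ x = 1) ∧ ∃ ε0 > 0, ∀ ε ≤ ε0, ∀ η, Mol η ε →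
      ∀ i, ∫ x, χ x ^ 2 * dd (eb i) (fun x => mo η (fun x => g x * rho φ x) x * Real.exp (φ x)) x ^ 2
        * rho φ x ≤ κ * ∫ x, g x ^ 2 * rho φ x := by
  obtain ⟨K, hK0, hK⟩ := cutoff n
  set κ' := κ / (n + 1) with hκ'
  have hκ'0 : 0 < κ' := by positivity
  obtain ⟨R, hR1, hRR, hRK⟩ : ∃ R : ℝ, 1 ≤ R ∧ R0 ≤ R ∧ 20 * (K / R) ^ 2 ≤ κ' / 2 := by
    have : Tendsto (fun R : ℝ => 20 * (K / R) ^ 2) atTop (𝓝 (20 * 0 ^ 2)) :=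
      ((tendsto_const_nhds.div_atTop tendsto_id).pow 2).const_mul 20
    have h2 := this.eventually (eventually_le_nhds (b := κ' / 2) (by norm_num; exact hκ'0))
    obtain ⟨R, h⟩ := (h2.and ((eventually_ge_atTop 1).and (eventually_ge_atTop R0))).exists
    exact ⟨R, h.2.1, h.2.2, h.1⟩
  obtain ⟨χ, hχ, hχ1, hχ0, hχle, hdχ, hχz⟩ := hK R hR1
  refine ⟨χ, hχ, fun x hx => hχ1 x (hx.trans hRR), ?_⟩
  set om := Real.sqrt (κ' / 16) with ho
  have ho2 : 8 * om ^ 2 = κ' / 2 := by rw [ho, Real.sq_sqrt (by positivity)]; ring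
  obtain ⟨ε1, hε1, h1⟩ := unif_ball hφ.continuous (2 * R) (om := Real.log 2) (Real.log_pos (by norm_num))
  obtain ⟨ε2, hε2, h2⟩ := unif_ball (hφ.continuous_fderiv (by simp)) (2 * R) (om := om)
    (Real.sqrt_pos.2 (by positivity))
  refine ⟨min ε1 ε2, by positivity, fun ε hε η hη => ?_⟩
  set W := mo η (fun x => g x * rho φ x) with hW
  have hWs : ContDiff ℝ ∞ W := mo_smooth hη.cs hw.locallyIntegrable
  have hwi : ∀ i, LocallyIntegrable fun x => g x * rho φ x * dd (eb i) φ x := fun i =>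
    li_mul hw.locallyIntegrable (dd_smooth hφ _).continuous
  have hC := caccio hφ hWs (b := fun i => mo η (fun x => g x * rho φ x * dd (eb i) φ x))
    (fun i => mo_smooth hη.cs (hwi i)) hχ
    (fun x => moll_pde hφ hη.cs hw.locallyIntegrable hLL x)
  have hN : 0 ≤ ∫ x, g x ^ 2 * rho φ x :=
    integral_nonneg fun x => mul_nonneg (sq_nonneg _) (rho_pos _ _).le
  have hmi := mo_integral hη hg2
  have hE : ContDiff ℝ ∞ fun x => Real.exp (φ x) := Real.contDiff_exp.comp hφ
  have bound : ∀ i, ∫ x, (4 * (χ x ^ 2 * ((mo η (fun x => g x * rho φ x * dd (eb i) φ x) x -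
      dd (eb i) φ x * W x) ^ 2 * Real.exp (φ x))) +
        10 * (dd (eb i) χ x ^ 2 * (W x ^ 2 * Real.exp (φ x)))) ≤
      κ' * ∫ x, g x ^ 2 * rho φ x := by
    intro i
    rw [← hmi.2, ← integral_const_mul]
    refine integral_mono ?_ (hmi.1.const_mul _) fun x => ?_
    · refine Integrable.add (Integrable.const_mul ?_ _) (Integrable.const_mul ?_ _)
      · simp_rw [sq (χ _)]
        exact ((hχ.mul_left hχ.smooth).mul_left ((((mo_smooth hη.cs (hwi i)).sub
          ((dd_smooth hφ _).mul hWs)).pow 2).mul hE)).integrable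
      · simp_rw [sq (dd _ χ _)]
        exact (((hχ.dd _).mul_left (dd_smooth hχ.smooth _)).mul_left ((hWs.pow 2).mul hE)).integrable
    · have hm0 : 0 ≤ mo η (fun x => g x ^ 2 * rho φ x) x :=
        integral_nonneg fun y => mul_nonneg (mul_nonneg (sq_nonneg _) (rho_pos _ _).le) (hη.nonneg _)
      simp only
      rcases lt_or_ge (2 * R) ‖x‖ with hx | hx
      · rw [(hχz x hx).1, (hχz x hx).2]
        simpa using mul_nonneg hκ'0.le hm0
      · have hr : ∀ y, ‖x - y‖ < ε → rho φ y ≤ 2 * rho φ x := by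
          intro y hy
          have := h1 x hx y (hy.trans_le (hε.trans (min_le_left _ _)))
          rw [Real.norm_eq_abs, abs_le] at this
          rw [rho, rho, ← Real.exp_log (show (0:ℝ) < 2 by norm_num), ← Real.exp_add]
          exact Real.exp_le_exp.2 (by linarith)
        have p1 := moll_pw (q := fun _ => 1) (K := 1) hφ hη hw.locallyIntegrable
          hg2.locallyIntegrable continuous_const x hr (by simp)
        have p2 := moll_pw (q := fun y => dd (eb i) φ y - dd (eb i) φ x) (K := om) hφ hη
          hw.locallyIntegrable
          hg2.locallyIntegrable ((dd_smooth hφ _).continuous.sub continuous_const) x hr (by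
            intro y hy
            have h3 := h2 x hx y (hy.trans_le (hε.trans (min_le_right _ _)))
            have h4 := (fderiv ℝ φ y - fderiv ℝ φ x).le_opNorm (eb i)
            rw [norm_eb, mul_one] at h4
            exact (h4.trans h3))
        have e1 : ∫ y, g y * rho φ y * 1 * η (x - y) = W x := by
          rw [hW, mo]; simp
        have e2 : ∫ y, g y * rho φ y * (dd (eb i) φ y - dd (eb i) φ x) * η (x - y) =
            mo η (fun x => g x * rho φ x * dd (eb i) φ x) x - dd (eb i) φ x * W x := by
          rw [hW, mo, mo, ← integral_const_mul, ← integral_sub (mo_int hη.cs (hwi i) x)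
            ((mo_int hη.cs hw.locallyIntegrable x).const_mul _)]
          congr 1; ext y; ring
        rw [e1] at p1
        rw [e2] at p2
        set S := mo η (fun x => g x * rho φ x * dd (eb i) φ x) x - dd (eb i) φ x * W x
        set N := mo η (fun x => g x ^ 2 * rho φ x) x
        have hEr : rho φ x * Real.exp (φ x) = 1 := by rw [rho, ← Real.exp_add]; simp
        have q1 : W x ^ 2 * Real.exp (φ x) ≤ 2 * N := by
          have := mul_le_mul_of_nonneg_right p1 (Real.exp_pos (φ x)).le
          have e : N * (2 * 1 ^ 2 * rho φ x) * Real.exp (φ x) = 2 * N := by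
            linear_combination 2 * N * hEr
          linarith
        have q2 : S ^ 2 * Real.exp (φ x) ≤ 2 * om ^ 2 * N := by
          have := mul_le_mul_of_nonneg_right p2 (Real.exp_pos (φ x)).le
          have e : N * (2 * om ^ 2 * rho φ x) * Real.exp (φ x) = 2 * om ^ 2 * N := by
            linear_combination 2 * om ^ 2 * N * hEr
          linarith
        have q3 : χ x ^ 2 ≤ 1 := by
          have := hχ0 x; have := hχle x; nlinarith
        have q4 : dd (eb i) χ x ^ 2 ≤ (K / R) ^ 2 := by
          have := hdχ (eb i) x
          rw [norm_eb, mul_one] at this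
          rw [← sq_abs]; exact pow_le_pow_left₀ (abs_nonneg _) this 2
        have q5 : χ x ^ 2 * (S ^ 2 * Real.exp (φ x)) ≤ 1 * (2 * om ^ 2 * N) :=
          mul_le_mul q3 q2 (by positivity) zero_le_one
        have q6 : dd (eb i) χ x ^ 2 * (W x ^ 2 * Real.exp (φ x)) ≤ (K / R) ^ 2 * (2 * N) :=
          mul_le_mul q4 q1 (by positivity) (by positivity)
        have q7 : κ' = 8 * om ^ 2 + κ' / 2 := by rw [ho2]; ring
        have q8 : 8 * om ^ 2 * N + 20 * (K / R) ^ 2 * N ≤ κ' * N := by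
          rw [← add_mul]; refine mul_le_mul_of_nonneg_right ?_ hm0; linarith
        linarith
  intro i
  have hnn : ∀ j, 0 ≤ ∫ x, χ x ^ 2 * dd (eb j) (fun x => W x * Real.exp (φ x)) x ^ 2 * rho φ x :=
    fun j => integral_nonneg fun x => mul_nonneg (by positivity) (rho_pos _ _).le
  refine (Finset.single_le_sum (fun j _ => hnn j) (Finset.mem_univ i)).trans (hC.trans
    ((Finset.sum_le_sum fun j _ => bound j).trans ?_))
  rw [Finset.sum_const, Finset.card_univ, Fintype.card_fin, nsmul_eq_mul, ← mul_assoc]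
  refine mul_le_mul_of_nonneg_right ?_ hN
  rw [hκ', mul_div_assoc', div_le_iff₀ (by positivity)]
  nlinarith

end PartC2

open MeasureTheory Real
open scoped ENNReal RealInnerProductSpace

noncomputable section PartC3
open scoped ContDiff Convolution Topology
open Filter

variable {n : ℕ}

lemma mo_test {η w v : Euc n → ℝ} {ε τ : ℝ} (hη : Mol η ε) (hw : Integrable w) (hv : CS v)
    (hτ : ∀ x y, ‖x - y‖ < ε → |v x - v y| ≤ τ) :
    |(∫ x, mo η w x * v x) - ∫ y, w y * v y| ≤ τ * ∫ y, |w y| := by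
  obtain ⟨K, hK⟩ := hη.cs.cpt.exists_bound_of_continuous hη.cs.smooth.continuous
  have hηc := hη.cs.smooth.continuous
  obtain ⟨Kv, hKv⟩ := hv.cpt.exists_bound_of_continuous hv.smooth.continuous
  have hI : Integrable (Function.uncurry fun x y => w y * η (x - y) * v x)
      ((volume : Measure (Euc n)).prod volume) := by
    have h1 : Integrable (fun z : Euc n × Euc n => v z.1 * w z.2)
      ((volume : Measure (Euc n)).prod volume) := hv.integrable.mul_prod hw
    have h2 := h1.bdd_mul (c := K) (f := fun z : Euc n × Euc n => η (z.1 - z.2))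
      (by exact (hηc.comp (continuous_fst.sub continuous_snd)).aestronglyMeasurable)
      (Eventually.of_forall fun z => hK _)
    refine h2.congr (Eventually.of_forall fun z => ?_)
    simp [Function.uncurry]; ring
  have e1 : ∫ x, mo η w x * v x = ∫ y, w y * ∫ x, η (x - y) * v x := by
    simp_rw [mo, ← integral_mul_const]
    rw [integral_integral_swap hI]
    congr 1; ext y
    rw [← integral_const_mul]
    congr 1; ext x; ring
  have hηi : ∀ y, Integrable fun x => η (x - y) := fun y => hη.cs.integrable.comp_sub_right y
  have hηv : ∀ y, Integrable fun x => η (x - y) * v x := fun y => by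
    have := hv.integrable.bdd_mul (c := K) (f := fun x => η (x - y))
      (hηc.comp (continuous_id.sub continuous_const)).aestronglyMeasurable
      (Eventually.of_forall fun z => hK _)
    exact this
  have e2 : ∀ y, |(∫ x, η (x - y) * v x) - v y| ≤ τ := by
    intro y
    have : (∫ x, η (x - y) * v x) - v y = ∫ x, η (x - y) * (v x - v y) := by
      simp_rw [mul_sub]
      rw [integral_sub (hηv y) ((hηi y).mul_const _), integral_mul_const, hη.int_right, one_mul]
    rw [this]
    calc |∫ x, η (x - y) * (v x - v y)| ≤ ∫ x, |η (x - y) * (v x - v y)| :=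
          abs_integral_le_integral_abs
      _ ≤ ∫ x, η (x - y) * τ := by
          refine integral_mono_of_nonneg (Eventually.of_forall fun x => abs_nonneg _)
            ((hηi y).mul_const _) (Eventually.of_forall fun x => ?_)
          simp only
          rw [abs_mul, abs_of_nonneg (hη.nonneg _)]
          rcases le_or_gt ε ‖x - y‖ with h | h
          · simp [hη.supp _ h]
          · exact mul_le_mul_of_nonneg_left (hτ x y h) (hη.nonneg _)
      _ = τ := by rw [integral_mul_const, hη.int_right, one_mul]
  have i1 : Integrable fun y => w y * ∫ x, η (x - y) * v x := by
    have := hI.integral_prod_right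
    refine this.congr (Eventually.of_forall fun y => ?_)
    simp only [Function.uncurry]
    rw [← integral_const_mul]
    congr 1; ext x; ring
  have i2 : Integrable fun y => w y * v y :=
    hw.mul_bdd (c := Kv) hv.smooth.continuous.aestronglyMeasurable (Eventually.of_forall hKv)
  rw [e1, ← integral_sub i1 i2, ← integral_const_mul]
  refine abs_integral_le_integral_abs.trans ?_
  refine integral_mono_of_nonneg (Eventually.of_forall fun x => abs_nonneg _)
    (hw.abs.const_mul _) (Eventually.of_forall fun y => ?_)
  simp only
  rw [← mul_sub, abs_mul, mul_comm]
  exact mul_le_mul_of_nonneg_right (e2 y) (abs_nonneg _)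

lemma weak_zero {φ g : Euc n → ℝ} (hφ : ContDiff ℝ ∞ φ)
    (hw : Integrable fun x => g x * rho φ x) (hg2 : Integrable fun x => g x ^ 2 * rho φ x)
    (hLL : ∀ h, CS h → ∫ y, g y * LL φ h y * rho φ y = 0) {u : Euc n → ℝ} (hu : CS u) (i : Fin n) :
    ∫ x, g x * dd (eb i) u x = 0 := by
  have hE : ContDiff ℝ ∞ fun x => Real.exp (φ x) := Real.contDiff_exp.comp hφ
  have hEr : ∀ x, rho φ x * Real.exp (φ x) = 1 := by
    intro x; rw [rho, ← Real.exp_add]; simp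
  set w : Euc n → ℝ := fun x => g x * rho φ x with hwd
  set v : Euc n → ℝ := fun x => dd (eb i) u x * Real.exp (φ x) with hv
  have hvc : CS v := (hu.dd _).mul_left hE
  have e0 : ∫ x, g x * dd (eb i) u x = ∫ x, w x * v x := by
    congr 1; ext x
    simp only [hwd, hv]
    linear_combination - g x * dd (eb i) u x * hEr x
  rw [e0]
  set N := ∫ x, g x ^ 2 * rho φ x with hN
  have hN0 : 0 ≤ N := integral_nonneg fun x => mul_nonneg (sq_nonneg _) (rho_pos _ _).le
  set U := ∫ x, u x ^ 2 * Real.exp (φ x) with hU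
  have hU0 : 0 ≤ U := integral_nonneg fun x => mul_nonneg (sq_nonneg _) (Real.exp_pos _).le
  set w1 := ∫ x, |w x| with hw1
  have hw10 : 0 ≤ w1 := integral_nonneg fun x => abs_nonneg _
  obtain ⟨R0, hR0⟩ : ∃ R0 : ℝ, ∀ x, R0 < ‖x‖ → u x = 0 := by
    obtain ⟨R0, h⟩ := (hu.cpt.isCompact).isBounded.subset_closedBall (0 : Euc n)
    refine ⟨R0, fun x hx => image_eq_zero_of_notMem_tsupport fun hx' => ?_⟩
    have := h hx'
    simp at this; linarith
  have key : ∀ δ > 0, |∫ x, w x * v x| ≤ δ * (w1 + 1) := by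
    intro δ hδ
    have huc := hvc.cpt.uniformContinuous_of_continuous hvc.smooth.continuous
    rw [Metric.uniformContinuous_iff] at huc
    obtain ⟨ε1, hε1, h1⟩ := huc δ hδ
    set κ := δ ^ 2 / (N * U + 1) with hκ
    have hκ0 : 0 < κ := by positivity
    obtain ⟨χ, hχ, hχ1, ε2, hε2, h2⟩ := small_grad hφ hw hg2 hLL hκ0 R0
    set ε := min ε1 ε2 with hε
    have hε0 : 0 < ε := by positivity
    have hη := bump_mol (mbump n ε hε0)
    set η := (mbump n ε hε0).normed volume
    have hη' : Mol η ε := hη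
    have t1 := mo_test (τ := δ) hη' hw hvc (fun x y hxy => by
      have := h1 (a := x) (b := y) (by rw [dist_eq_norm]; exact hxy.trans_le (min_le_left _ _))
      rw [Real.dist_eq] at this; exact this.le)
    have t2 := h2 ε (min_le_right _ _) η hη' i
    have hWs : ContDiff ℝ ∞ (mo η w) := mo_smooth hη'.cs hw.locallyIntegrable
    set G : Euc n → ℝ := fun x => mo η w x * Real.exp (φ x) with hG
    have hGs : ContDiff ℝ ∞ G := hWs.mul hE
    have e1 : ∫ x, mo η w x * v x = - ∫ x, dd (eb i) G x * u x := by
      rw [← ibp hGs hu]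
      congr 1; ext x
      simp only [hG, hv]; ring
    have t3 := (cs_dom (μ := volume) (F := fun x => dd (eb i) G x * u x)
      (a := fun x => χ x ^ 2 * dd (eb i) G x ^ 2 * rho φ x) (b := fun x => u x ^ 2 * Real.exp (φ x))
      (hu.mul_right (dd_smooth hGs _)).integrable.aestronglyMeasurable
      (by
        simp_rw [sq (χ _)]
        exact (((hχ.mul_left hχ.smooth).mul_left ((dd_smooth hGs _).pow 2)).mul_left
          (rho_smooth hφ)).integrable)
      (by
        simp_rw [sq (u _)]
        exact ((hu.mul_left hu.smooth).mul_left hE).integrable)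
      (Eventually.of_forall fun x => mul_nonneg (by positivity) (rho_pos _ _).le)
      (Eventually.of_forall fun x => by positivity)
      (Eventually.of_forall fun x => by
        rcases lt_or_ge R0 ‖x‖ with hx | hx
        · rw [hR0 x hx]; simp
        · rw [hχ1 x hx]
          refine le_of_eq ?_
          linear_combination - dd (eb i) G x ^ 2 * u x ^ 2 * hEr x)).2
    have t4 : (∫ x, dd (eb i) G x * u x) ^ 2 ≤ δ ^ 2 := by
      refine t3.trans ((mul_le_mul_of_nonneg_right t2 hU0).trans ?_)
      rw [hκ, div_mul_eq_mul_div, div_mul_eq_mul_div, div_le_iff₀ (by positivity)]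
      nlinarith [sq_nonneg δ]
    have t5 := abs_le_of_sq_le_sq t4 hδ.le
    rw [e1] at t1
    have t6 := abs_sub_abs_le_abs_sub (∫ y, w y * v y) (- ∫ x, dd (eb i) G x * u x)
    rw [abs_sub_comm, abs_neg] at t6
    have : |∫ x, dd (eb i) G x * u x| ≤ δ := t5
    linarith
  by_contra h
  have hp : 0 < |∫ x, w x * v x| := abs_pos.2 h
  have := key (|∫ x, w x * v x| / (2 * (w1 + 1))) (by positivity)
  have e : |∫ x, w x * v x| / (2 * (w1 + 1)) * (w1 + 1) = |∫ x, w x * v x| / 2 := by field_simp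
  linarith

lemma const_of_weak_zero {g : Euc n → ℝ} (hg : LocallyIntegrable g)
    (h : ∀ u, CS u → ∀ i, ∫ x, g x * dd (eb i) u x = 0) : ∃ c, ∀ᵐ x, g x = c := by
  set b : ℕ → ContDiffBump (0 : Euc n) := fun k => mbump n (1 / ((k:ℝ) + 1)) (by positivity)
  have hae := ContDiffBump.ae_convolution_tendsto_right_of_locallyIntegrable (μ := volume)
    (φ := b) (l := atTop) (K := 2) tendsto_one_div_add_atTop_nhds_zero_nat
    (Eventually.of_forall fun k => by simp only [b, mbump]; linarith) hg
  have e : ∀ k x, ((b k).normed volume ⋆[ContinuousLinearMap.lsmul ℝ ℝ, volume] g) x =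
      mo ((b k).normed volume) g x := by
    intro k x
    rw [convolution_eq_swap, mo]
    congr 1; ext y; simp [mul_comm]
  have hz : ∀ k x, mo ((b k).normed volume) g x = mo ((b k).normed volume) g 0 := by
    intro k x
    have hm := (bump_mol (b k)).cs
    refine is_const_of_fderiv_eq_zero (𝕜 := ℝ) ((mo_smooth hm hg).differentiable (by simp)) (fun y => ?_) x 0
    ext v
    have hv : ∀ i, dd (eb i) (mo ((b k).normed volume) g) y = 0 := by
      intro i
      rw [dd_mo hm hg, mo]
      have := h _ (refl_CS hm y) i
      simp_rw [dd_refl hm.smooth, mul_neg, integral_neg, neg_eq_zero] at this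
      exact this
    conv_lhs => rw [← sum_eb v]
    rw [map_sum]
    simp only [map_smul]
    refine Finset.sum_eq_zero fun i _ => ?_
    have := hv i
    rw [dd] at this
    rw [this]; simp
  obtain ⟨x0, hx0⟩ := hae.exists
  refine ⟨g x0, ?_⟩
  filter_upwards [hae] with x hx
  simp_rw [e, hz] at hx hx0
  exact tendsto_nhds_unique hx hx0

lemma dd_const_mul {f : Euc n → ℝ} (hf : ContDiff ℝ ∞ f) (c : ℝ) (v x : Euc n) :
    dd v (fun x => c * f x) x = c * dd v f x := by
  rw [dd, fderiv_const_mul (diffAt hf x)]; simp [dd]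

lemma LL_add {φ h1 h2 : Euc n → ℝ} (H1 : CS h1) (H2 : CS h2) (x : Euc n) :
    LL φ (fun x => h1 x + h2 x) x = LL φ h1 x + LL φ h2 x := by
  rw [LL, LL, LL, ← Finset.sum_add_distrib]
  refine Finset.sum_congr rfl fun i _ => ?_
  have : dd (eb i) (fun x => h1 x + h2 x) = fun x => dd (eb i) h1 x + dd (eb i) h2 x := by
    ext x; exact dd_add H1.smooth H2.smooth _ _
  rw [this, dd_add (H1.dd _).smooth (H2.dd _).smooth]; ring

lemma LL_smul {φ h : Euc n → ℝ} (H : CS h) (c : ℝ) (x : Euc n) :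
    LL φ (fun x => c * h x) x = c * LL φ h x := by
  rw [LL, LL, Finset.mul_sum]
  refine Finset.sum_congr rfl fun i _ => ?_
  have : dd (eb i) (fun x => c * h x) = fun x => c * dd (eb i) h x := by
    ext x; exact dd_const_mul H.smooth _ _ _
  rw [this, dd_const_mul (H.dd _).smooth]; ring

lemma CS.const_mul {h : Euc n → ℝ} (H : CS h) (c : ℝ) : CS fun x => c * h x :=
  H.mul_right contDiff_const

lemma cont_bdd_memLp {φ f : Euc n → ℝ} [IsFiniteMeasure (nu φ)] (hf : CS f) : MemLp f 2 (nu φ) := by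
  obtain ⟨K, hK⟩ := hf.cpt.exists_bound_of_continuous hf.smooth.continuous
  exact MemLp.of_bound hf.smooth.continuous.aestronglyMeasurable K (Eventually.of_forall hK)

lemma dense_LL {φ : Euc n → ℝ} (hφ : ContDiff ℝ ∞ φ) [IsFiniteMeasure (nu φ)] {f : Euc n → ℝ}
    (hf : MemLp f 2 (nu φ)) (hf0 : ∫ x, f x ∂(nu φ) = 0) {δ : ℝ} (hδ : 0 < δ) :
    ∃ h, CS h ∧ ∫ x, (f x - LL φ h x) ^ 2 ∂(nu φ) ≤ δ ^ 2 := by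
  let S : Submodule ℝ (Lp ℝ 2 (nu φ)) :=
    { carrier := {F | ∃ h, CS h ∧ F =ᵐ[nu φ] LL φ h}
      add_mem' := by
        rintro F1 F2 ⟨h1, H1, e1⟩ ⟨h2, H2, e2⟩
        refine ⟨_, H1.add H2, ?_⟩
        filter_upwards [e1, e2, Lp.coeFn_add F1 F2] with x a1 a2 a3
        rw [a3, Pi.add_apply, a1, a2, LL_add H1 H2]
      zero_mem' := by
        refine ⟨_, CS.zero, ?_⟩
        filter_upwards [Lp.coeFn_zero ℝ 2 (nu φ)] with x hx
        rw [hx]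
        have := LL_smul (φ := φ) (CS.zero (n := n)) 0 x
        simpa using this.symm
      smul_mem' := by
        rintro c F ⟨h, H, e⟩
        refine ⟨_, H.const_mul c, ?_⟩
        filter_upwards [e, Lp.coeFn_smul c F] with x a1 a2
        rw [a2, Pi.smul_apply, a1, LL_smul H]; rfl }
  have hmem : hf.toLp f ∈ S.topologicalClosure := by
    rw [← Submodule.orthogonal_orthogonal_eq_closure, Submodule.mem_orthogonal]
    intro G hG
    rw [Submodule.mem_orthogonal] at hG
    have hGm : MemLp G 2 (nu φ) := Lp.memLp G
    have hG1 : Integrable G (nu φ) := hGm.integrable (by norm_num)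
    have hw : Integrable fun x => G x * rho φ x := (nu_integrable hφ.continuous _).1 hG1
    have hg2 : Integrable fun x => G x ^ 2 * rho φ x :=
      (nu_integrable hφ.continuous _).1 hGm.integrable_sq
    have hEr : ∀ x, rho φ x * Real.exp (φ x) = 1 := by
      intro x; rw [rho, ← Real.exp_add]; simp
    have hGl : LocallyIntegrable G := by
      have := li_mul hw.locallyIntegrable (c := fun x => Real.exp (φ x))
        (Real.continuous_exp.comp hφ.continuous)
      refine this.congr (Eventually.of_forall fun x => ?_)
      simp only
      linear_combination G x * hEr x
    obtain ⟨c, hc⟩ := const_of_weak_zero hGl (fun u hu i => weak_zero hφ hw hg2 (fun h hh => by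
      have hm := cont_bdd_memLp (φ := φ) (LL_CS hφ hh)
      have := hG (hm.toLp _) ⟨h, hh, hm.coeFn_toLp⟩
      rw [L2.inner_def] at this
      rw [← this]
      have e : ∫ y, G y * LL φ h y * rho φ y = ∫ y, G y * LL φ h y ∂(nu φ) :=
        (nu_integral hφ.continuous _).symm
      rw [e]
      refine integral_congr_ae ?_
      filter_upwards [hm.coeFn_toLp] with x hx
      rw [hx]; simp) hu i)
    rw [L2.inner_def]
    have hc' : ∀ᵐ x ∂(nu φ), G x = c := nu_ac.ae_le hc
    have : ∫ x, inner ℝ (G x) (hf.toLp f x) ∂(nu φ) = ∫ x, c * f x ∂(nu φ) := by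
      refine integral_congr_ae ?_
      filter_upwards [hc', hf.coeFn_toLp] with x h1 h2
      rw [h1, h2]; simp [mul_comm]
    rw [this, integral_const_mul, hf0, mul_zero]
  have hcl : hf.toLp f ∈ closure (S : Set (Lp ℝ 2 (nu φ))) := hmem
  rw [Metric.mem_closure_iff] at hcl
  obtain ⟨F, ⟨h, hh, e⟩, hd⟩ := hcl δ hδ
  refine ⟨h, hh, ?_⟩
  rw [dist_eq_norm] at hd
  have e1 : ∫ x, (f x - LL φ h x) ^ 2 ∂(nu φ) = ‖hf.toLp f - F‖ ^ 2 := by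
    rw [← real_inner_self_eq_norm_sq, L2.inner_def]
    refine integral_congr_ae ?_
    filter_upwards [e, hf.coeFn_toLp, Lp.coeFn_sub (hf.toLp f) F] with x a1 a2 a3
    rw [a3, Pi.sub_apply, a1, a2]; simp
  rw [e1]
  exact pow_le_pow_left₀ (norm_nonneg _) hd.le 2

end PartC3

open MeasureTheory Real
open scoped ENNReal RealInnerProductSpace

noncomputable section PartD
open scoped ContDiff Convolution Topology
open Filter

variable {n : ℕ}

lemma ll_ext {f : Euc n → ℝ} (hf : LocallyLipschitz f) (R : ℝ) :
    ∃ (K : NNReal) (g : Euc n → ℝ), LipschitzWith K g ∧ (∀ x, ‖x‖ ≤ R → f x = g x) ∧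
      (∀ x, ‖x‖ < R → fderiv ℝ f x = fderiv ℝ g x) := by
  obtain ⟨K, hK⟩ := LocallyLipschitzOn.exists_lipschitzOnWith_of_compact
    (isCompact_closedBall (0 : Euc n) R) (hf.locallyLipschitzOn (s := Metric.closedBall 0 R))
  obtain ⟨g, hg, he⟩ := hK.extend_real
  refine ⟨K, g, hg, fun x hx => he (by simpa using hx), fun x hx => ?_⟩
  refine Filter.EventuallyEq.fderiv_eq ?_
  have : Metric.ball (0 : Euc n) R ∈ 𝓝 x := Metric.isOpen_ball.mem_nhds (by simpa using hx)
  filter_upwards [this] with y hy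
  exact he (Metric.ball_subset_closedBall hy)

lemma CS.bdd_supp {g : Euc n → ℝ} (hg : CS g) : ∃ R, ∀ x, R ≤ ‖x‖ → g x = 0 ∧ ∀ v, _root_.dd v g x = 0 := by
  obtain ⟨R, hR⟩ := hg.cpt.isBounded.subset_ball (0 : Euc n)
  refine ⟨R, fun x hx => ?_⟩
  have : x ∉ tsupport g := fun h => by
    have := hR h
    simp at this; linarith
  refine ⟨image_eq_zero_of_notMem_tsupport this, fun v => ?_⟩
  have h2 : x ∉ tsupport (fderiv ℝ g) := fun h => this (tsupport_fderiv_subset ℝ h)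
  unfold _root_.dd
  rw [image_eq_zero_of_notMem_tsupport h2]; simp

lemma ll_int {f g : Euc n → ℝ} (hf : LocallyLipschitz f) (hg : CS g) (v : Euc n) :
    Integrable fun x => dd v f x * g x := by
  obtain ⟨R, hR⟩ := hg.bdd_supp
  obtain ⟨K, F, hF, h1, h2⟩ := ll_ext hf R
  refine Integrable.mono' ((hg.integrable.norm).const_mul (K * ‖v‖)) ?_ ?_
  · exact ((measurable_fderiv_apply_const ℝ f v).aestronglyMeasurable).mul
      hg.smooth.continuous.aestronglyMeasurable
  · refine Eventually.of_forall fun x => ?_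
    rw [norm_mul]
    rcases lt_or_ge ‖x‖ R with h | h
    · refine mul_le_mul_of_nonneg_right ?_ (norm_nonneg _)
      unfold dd
      rw [h2 x h]
      refine ((fderiv ℝ F x).le_opNorm v).trans ?_
      exact mul_le_mul_of_nonneg_right (norm_fderiv_le_of_lipschitz ℝ hF) (norm_nonneg _)
    · simp [(hR x h).1]

lemma ll_ibp {f g : Euc n → ℝ} (hf : LocallyLipschitz f) (hg : CS g) (v : Euc n) :
    ∫ x, f x * dd v g x = - ∫ x, dd v f x * g x := by
  obtain ⟨R, hR⟩ := hg.bdd_supp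
  obtain ⟨K, F, hF, h1, h2⟩ := ll_ext hf R
  obtain ⟨L, hL⟩ := hg.smooth.lipschitzWith_of_hasCompactSupport hg.cpt (by simp)
  have := LipschitzWith.integral_lineDeriv_mul_eq (μ := volume) hF hL hg.cpt v
  have e1 : ∫ x, dd v f x * g x = ∫ x, lineDeriv ℝ F x v * g x := by
    refine integral_congr_ae ?_
    filter_upwards [hF.ae_differentiableAt (μ := volume)] with x hx
    rcases lt_or_ge ‖x‖ R with h | h
    · unfold dd; rw [h2 x h, hx.lineDeriv_eq_fderiv]
    · simp [(hR x h).1]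
  rw [e1, this, ← integral_neg]
  refine integral_congr_ae (Eventually.of_forall fun x => ?_)
  simp only
  rw [(diffAt hg.smooth x).lineDeriv_eq_fderiv]
  rcases lt_or_ge ‖x‖ R with h | h
  · rw [h1 x h.le]; simp [dd]; ring
  · have := (hR x h).2 v
    unfold dd at *
    simp [this]

lemma ll_LL {φ f h : Euc n → ℝ} (hφ : ContDiff ℝ ∞ φ) (hf : LocallyLipschitz f) (hh : CS h) :
    ∫ x, f x * LL φ h x ∂(nu φ) = - ∫ x, (∑ i, dd (eb i) f x * dd (eb i) h x) ∂(nu φ) := by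
  rw [nu_integral hφ.continuous, nu_integral hφ.continuous]
  have hg : ∀ i, CS fun x => dd (eb i) h x * rho φ x := fun i => (hh.dd (eb i)).mul_left (rho_smooth hφ)
  have e : ∀ x, f x * LL φ h x * rho φ x
      = ∑ i, f x * dd (eb i) (fun x => dd (eb i) h x * rho φ x) x := by
    intro x
    rw [LL, Finset.mul_sum, Finset.sum_mul]
    refine Finset.sum_congr rfl fun i _ => ?_
    rw [dd_mul (hh.dd (eb i)).smooth (rho_smooth hφ), dd_rho hφ]; ring
  have e2 : ∀ x, (∑ i, dd (eb i) f x * dd (eb i) h x) * rho φ x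
      = ∑ i, dd (eb i) f x * (dd (eb i) h x * rho φ x) := by
    intro x; rw [Finset.sum_mul]; refine Finset.sum_congr rfl fun i _ => by ring
  simp_rw [e, e2]
  rw [integral_finsetSum, integral_finsetSum, ← Finset.sum_neg_distrib]
  · exact Finset.sum_congr rfl fun i _ => ll_ibp hf (hg i) _
  · exact fun i _ => ll_int hf (hg i) _
  · intro i _
    exact (hf.continuous.mul (((hg i).dd (eb i)).smooth.continuous)).integrable_of_hasCompactSupport
      ((hg i).dd (eb i)).cpt.mul_left

lemma CS.ll {h : Euc n → ℝ} (hh : CS h) : LocallyLipschitz h :=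
  (hh.smooth.of_le (by simp)).locallyLipschitz

lemma CS.int_nu {φ f : Euc n → ℝ} (hφ : Continuous φ) (hf : CS f) : Integrable f (nu φ) := by
  rw [nu_integrable hφ]
  exact (hf.smooth.continuous.mul (Real.continuous_exp.comp hφ.neg)).integrable_of_hasCompactSupport
    hf.cpt.mul_right

lemma grad_meas (f : Euc n → ℝ) : Measurable fun x => ‖gradient f x‖ := by
  simp_rw [grad_norm]; exact (measurable_fderiv ℝ f).norm

lemma CS.grad_cont {f : Euc n → ℝ} (hf : CS f) : Continuous fun x => ‖gradient f x‖ := by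
  simp_rw [grad_norm]; exact (hf.smooth.continuous_fderiv (by simp)).norm

lemma CS.grad_sq {f : Euc n → ℝ} (hf : CS f) : CS fun x => ‖gradient f x‖ ^ 2 := by
  have : (fun x => ‖gradient f x‖ ^ 2) = fun x => ∑ i, _root_.dd (eb i) f x * _root_.dd (eb i) f x := by
    ext x; rw [_root_.grad_sq]; refine Finset.sum_congr rfl fun i _ => by ring
  rw [this]
  exact CS.sum _ fun i => (hf.dd _).mul_left (hf.dd _).smooth

lemma sum_dd_sq_le (f h : Euc n → ℝ) (x : Euc n) :
    (∑ i, dd (eb i) f x * dd (eb i) h x) ^ 2 ≤ ‖gradient f x‖ ^ 2 * ‖gradient h x‖ ^ 2 := by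
  rw [grad_sq, grad_sq]
  exact Finset.sum_mul_sq_le_sq_mul_sq _ _ _

lemma sum_dd_meas (f h : Euc n → ℝ) : Measurable fun x => ∑ i, dd (eb i) f x * dd (eb i) h x :=
  Finset.measurable_sum _ fun i _ =>
    (measurable_fderiv_apply_const ℝ f _).mul (measurable_fderiv_apply_const ℝ h _)

/-- Lemma I.A -/
lemma dual_poincare {φ : Euc n → ℝ} (hφ : ContDiff ℝ ∞ φ) [IsProbabilityMeasure (nu φ)] {Q : ℝ}
    (hQ : 0 ≤ Q) (H : ∀ h, CS h → ∫ x, ‖gradient h x‖ ^ 2 ∂(nu φ) ≤ Q * ∫ x, LL φ h x ^ 2 ∂(nu φ)) :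
    Q ∈ poincareSet (nu φ) := by
  refine ⟨hQ, fun f hf hD => ?_⟩
  set D := ∫ x, ‖gradient f x‖ ^ 2 ∂(nu φ) with hDd
  have hD0 : 0 ≤ D := integral_nonneg fun x => by positivity
  by_cases hf2 : Integrable (fun x => f x ^ 2) (nu φ)
  swap
  · rw [integral_undef hf2]
    nlinarith [sq_nonneg (∫ x, f x ∂(nu φ)), mul_nonneg hQ hD0]
  have hfm : MemLp f 2 (nu φ) := (memLp_two_iff_integrable_sq hf.continuous.aestronglyMeasurable).2 hf2
  have hf1 : Integrable f (nu φ) := hfm.integrable (by norm_num)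
  set E := ∫ x, f x ∂(nu φ) with hE
  have h0m : MemLp (fun x => f x - E) 2 (nu φ) := hfm.sub (memLp_const E)
  have h00 : ∫ x, (f x - E) ∂(nu φ) = 0 := by
    rw [integral_sub hf1 (integrable_const _)]; simp [← hE]
  set V := ∫ x, (f x - E) ^ 2 ∂(nu φ) with hV
  have hVe : ∫ x, f x ^ 2 ∂(nu φ) - E ^ 2 = V := by
    have : ∀ x, (f x - E) ^ 2 = f x ^ 2 - 2 * E * f x + E ^ 2 := fun x => by ring
    rw [hV]; simp_rw [this]
    rw [integral_add (by exact hf2.sub (hf1.const_mul _)) (integrable_const _),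
      integral_sub hf2 (hf1.const_mul _), integral_const_mul, ← hE]
    simp; ring
  rw [hVe]
  have hV0 : 0 ≤ V := integral_nonneg fun x => by positivity
  have key : ∀ δ > 0, V ≤ √V * δ + √(D * Q) * (√V + δ) := by
    intro δ hδ
    obtain ⟨h, hh, hd⟩ := dense_LL hφ h0m h00 hδ
    have hLm := cont_bdd_memLp (φ := φ) (LL_CS hφ hh)
    have hdm : MemLp (fun x => f x - E - LL φ h x) 2 (nu φ) := h0m.sub hLm
    have hLi : Integrable (LL φ h) (nu φ) := hLm.integrable (by norm_num)
    have i1 : Integrable (fun x => (f x - E) * (f x - E - LL φ h x)) (nu φ) :=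
      h0m.integrable_mul hdm
    have i2 : Integrable (fun x => (f x - E) * LL φ h x) (nu φ) :=
      h0m.integrable_mul hLm
    have s1 : V = ∫ x, (f x - E) * (f x - E - LL φ h x) ∂(nu φ) + ∫ x, (f x - E) * LL φ h x ∂(nu φ) := by
      rw [← integral_add i1 i2, hV]; congr 1; ext x; ring
    have s2 : ∫ x, (f x - E) * (f x - E - LL φ h x) ∂(nu φ) ≤ √V * δ := by
      have := (cs_dom i1.aestronglyMeasurable h0m.integrable_sq hdm.integrable_sq
        (Eventually.of_forall fun x => by positivity) (Eventually.of_forall fun x => by positivity)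
        (Eventually.of_forall fun x => by rw [mul_pow])).2
      refine (abs_le_of_sq_le_sq' ?_ (by positivity)).2
      rw [mul_pow, Real.sq_sqrt hV0]
      exact this.trans (mul_le_mul_of_nonneg_left hd hV0)
    have hLn : √(∫ x, LL φ h x ^ 2 ∂(nu φ)) ≤ √V + δ := by
      have hb : ∫ x, (f x - E) * LL φ h x ∂(nu φ) ≤ √V * √(∫ x, LL φ h x ^ 2 ∂(nu φ)) := by
        have := (cs_dom i2.aestronglyMeasurable h0m.integrable_sq hLm.integrable_sq
          (Eventually.of_forall fun x => by positivity) (Eventually.of_forall fun x => by positivity)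
          (Eventually.of_forall fun x => by rw [mul_pow])).2
        refine (abs_le_of_sq_le_sq' ?_ (by positivity)).2
        rw [mul_pow, Real.sq_sqrt hV0, Real.sq_sqrt (integral_nonneg fun x => by positivity)]
        exact this
      set l := √(∫ x, LL φ h x ^ 2 ∂(nu φ)) with hl
      have hl2 : l ^ 2 = ∫ x, LL φ h x ^ 2 ∂(nu φ) := Real.sq_sqrt (integral_nonneg fun x => by positivity)
      have ee : ∫ x, (f x - E - LL φ h x) ^ 2 ∂(nu φ) = V - 2 * ∫ x, (f x - E) * LL φ h x ∂(nu φ) + l ^ 2 := by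
        rw [hl2, hV, ← integral_const_mul, ← integral_sub h0m.integrable_sq (i2.const_mul _),
          ← integral_add (by exact h0m.integrable_sq.sub (i2.const_mul _)) hLm.integrable_sq]
        congr 1; ext x; ring
      have : (l - √V) ^ 2 ≤ δ ^ 2 := by
        nlinarith [Real.sq_sqrt hV0]
      linarith [(abs_le_of_sq_le_sq' this hδ.le).2]
    have s3 : ∫ x, (f x - E) * LL φ h x ∂(nu φ) ≤ √(D * Q) * (√V + δ) := by
      have e0 : ∫ x, LL φ h x ∂(nu φ) = 0 := by
        have := ll_LL hφ (f := fun _ => (1:ℝ)) (LipschitzWith.const 1).locallyLipschitz hh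
        simpa [dd] using this
      have e1 : ∫ x, (f x - E) * LL φ h x ∂(nu φ) = ∫ x, f x * LL φ h x ∂(nu φ) := by
        simp_rw [sub_mul]
        rw [integral_sub (by exact hfm.integrable_mul hLm) (hLi.const_mul _), integral_const_mul, e0]; simp
      rw [e1, ll_LL hφ hf hh]
      have := (cs_dom (sum_dd_meas f h).aestronglyMeasurable hD (hh.grad_sq.int_nu hφ.continuous)
        (Eventually.of_forall fun x => by positivity) (Eventually.of_forall fun x => by positivity)
        (Eventually.of_forall fun x => sum_dd_sq_le f h x)).2
      refine le_trans ?_ (mul_le_mul_of_nonneg_left hLn (Real.sqrt_nonneg _))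
      refine (abs_le_of_sq_le_sq' ?_ (by positivity)).2
      rw [neg_sq, mul_pow, Real.sq_sqrt (mul_nonneg hD0 hQ), Real.sq_sqrt (integral_nonneg fun x => by positivity)]
      refine this.trans ?_
      rw [mul_assoc]
      exact mul_le_mul_of_nonneg_left (H h hh) hD0
    linarith
  have lim : V ≤ √V * 0 + √(D * Q) * (√V + 0) := by
    have c : Continuous fun δ : ℝ => √V * δ + √(D * Q) * (√V + δ) := by fun_prop
    have := (c.tendsto 0).mono_left (nhdsWithin_le_nhds (s := Set.Ioi 0))
    exact ge_of_tendsto this (eventually_nhdsWithin_of_forall fun δ hδ => key δ hδ)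
  have hs := Real.sq_sqrt hV0
  have hs2 := Real.sq_sqrt (mul_nonneg hD0 hQ)
  rcases eq_or_lt_of_le (Real.sqrt_nonneg V) with h | h
  · rw [← hs, ← h]; nlinarith [mul_nonneg hQ hD0]
  · have : √V ≤ √(D * Q) := by
      by_contra hc
      push Not at hc
      nlinarith
    rw [← hs, mul_comm Q D, ← hs2]
    exact pow_le_pow_left₀ h.le this 2

lemma poincare_dual {φ : Euc n → ℝ} (hφ : ContDiff ℝ ∞ φ) [IsProbabilityMeasure (nu φ)] {Q : ℝ}
    (hQ : 0 ≤ Q) (H : ∀ h, CS h → ∫ x, h x ^ 2 ∂(nu φ) - (∫ x, h x ∂(nu φ)) ^ 2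
      ≤ Q * ∫ x, ‖gradient h x‖ ^ 2 ∂(nu φ)) {h : Euc n → ℝ} (hh : CS h) :
    ∫ x, ‖gradient h x‖ ^ 2 ∂(nu φ) ≤ Q * ∫ x, LL φ h x ^ 2 ∂(nu φ) := by
  set D := ∫ x, ‖gradient h x‖ ^ 2 ∂(nu φ) with hDd
  have hD0 : 0 ≤ D := integral_nonneg fun x => by positivity
  have hfm := cont_bdd_memLp (φ := φ) hh
  have hLm := cont_bdd_memLp (φ := φ) (LL_CS hφ hh)
  have hLi : Integrable (LL φ h) (nu φ) := hLm.integrable (by norm_num)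
  have hf1 : Integrable h (nu φ) := hfm.integrable (by norm_num)
  set E := ∫ x, h x ∂(nu φ) with hE
  have h0m : MemLp (fun x => h x - E) 2 (nu φ) := hfm.sub (memLp_const E)
  have e0 : ∫ x, LL φ h x ∂(nu φ) = 0 := by
    have := ll_LL hφ (f := fun _ => (1:ℝ)) (LipschitzWith.const 1).locallyLipschitz hh
    simpa [dd] using this
  have e1 : ∫ x, (h x - E) * LL φ h x ∂(nu φ) = ∫ x, h x * LL φ h x ∂(nu φ) := by
    simp_rw [sub_mul]
    rw [integral_sub (by exact hfm.integrable_mul hLm) (hLi.const_mul _), integral_const_mul, e0]; simp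
  have e2 : ∫ x, h x * LL φ h x ∂(nu φ) = - D := by
    rw [ll_LL hφ hh.ll hh, hDd]
    congr 1; congr 1; ext x; rw [grad_sq]; refine Finset.sum_congr rfl fun i _ => by ring
  have hVe : ∫ x, (h x - E) ^ 2 ∂(nu φ) = ∫ x, h x ^ 2 ∂(nu φ) - E ^ 2 := by
    have : ∀ x, (h x - E) ^ 2 = h x ^ 2 - 2 * E * h x + E ^ 2 := fun x => by ring
    simp_rw [this]
    rw [integral_add (by exact hfm.integrable_sq.sub (hf1.const_mul _)) (integrable_const _),
      integral_sub hfm.integrable_sq (hf1.const_mul _), integral_const_mul, ← hE]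
    simp; ring
  have c := (cs_dom (h0m.integrable_mul hLm).aestronglyMeasurable h0m.integrable_sq hLm.integrable_sq
          (Eventually.of_forall fun x => by positivity) (Eventually.of_forall fun x => by positivity)
          (Eventually.of_forall fun x => by simp [mul_pow])).2
  have hL0 : 0 ≤ ∫ x, LL φ h x ^ 2 ∂(nu φ) := integral_nonneg fun x => by positivity
  have c' : D ^ 2 ≤ Q * D * ∫ x, LL φ h x ^ 2 ∂(nu φ) := by
    have : (∫ x, (h x - E) * LL φ h x ∂(nu φ)) ^ 2 = D ^ 2 := by rw [e1, e2]; ring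
    rw [← this]
    refine c.trans ?_
    rw [hVe]
    exact mul_le_mul_of_nonneg_right (H h hh) hL0
  rcases eq_or_lt_of_le hD0 with h | h
  · rw [← h]; positivity
  · nlinarith

lemma poincare_of_CS {φ : Euc n → ℝ} (hφ : ContDiff ℝ ∞ φ) [IsProbabilityMeasure (nu φ)] {Q : ℝ}
    (hQ : 0 ≤ Q) (H : ∀ h, CS h → ∫ x, h x ^ 2 ∂(nu φ) - (∫ x, h x ∂(nu φ)) ^ 2
      ≤ Q * ∫ x, ‖gradient h x‖ ^ 2 ∂(nu φ)) : Q ∈ poincareSet (nu φ) :=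
  dual_poincare hφ hQ fun _ hh => poincare_dual hφ hQ H hh

lemma T1 {φ : Euc n → ℝ} {m : ℝ} (hp : Pot φ m) [IsProbabilityMeasure (nu φ)] :
    1 / m ∈ poincareSet (nu φ) := by
  have hm := hp.m_pos
  refine dual_poincare hp.smooth (by positivity) fun h hh => ?_
  have := bochner hp hh
  rw [nu_integral hp.smooth.continuous, nu_integral hp.smooth.continuous]
  have h2 : 0 ≤ ∑ i, ∫ x, ‖gradient (dd (eb i) h) x‖ ^ 2 * rho φ x :=
    Finset.sum_nonneg fun i _ => integral_nonneg fun x => mul_nonneg (sq_nonneg _) (rho_pos φ x).le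
  rw [one_div, ← div_eq_inv_mul, le_div_iff₀ hm]
  linarith

lemma poincareSet_bdd (ν : Measure (Euc n)) : BddBelow (poincareSet ν) := ⟨0, fun _ h => h.1⟩

lemma poincareConst_mem {ν : Measure (Euc n)} (hne : (poincareSet ν).Nonempty) :
    poincareConst ν ∈ poincareSet ν := by
  refine ⟨le_csInf hne fun _ h => h.1, fun f hf hD => ?_⟩
  set D := ∫ x, ‖gradient f x‖ ^ 2 ∂ν with hDd
  have hD0 : 0 ≤ D := integral_nonneg fun x => by positivity
  refine le_of_forall_pos_le_add fun ε hε => ?_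
  obtain ⟨c, hc, hlt⟩ := exists_lt_of_csInf_lt hne (show poincareConst ν < poincareConst ν + ε / (D + 1) by
    have : 0 < ε / (D + 1) := by positivity
    linarith)
  refine (hc.2 f hf hD).trans ?_
  rw [← hDd]
  have h1 : c * D ≤ (poincareConst ν + ε / (D + 1)) * D := mul_le_mul_of_nonneg_right hlt.le hD0
  have h2 : ε / (D + 1) * D ≤ ε := by
    rw [div_mul_eq_mul_div, div_le_iff₀ (by positivity)]; nlinarith
  nlinarith

lemma poincareConst_le {ν : Measure (Euc n)} {c : ℝ} (h : c ∈ poincareSet ν) : poincareConst ν ≤ c :=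
  csInf_le (poincareSet_bdd ν) h

lemma poincareConst_nonneg (ν : Measure (Euc n)) : 0 ≤ poincareConst ν :=
  Real.sInf_nonneg fun _ h => h.1

lemma poincareSet_mono {ν : Measure (Euc n)} {c d : ℝ} (h : c ∈ poincareSet ν) (hcd : c ≤ d) :
    d ∈ poincareSet ν :=
  ⟨h.1.trans hcd, fun f hf hD => (h.2 f hf hD).trans
    (mul_le_mul_of_nonneg_right hcd (integral_nonneg fun x => by positivity))⟩

end PartD

open MeasureTheory Real
open scoped ENNReal RealInnerProductSpace

noncomputable section PartD2
open scoped ContDiff Convolution Topology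
open Filter

variable {n : ℕ}

lemma coord_le (x : Euc n) (i : Fin n) : |x i| ≤ ‖x‖ := PiLp.norm_apply_le x i

lemma meas_coord (i : Fin n) : Measurable fun x : Euc n => x i := by fun_prop

lemma coord_int {φ : Euc n → ℝ} {m : ℝ} (hp : Pot φ m) (i : Fin n) :
    Integrable (fun x => x i) (nu φ) := by
  refine pot_int_of_le hp (meas_coord i).aestronglyMeasurable 1 1 fun x => ?_
  have := Real.add_one_le_exp (1 * ‖x‖)
  have := coord_le x i
  linarith

lemma coord2_int {φ : Euc n → ℝ} {m : ℝ} (hp : Pot φ m) (i j : Fin n) :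
    Integrable (fun x => x i * x j) (nu φ) := by
  refine pot_int_of_le hp ((meas_coord i).mul (meas_coord j)).aestronglyMeasurable 2 1 fun x => ?_
  have h1 := Real.quadratic_le_exp_of_nonneg (norm_nonneg x)
  have h2 := coord_le x i
  have h3 := coord_le x j
  rw [abs_mul, one_mul]
  nlinarith [abs_nonneg (x i), abs_nonneg (x j), norm_nonneg x, mul_le_mul h2 h3 (abs_nonneg _) (norm_nonneg _)]

lemma cov_quad {φ : Euc n → ℝ} {m : ℝ} (hp : Pot φ m) (v : Euc n) :
    ∫ x, ⟪v, x⟫ ^ 2 ∂(nu φ) - (∫ x, ⟪v, x⟫ ∂(nu φ)) ^ 2 ≤ opNorm (covMatrix (nu φ)) * ‖v‖ ^ 2 := by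
  have e0 : ∀ x : Euc n, ⟪v, x⟫ = ∑ i, v i * x i := by
    intro x; rw [PiLp.inner_apply]; simp [mul_comm]
  have e1 : ∫ x, ⟪v, x⟫ ∂(nu φ) = ∑ i, v i * ∫ x, x i ∂(nu φ) := by
    simp_rw [e0]
    rw [integral_finsetSum _ fun i _ => (coord_int hp i).const_mul _]
    simp_rw [integral_const_mul]
  have e2 : ∫ x, ⟪v, x⟫ ^ 2 ∂(nu φ) = ∑ i, ∑ j, v i * v j * ∫ x, x i * x j ∂(nu φ) := by
    have : ∀ x : Euc n, ⟪v, x⟫ ^ 2 = ∑ i, ∑ j, v i * v j * (x i * x j) := by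
      intro x; rw [e0, sq, Finset.sum_mul_sum]
      refine Finset.sum_congr rfl fun i _ => Finset.sum_congr rfl fun j _ => by ring
    simp_rw [this]
    rw [integral_finsetSum _ fun i _ => integrable_finsetSum _ fun j _ => (coord2_int hp i j).const_mul _]
    refine Finset.sum_congr rfl fun i _ => ?_
    rw [integral_finsetSum _ fun j _ => (coord2_int hp i j).const_mul _]
    simp_rw [integral_const_mul]
  have e3 : ∫ x, ⟪v, x⟫ ^ 2 ∂(nu φ) - (∫ x, ⟪v, x⟫ ∂(nu φ)) ^ 2
      = ⟪v, Matrix.toEuclideanCLM (𝕜 := ℝ) (covMatrix (nu φ)) v⟫ := by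
    rw [e0, e1, e2, sq, Finset.sum_mul_sum, ← Finset.sum_sub_distrib]
    refine Finset.sum_congr rfl fun i _ => ?_
    rw [Matrix.ofLp_toEuclideanCLM, Matrix.mulVec, dotProduct, ← Finset.sum_sub_distrib, Finset.mul_sum]
    refine Finset.sum_congr rfl fun j _ => ?_
    simp only [covMatrix, Matrix.of_apply]
    ring
  rw [e3, opNorm]
  refine (real_inner_le_norm _ _).trans ?_
  nlinarith [norm_nonneg v, (Matrix.toEuclideanCLM (𝕜 := ℝ) (covMatrix (nu φ))).le_opNorm v]

lemma T2 {φ : Euc n → ℝ} {t : ℝ} (hp : Pot φ t) [IsProbabilityMeasure (nu φ)] :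
    poincareConst (nu φ) ≤ √(opNorm (covMatrix (nu φ))) / √t := by
  have ht := hp.m_pos
  have hφ := hp.smooth
  set C := poincareConst (nu φ) with hC
  set κ := opNorm (covMatrix (nu φ)) with hκ
  have hCm : C ∈ poincareSet (nu φ) := poincareConst_mem ⟨_, T1 hp⟩
  have hC0 : 0 ≤ C := hCm.1
  have hκ0 : 0 ≤ κ := norm_nonneg _
  have hQ : (C + κ) / (1 + t * C) ∈ poincareSet (nu φ) := by
    refine dual_poincare hφ (by positivity) fun h hh => ?_
    have hb := bochner hp hh
    simp_rw [← nu_integral hφ.continuous] at hb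
    set L := ∫ x, LL φ h x ^ 2 ∂(nu φ) with hL
    set D := ∫ x, ‖gradient h x‖ ^ 2 ∂(nu φ) with hD
    have hL0 : 0 ≤ L := integral_nonneg fun x => by positivity
    set v : Euc n := WithLp.toLp 2 (fun i => ∫ x, dd (eb i) h x ∂(nu φ)) with hv
    have hvi : ∀ i, v i = ∫ x, dd (eb i) h x ∂(nu φ) := fun i => rfl
    have hDs : D = ∑ i, ∫ x, dd (eb i) h x ^ 2 ∂(nu φ) := by
      rw [hD]
      simp_rw [grad_sq]
      exact integral_finsetSum _ fun i _ => (cont_bdd_memLp (hh.dd (eb i))).integrable_sq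
    have hvn : ‖v‖ ^ 2 = ∑ i, v i ^ 2 := by
      rw [EuclideanSpace.norm_sq_eq]; simp
    have hP : D - ‖v‖ ^ 2 ≤ C * ∑ i, ∫ x, ‖gradient (dd (eb i) h) x‖ ^ 2 ∂(nu φ) := by
      rw [hDs, hvn, ← Finset.sum_sub_distrib, Finset.mul_sum]
      refine Finset.sum_le_sum fun i _ => ?_
      exact hCm.2 _ (hh.dd (eb i)).ll ((hh.dd (eb i)).grad_sq.int_nu hφ.continuous)
    have hvL : ‖v‖ ^ 2 ≤ κ * L := by
      have hLm := cont_bdd_memLp (φ := φ) (LL_CS hφ hh)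
      have hLi : Integrable (LL φ h) (nu φ) := hLm.integrable (by norm_num)
      have e0 : ∫ x, LL φ h x ∂(nu φ) = 0 := by
        have := ll_LL hφ (f := fun _ => (1:ℝ)) (LipschitzWith.const 1).locallyLipschitz hh
        simpa [dd] using this
      have hl : LocallyLipschitz fun x : Euc n => ⟪v, x⟫ :=
        (innerSL ℝ v).lipschitz.locallyLipschitz
      have e1 := ll_LL hφ hl hh
      have e2 : ∀ i x, dd (eb i) (fun x : Euc n => ⟪v, x⟫) x = v i := by
        intro i x
        have : fderiv ℝ (fun x : Euc n => ⟪v, x⟫) x = innerSL ℝ v := (innerSL ℝ v).fderiv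
        rw [dd, this]; simp [eb, EuclideanSpace.inner_single_right]
      simp_rw [e2] at e1
      rw [integral_finsetSum _ fun i _ => ((hh.dd (eb i)).int_nu hφ.continuous).const_mul _] at e1
      simp_rw [integral_const_mul, ← hvi] at e1
      have e3 : ∑ i, v i * v i = ‖v‖ ^ 2 := by rw [hvn]; simp_rw [sq]
      rw [e3] at e1
      set E := ∫ x, ⟪v, x⟫ ∂(nu φ) with hE
      have i2 : Integrable (fun x => ⟪v, x⟫ ^ 2) (nu φ) := by
        refine pot_int_of_le hp (by fun_prop) (2 * ‖v‖ ^ 2) 1 fun x => ?_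
        rw [abs_pow, one_mul]
        have := Real.quadratic_le_exp_of_nonneg (norm_nonneg x)
        have h4 := pow_le_pow_left₀ (abs_nonneg _) (abs_real_inner_le_norm v x) 2
        rw [mul_pow] at h4
        nlinarith [sq_nonneg ‖v‖, norm_nonneg x]
      have hfm : MemLp (fun x => ⟪v, x⟫) 2 (nu φ) :=
        (memLp_two_iff_integrable_sq (by fun_prop)).2 i2
      have hf1 : Integrable (fun x => ⟪v, x⟫) (nu φ) := hfm.integrable (by norm_num)
      have h0m : MemLp (fun x => ⟪v, x⟫ - E) 2 (nu φ) := hfm.sub (memLp_const E)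
      have hVe : ∫ x, (⟪v, x⟫ - E) ^ 2 ∂(nu φ) = ∫ x, ⟪v, x⟫ ^ 2 ∂(nu φ) - E ^ 2 := by
        have : ∀ x, (⟪v, x⟫ - E) ^ 2 = ⟪v, x⟫ ^ 2 - 2 * E * ⟪v, x⟫ + E ^ 2 := fun x => by ring
        simp_rw [this]
        rw [integral_add (by exact hfm.integrable_sq.sub (hf1.const_mul _)) (integrable_const _),
          integral_sub hfm.integrable_sq (hf1.const_mul _), integral_const_mul, ← hE]
        simp; ring
      have e4 : ∫ x, (⟪v, x⟫ - E) * LL φ h x ∂(nu φ) = ∫ x, ⟪v, x⟫ * LL φ h x ∂(nu φ) := by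
        simp_rw [sub_mul]
        rw [integral_sub (by exact hfm.integrable_mul hLm) (hLi.const_mul _), integral_const_mul, e0]; simp
      have c := (cs_dom (h0m.integrable_mul hLm).aestronglyMeasurable h0m.integrable_sq hLm.integrable_sq
          (Eventually.of_forall fun x => by positivity) (Eventually.of_forall fun x => by positivity)
          (Eventually.of_forall fun x => by simp [mul_pow])).2
      have c2 : (‖v‖ ^ 2) ^ 2 ≤ κ * ‖v‖ ^ 2 * L := by
        have : (∫ x, (⟪v, x⟫ - E) * LL φ h x ∂(nu φ)) ^ 2 = (‖v‖ ^ 2) ^ 2 := by rw [e4, e1]; ring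
        rw [← this]
        refine c.trans ?_
        rw [hVe]
        exact mul_le_mul_of_nonneg_right (cov_quad hp v) hL0
      rcases eq_or_lt_of_le (sq_nonneg ‖v‖) with h | h
      · rw [← h]; positivity
      · nlinarith
    have : 0 < 1 + t * C := by positivity
    rw [div_mul_eq_mul_div, le_div_iff₀ this]
    nlinarith [mul_le_mul_of_nonneg_left hb hC0]
  have h1 : C ≤ (C + κ) / (1 + t * C) := poincareConst_le hQ
  rw [le_div_iff₀ (by positivity)] at h1
  rw [le_div_iff₀ (Real.sqrt_pos.2 ht)]
  refine Real.le_sqrt_of_sq_le ?_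
  rw [mul_pow, Real.sq_sqrt ht.le]
  nlinarith

end PartD2

open MeasureTheory Real
open scoped ENNReal RealInnerProductSpace

noncomputable section PartG0
open scoped ContDiff Convolution Topology
open Filter ProbabilityTheory

/-- variance functional -/
def va {α : Type*} [MeasurableSpace α] (ν : Measure α) (f : α → ℝ) : ℝ :=
  ∫ x, f x ^ 2 ∂ν - (∫ x, f x ∂ν) ^ 2

/-- action of a kernel -/
def ka {α : Type*} [MeasurableSpace α] (P : Kernel α α) (f : α → ℝ) (x : α) : ℝ := ∫ y, f y ∂(P x)

variable {α : Type*} [MeasurableSpace α]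

lemma va_eq {ν : Measure α} [IsProbabilityMeasure ν] {f : α → ℝ} (hf : MemLp f 2 ν) (c : ℝ) :
    ∫ x, (f x - c) ^ 2 ∂ν = va ν f + (∫ x, f x ∂ν - c) ^ 2 := by
  have hf1 : Integrable f ν := hf.integrable (by norm_num)
  have : ∀ x, (f x - c) ^ 2 = f x ^ 2 - 2 * c * f x + c ^ 2 := fun x => by ring
  simp_rw [this]
  rw [integral_add (by exact hf.integrable_sq.sub (hf1.const_mul _)) (integrable_const _),
    integral_sub hf.integrable_sq (hf1.const_mul _), integral_const_mul, va]
  simp; ring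

lemma va_eq' {ν : Measure α} [IsProbabilityMeasure ν] {f : α → ℝ} (hf : MemLp f 2 ν) :
    va ν f = ∫ x, (f x - ∫ y, f y ∂ν) ^ 2 ∂ν := by rw [va_eq hf]; simp

lemma va_nonneg {ν : Measure α} [IsProbabilityMeasure ν] {f : α → ℝ} (hf : MemLp f 2 ν) :
    0 ≤ va ν f := by rw [va_eq' hf]; exact integral_nonneg fun x => by positivity

lemma va_le {ν : Measure α} [IsProbabilityMeasure ν] {f : α → ℝ} (hf : MemLp f 2 ν) (c : ℝ) :
    va ν f ≤ ∫ x, (f x - c) ^ 2 ∂ν := by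
  rw [va_eq hf c]; nlinarith [sq_nonneg (∫ x, f x ∂ν - c)]

lemma va_sub_const {ν : Measure α} [IsProbabilityMeasure ν] {f : α → ℝ} (hf : MemLp f 2 ν) (c : ℝ) :
    va ν (fun x => f x - c) = va ν f := by
  have hf1 : Integrable f ν := hf.integrable (by norm_num)
  rw [va, va_eq hf c, integral_sub hf1 (integrable_const _)]; simp

lemma va_const_mul {ν : Measure α} {f : α → ℝ} (c : ℝ) :
    va ν (fun x => c * f x) = c ^ 2 * va ν f := by
  simp_rw [va, mul_pow, integral_const_mul]; ring

/-- Cauchy-Schwarz -/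
lemma cs_mul {ν : Measure α} {f g : α → ℝ} (hf : MemLp f 2 ν) (hg : MemLp g 2 ν) :
    (∫ x, f x * g x ∂ν) ^ 2 ≤ (∫ x, f x ^ 2 ∂ν) * ∫ x, g x ^ 2 ∂ν :=
  (cs_dom (hf.integrable_mul hg).aestronglyMeasurable hf.integrable_sq hg.integrable_sq
    (Eventually.of_forall fun x => by positivity) (Eventually.of_forall fun x => by positivity)
    (Eventually.of_forall fun x => by simp [mul_pow])).2

lemma am_mul {ν : Measure α} {f g : α → ℝ} (hf : MemLp f 2 ν) (hg : MemLp g 2 ν) :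
    2 * ∫ x, f x * g x ∂ν ≤ (∫ x, f x ^ 2 ∂ν) + ∫ x, g x ^ 2 ∂ν := by
  rw [← integral_const_mul, ← integral_add hf.integrable_sq hg.integrable_sq]
  refine integral_mono ((hf.integrable_mul hg).const_mul 2) (hf.integrable_sq.add hg.integrable_sq) fun x => ?_
  simp only [Pi.mul_apply, Pi.add_apply]
  nlinarith [sq_nonneg (f x - g x)]

lemma cov_le {ν : Measure α} [IsProbabilityMeasure ν] {f g : α → ℝ} (hf : MemLp f 2 ν) (hg : MemLp g 2 ν) :
    (∫ x, f x * g x ∂ν - (∫ x, f x ∂ν) * ∫ x, g x ∂ν) ^ 2 ≤ va ν f * va ν g := by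
  set a := ∫ x, f x ∂ν
  set b := ∫ x, g x ∂ν
  have hf1 : Integrable f ν := hf.integrable (by norm_num)
  have hg1 : Integrable g ν := hg.integrable (by norm_num)
  have hfg : Integrable (fun x => f x * g x) ν := hf.integrable_mul hg
  have : ∫ x, f x * g x ∂ν - a * b = ∫ x, (f x - a) * (g x - b) ∂ν := by
    have e : ∀ x, (f x - a) * (g x - b) = f x * g x - b * f x - a * g x + a * b := fun x => by ring
    simp_rw [e]
    rw [integral_add (by exact (hfg.sub (hf1.const_mul _)).sub (hg1.const_mul _)) (integrable_const _),
      integral_sub (by exact hfg.sub (hf1.const_mul _)) (hg1.const_mul _),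
      integral_sub hfg (hf1.const_mul _), integral_const_mul, integral_const_mul]
    simp; ring
  rw [this, va_eq' hf, va_eq' hg]
  exact cs_mul (hf.sub (memLp_const a)) (hg.sub (memLp_const b))

/-- variance decreases under 1-Lipschitz maps -/
lemma va_contract {ν : Measure α} [IsProbabilityMeasure ν] {f g : α → ℝ} (hf : MemLp f 2 ν)
    (hg : MemLp g 2 ν) {k : ℝ → ℝ} (hk : ∀ a b, |k a - k b| ≤ |a - b|) (hgf : ∀ x, g x = k (f x)) :
    va ν g ≤ va ν f := by
  rw [va_eq' hf]
  refine (va_le hg (k (∫ y, f y ∂ν))).trans ?_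
  refine integral_mono (hg.sub (memLp_const _)).integrable_sq (hf.sub (memLp_const _)).integrable_sq fun x => ?_
  simp only [Pi.sub_apply, hgf]
  exact sq_le_sq.2 (hk _ _)

structure Bayes (μ m : Measure α) (P Q : Kernel α α) : Prop where
  pm : IsProbabilityMeasure μ
  pm' : IsProbabilityMeasure m
  mP : IsMarkovKernel P
  mQ : IsMarkovKernel Q
  eq : μ ⊗ₘ P = (m ⊗ₘ Q).map Prod.swap

variable {μ m : Measure α} {P Q : Kernel α α}

lemma Bayes.symm (B : Bayes μ m P Q) : Bayes m μ Q P := by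
  refine ⟨B.pm', B.pm, B.mQ, B.mP, ?_⟩
  rw [B.eq, Measure.map_map measurable_swap measurable_swap, Prod.swap_swap_eq, Measure.map_id]

lemma Bayes.int_fst (B : Bayes μ m P Q) {f : α → ℝ} (hf : Integrable f μ) :
    Integrable (fun z : α × α => f z.1) (μ ⊗ₘ P) := by
  have := B.pm; have := B.mP
  have e := Measure.fst_compProd μ P
  rw [← e, Measure.fst] at hf
  exact hf.comp_measurable measurable_fst

lemma Bayes.int_snd (B : Bayes μ m P Q) {f : α → ℝ} (hf : Integrable f m) :
    Integrable (fun z : α × α => f z.2) (μ ⊗ₘ P) := by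
  rw [B.eq]
  have := B.symm.int_fst hf
  exact (integrable_map_equiv MeasurableEquiv.prodComm _).2 this

lemma Bayes.swap (B : Bayes μ m P Q) {F : α × α → ℝ} (hF : Integrable F (μ ⊗ₘ P)) :
    ∫ x, ∫ y, F (x, y) ∂(P x) ∂μ = ∫ y, ∫ x, F (x, y) ∂(Q y) ∂m := by
  have := B.pm; have := B.mP; have := B.pm'; have := B.mQ
  rw [← Measure.integral_compProd hF, B.eq]
  have h2 : Integrable (fun z => F z.swap) (m ⊗ₘ Q) := by
    rw [B.eq] at hF
    exact hF.comp_measurable measurable_swap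
  have h3 := Measure.integral_compProd h2
  simp only [Prod.swap_prod_mk] at h3
  rw [← h3]
  exact integral_map_equiv MeasurableEquiv.prodComm F

lemma ka_meas {f : α → ℝ} (hf : Measurable f) (P : Kernel α α) : Measurable (ka P f) :=
  (hf.stronglyMeasurable.integral_kernel (κ := P)).measurable

lemma Bayes.ae_int (B : Bayes μ m P Q) {f : α → ℝ} (hf : Integrable f m) :
    ∀ᵐ x ∂μ, Integrable f (P x) := by
  have := B.pm; have := B.mP
  have h := B.int_snd hf
  exact ((Measure.integrable_compProd_iff h.aestronglyMeasurable).1 h).1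

lemma Bayes.ka_int (B : Bayes μ m P Q) {f : α → ℝ} (hfm : Measurable f) (hf : Integrable f m) :
    Integrable (ka P f) μ := by
  have := B.pm; have := B.mP
  have h := B.int_snd hf
  have h2 := ((Measure.integrable_compProd_iff h.aestronglyMeasurable).1 h).2
  refine h2.mono' (ka_meas hfm P).aestronglyMeasurable (Eventually.of_forall fun x => ?_)
  exact norm_integral_le_integral_norm _

lemma Bayes.ka_integral (B : Bayes μ m P Q) {f : α → ℝ} (hf : Integrable f m) :
    ∫ x, ka P f x ∂μ = ∫ y, f y ∂m := by
  have := B.mQ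
  rw [show ∫ x, ka P f x ∂μ = ∫ x, ∫ y, f y ∂(P x) ∂μ from rfl, B.swap (F := fun z => f z.2) (B.int_snd hf)]
  simp

/-- adjointness -/
lemma Bayes.adj (B : Bayes μ m P Q) {f h : α → ℝ}
    (hF : Integrable (fun z : α × α => f z.1 * h z.2) (μ ⊗ₘ P)) :
    ∫ x, f x * ka P h x ∂μ = ∫ y, ka Q f y * h y ∂m := by
  have := B.swap hF
  simp only [integral_const_mul, integral_mul_const] at this
  exact this

lemma Bayes.adj2 (B : Bayes μ m P Q) {f h : α → ℝ} (hf : MemLp f 2 μ) (hh : MemLp h 2 m) :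
    ∫ x, f x * ka P h x ∂μ = ∫ y, ka Q f y * h y ∂m := by
  refine B.adj ?_
  have h1 := B.int_fst hf.integrable_sq
  have h2 := B.int_snd hh.integrable_sq
  have m1 : AEStronglyMeasurable (fun z : α × α => f z.1) (μ ⊗ₘ P) := by
    have := B.pm
    exact (B.int_fst (hf.integrable (by norm_num))).aestronglyMeasurable
  have m2 : AEStronglyMeasurable (fun z : α × α => h z.2) (μ ⊗ₘ P) := by
    have := B.pm'
    exact (B.int_snd (hh.integrable (by norm_num))).aestronglyMeasurable
  exact ((memLp_two_iff_integrable_sq m1).2 h1).integrable_mul ((memLp_two_iff_integrable_sq m2).2 h2)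

lemma Bayes.ae_sq (B : Bayes μ m P Q) {f : α → ℝ} (hfm : Measurable f) (hf : MemLp f 2 m) :
    ∀ᵐ x ∂μ, ka P f x ^ 2 ≤ ka P (fun y => f y ^ 2) x := by
  have := B.mP
  filter_upwards [B.ae_int hf.integrable_sq] with x hx
  have := va_nonneg ((memLp_two_iff_integrable_sq hfm.aestronglyMeasurable).2 hx)
  rw [va] at this; unfold ka; linarith

lemma Bayes.ka_L2 (B : Bayes μ m P Q) {f : α → ℝ} (hfm : Measurable f) (hf : MemLp f 2 m) :
    MemLp (ka P f) 2 μ := by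
  rw [memLp_two_iff_integrable_sq (ka_meas hfm P).aestronglyMeasurable]
  refine (B.ka_int (hfm.pow_const 2) hf.integrable_sq).mono'
    ((ka_meas hfm P).pow_const 2).aestronglyMeasurable ?_
  filter_upwards [B.ae_sq hfm hf] with x hx
  rw [Real.norm_of_nonneg (by positivity)]; exact hx

/-- variance decomposition -/
lemma Bayes.va_int (B : Bayes μ m P Q) {f : α → ℝ} (hfm : Measurable f) (hf : MemLp f 2 m) :
    Integrable (fun x => va (P x) f) μ ∧
    ∫ x, va (P x) f ∂μ = ∫ y, f y ^ 2 ∂m - ∫ x, ka P f x ^ 2 ∂μ := by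
  have i1 := B.ka_int (hfm.pow_const 2) hf.integrable_sq
  have i2 := (B.ka_L2 hfm hf).integrable_sq
  have e : (fun x => va (P x) f) = fun x => ka P (fun y => f y ^ 2) x - ka P f x ^ 2 := rfl
  rw [e]
  refine ⟨i1.sub i2, ?_⟩
  rw [integral_sub i1 i2, B.ka_integral hf.integrable_sq]

lemma Bayes.ka_sq_le (B : Bayes μ m P Q) {f : α → ℝ} (hfm : Measurable f) (hf : MemLp f 2 m) :
    ∫ x, ka P f x ^ 2 ∂μ ≤ ∫ y, f y ^ 2 ∂m := by
  rw [← B.ka_integral hf.integrable_sq]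
  exact integral_mono_ae (B.ka_L2 hfm hf).integrable_sq (B.ka_int (hfm.pow_const 2) hf.integrable_sq)
    (B.ae_sq hfm hf)

/-- `‖Pf‖² - ‖QPf‖² ≤ ‖f‖² - ‖Pf‖²` -/
lemma Bayes.gap (B : Bayes μ m P Q) {f : α → ℝ} (hfm : Measurable f) (hf : MemLp f 2 m) :
    2 * ∫ x, ka P f x ^ 2 ∂μ ≤ ∫ y, f y ^ 2 ∂m + ∫ y, ka Q (ka P f) y ^ 2 ∂m := by
  have h1 := B.ka_L2 hfm hf
  have h2 := B.symm.ka_L2 (ka_meas hfm P) h1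
  have e := B.adj2 h1 hf
  have : ∫ x, ka P f x ^ 2 ∂μ = ∫ y, ka Q (ka P f) y * f y ∂m := by
    rw [← e]; congr 1; ext x; ring
  rw [this]
  linarith [am_mul h2 hf]

end PartG0

open MeasureTheory Real
open scoped ENNReal RealInnerProductSpace

noncomputable section PartG1
open scoped ContDiff Convolution Topology
open Filter ProbabilityTheory

variable {n : ℕ}

/-- measurable functions with exponential growth -/
structure EG (f : Euc n → ℝ) : Prop where
  meas : Measurable f
  bd : ∃ C a : ℝ, 0 ≤ C ∧ 0 ≤ a ∧ ∀ x, |f x| ≤ C * Real.exp (a * ‖x‖)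

lemma EG.mul {f g : Euc n → ℝ} (hf : EG f) (hg : EG g) : EG fun x => f x * g x := by
  obtain ⟨C, a, hC, ha, h1⟩ := hf.bd
  obtain ⟨D, b, hD, hb, h2⟩ := hg.bd
  refine ⟨hf.meas.mul hg.meas, C * D, a + b, by positivity, by positivity, fun x => ?_⟩
  rw [abs_mul, add_mul, Real.exp_add]
  calc |f x| * |g x| ≤ (C * exp (a * ‖x‖)) * (D * exp (b * ‖x‖)) :=
        mul_le_mul (h1 x) (h2 x) (abs_nonneg _) (by positivity)
    _ = _ := by ring

lemma EG.sq {f : Euc n → ℝ} (hf : EG f) : EG fun x => f x ^ 2 := by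
  simpa only [_root_.sq] using hf.mul hf

lemma EG.of_bdd {f : Euc n → ℝ} (hf : Measurable f) {M : ℝ} (h : ∀ x, |f x| ≤ M) : EG f :=
  ⟨hf, M, 0, (abs_nonneg _).trans (h 0), le_rfl, fun x => by simpa using h x⟩

lemma EG.const (c : ℝ) : EG fun _ : Euc n => c := EG.of_bdd measurable_const (M := |c|) fun _ => le_rfl

lemma EG.add {f g : Euc n → ℝ} (hf : EG f) (hg : EG g) : EG fun x => f x + g x := by
  obtain ⟨C, a, hC, ha, h1⟩ := hf.bd
  obtain ⟨D, b, hD, hb, h2⟩ := hg.bd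
  refine ⟨hf.meas.add hg.meas, C + D, a + b, by positivity, by positivity, fun x => ?_⟩
  have e1 : exp (a * ‖x‖) ≤ exp ((a + b) * ‖x‖) := exp_le_exp.2 (by nlinarith [norm_nonneg x, mul_nonneg hb (norm_nonneg x)])
  have e2 : exp (b * ‖x‖) ≤ exp ((a + b) * ‖x‖) := exp_le_exp.2 (by nlinarith [norm_nonneg x, mul_nonneg ha (norm_nonneg x)])
  calc |f x + g x| ≤ |f x| + |g x| := abs_add_le _ _
    _ ≤ C * exp (a * ‖x‖) + D * exp (b * ‖x‖) := add_le_add (h1 x) (h2 x)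
    _ ≤ _ := by nlinarith [mul_le_mul_of_nonneg_left e1 hC, mul_le_mul_of_nonneg_left e2 hD]

lemma EG.neg {f : Euc n → ℝ} (hf : EG f) : EG fun x => - f x := by
  simpa using (EG.const (-1)).mul hf

lemma EG.sub {f g : Euc n → ℝ} (hf : EG f) (hg : EG g) : EG fun x => f x - g x := by
  simpa only [sub_eq_add_neg] using hf.add hg.neg

lemma EG.int {f φ : Euc n → ℝ} {m : ℝ} (hf : EG f) (hp : Pot φ m) : Integrable f (nu φ) := by
  obtain ⟨C, a, _, _, h1⟩ := hf.bd
  exact pot_int_of_le hp hf.meas.aestronglyMeasurable C a h1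

lemma EG.L2 {f φ : Euc n → ℝ} {m : ℝ} (hf : EG f) (hp : Pot φ m) : MemLp f 2 (nu φ) :=
  (memLp_two_iff_integrable_sq hf.meas.aestronglyMeasurable).2 (hf.sq.int hp)

/-- Lipschitz with real constant -/
def Li (L : ℝ) (g : Euc n → ℝ) : Prop := ∀ x y, |g x - g y| ≤ L * ‖x - y‖

lemma Li.lip {L : ℝ} {g : Euc n → ℝ} (hg : Li L g) : LipschitzWith L.toNNReal g := by
  refine LipschitzWith.of_dist_le_mul fun x y => ?_
  rw [dist_eq_norm, dist_eq_norm]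
  exact (hg x y).trans (mul_le_mul_of_nonneg_right (Real.le_coe_toNNReal L) (norm_nonneg _))

lemma Li.of_lip {K : NNReal} {g : Euc n → ℝ} (hg : LipschitzWith K g) : Li K g := fun x y => by
  have := hg.dist_le_mul x y
  rwa [dist_eq_norm, dist_eq_norm] at this

lemma Li.cont {L : ℝ} {g : Euc n → ℝ} (hg : Li L g) : Continuous g := hg.lip.continuous

lemma Li.const_mul {L : ℝ} {g : Euc n → ℝ} (hg : Li L g) (c : ℝ) : Li (|c| * L) fun x => c * g x := by
  intro x y
  rw [← mul_sub, abs_mul, mul_assoc]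
  exact mul_le_mul_of_nonneg_left (hg x y) (abs_nonneg _)

lemma Li.sub_const {L : ℝ} {g : Euc n → ℝ} (hg : Li L g) (c : ℝ) : Li L fun x => g x - c := by
  intro x y; simpa using hg x y

lemma Li.bd {L : ℝ} {g : Euc n → ℝ} (hg : Li L g) (x : Euc n) : |g x| ≤ |g 0| + L * ‖x‖ := by
  have := hg x 0
  rw [sub_zero] at this
  have h2 := abs_sub_abs_le_abs_sub (g x) (g 0)
  linarith

lemma Li.expEG {L : ℝ} {g : Euc n → ℝ} (hL : 0 ≤ L) (hg : Li L g) : EG fun x => exp (g x) := by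
  refine ⟨hg.cont.measurable.exp, exp |g 0|, L, (exp_pos _).le, hL, fun x => ?_⟩
  rw [abs_of_pos (exp_pos _), ← exp_add]
  exact exp_le_exp.2 ((le_abs_self _).trans (hg.bd x))

lemma Li.eg {L : ℝ} {g : Euc n → ℝ} (hL : 0 ≤ L) (hg : Li L g) : EG g := by
  refine ⟨hg.cont.measurable, exp |g 0|, L, (exp_pos _).le, hL, fun x => ?_⟩
  rw [← exp_add]
  refine (hg.bd x).trans ?_
  linarith [add_one_le_exp (|g 0| + L * ‖x‖)]

lemma Li.grad {L : ℝ} {g : Euc n → ℝ} (hL : 0 ≤ L) (hg : Li L g) (x : Euc n) : ‖gradient g x‖ ≤ L := by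
  rw [grad_norm]
  have := norm_fderiv_le_of_lipschitz ℝ hg.lip (x₀ := x)
  rwa [Real.coe_toNNReal _ hL] at this

lemma Li.grad_exp {L : ℝ} {g : Euc n → ℝ} (hL : 0 ≤ L) (hg : Li L g) (x : Euc n) :
    ‖gradient (fun x => exp (g x)) x‖ ≤ L * exp (g x) := by
  rw [grad_norm]
  by_cases hd : DifferentiableAt ℝ g x
  · rw [fderiv_exp hd, norm_smul, mul_comm, Real.norm_of_nonneg (exp_pos _).le]
    have := hg.grad hL x
    rw [grad_norm] at this
    exact mul_le_mul_of_nonneg_right this (exp_pos _).le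
  · rw [fderiv_zero_of_not_differentiableAt]
    · simp; positivity
    · intro h
      apply hd
      have := h.log (exp_pos _).ne'
      simpa using this

lemma Li.grad_int {φ : Euc n → ℝ} [IsProbabilityMeasure (nu φ)] {L : ℝ} {g : Euc n → ℝ} (hL : 0 ≤ L)
    (hg : Li L g) : Integrable (fun x => ‖gradient g x‖ ^ 2) (nu φ) ∧
      ∫ x, ‖gradient g x‖ ^ 2 ∂(nu φ) ≤ L ^ 2 := by
  have hb : ∀ x, ‖gradient g x‖ ^ 2 ≤ L ^ 2 := fun x => pow_le_pow_left₀ (norm_nonneg _) (hg.grad hL x) 2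
  have hi : Integrable (fun x => ‖gradient g x‖ ^ 2) (nu φ) :=
    (integrable_const (L ^ 2)).mono' ((grad_meas g).pow_const 2).aestronglyMeasurable
      (Eventually.of_forall fun x => by rw [Real.norm_of_nonneg (by positivity)]; exact hb x)
  refine ⟨hi, ?_⟩
  have := integral_mono hi (integrable_const (L ^ 2)) hb
  simpa using this

lemma Li.va_le {φ : Euc n → ℝ} [IsProbabilityMeasure (nu φ)] {L c : ℝ} {g : Euc n → ℝ} (hL : 0 ≤ L)
    (hg : Li L g) (hc : c ∈ poincareSet (nu φ)) : va (nu φ) g ≤ c * L ^ 2 :=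
  (hc.2 g hg.lip.locallyLipschitz (hg.grad_int hL).1).trans
    (mul_le_mul_of_nonneg_left (hg.grad_int hL).2 hc.1)

lemma Li.va_exp {φ : Euc n → ℝ} {m : ℝ} (hp : Pot φ m) {L c : ℝ}
    {g : Euc n → ℝ} (hL : 0 ≤ L) (hg : Li L g) (hc : c ∈ poincareSet (nu φ)) :
    va (nu φ) (fun x => exp (g x)) ≤ c * L ^ 2 * ∫ x, exp (2 * g x) ∂(nu φ) := by
  have hll : LocallyLipschitz fun x => exp (g x) :=
    (Real.contDiff_exp (n := 1)).locallyLipschitz.comp hg.lip.locallyLipschitz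
  have hb : ∀ x, ‖gradient (fun x => exp (g x)) x‖ ^ 2 ≤ L ^ 2 * exp (2 * g x) := fun x => by
    have := pow_le_pow_left₀ (norm_nonneg _) (hg.grad_exp hL x) 2
    rwa [mul_pow, ← Real.exp_nat_mul] at this
  have h2 : Integrable (fun x => L ^ 2 * exp (2 * g x)) (nu φ) :=
    (((hg.const_mul 2).expEG (by positivity)).int hp).const_mul _
  have hi : Integrable (fun x => ‖gradient (fun x => exp (g x)) x‖ ^ 2) (nu φ) :=
    h2.mono' ((grad_meas _).pow_const 2).aestronglyMeasurable
      (Eventually.of_forall fun x => by rw [Real.norm_of_nonneg (by positivity)]; exact hb x)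
  refine (hc.2 _ hll hi).trans ?_
  rw [mul_assoc]
  have e := integral_mono hi h2 hb
  rw [integral_const_mul] at e
  exact mul_le_mul_of_nonneg_left e hc.1

/-- Laplace bound -/
lemma laplace {φ : Euc n → ℝ} {m : ℝ} (hp : Pot φ m) [IsProbabilityMeasure (nu φ)] {L c : ℝ}
    {g : Euc n → ℝ} (hL : 0 ≤ L) (hg : Li L g) (hc : c ∈ poincareSet (nu φ)) (h1 : c * L ^ 2 ≤ 1) :
    ∫ x, exp (g x - ∫ y, g y ∂(nu φ)) ∂(nu φ) ≤ exp (2 * c * L ^ 2) := by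
  set E := ∫ y, g y ∂(nu φ) with hE
  set z : Euc n → ℝ := fun x => (1/2) * (g x - E) with hz
  have hzL : Li (L / 2) z := by
    have := (hg.sub_const E).const_mul (1/2)
    rw [abs_of_pos (by norm_num)] at this
    convert this using 1; ring
  set a := c * L ^ 2 / 4 with ha
  have ha0 : 0 ≤ a := by have := hc.1; positivity
  have ha1 : a ≤ 1 / 4 := by rw [ha]; linarith
  have e2z : ∀ x, exp (2 * z x) = exp (g x - E) := fun x => by rw [hz]; congr 1; ring
  have hv := hzL.va_exp hp (by positivity) hc
  have hvz := hzL.va_le (φ := φ) (by positivity) hc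
  have ec : c * (L / 2) ^ 2 = a := by rw [ha]; ring
  rw [ec] at hv hvz
  simp_rw [← e2z]
  set M := ∫ x, exp (2 * z x) ∂(nu φ) with hM
  have hM0 : 0 ≤ M := integral_nonneg fun x => (exp_pos _).le
  have zE := hzL.eg (by positivity)
  have zX := hzL.expEG (by positivity)
  have hzint : ∫ x, z x ∂(nu φ) = 0 := by
    rw [hz, integral_const_mul, integral_sub ((hg.eg hL).int hp) (integrable_const _)]
    simp [hE]
  have hcov := cov_le (zE.L2 hp) (zX.L2 hp)
  rw [hzint, zero_mul, sub_zero] at hcov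
  set mm := √M with hmm
  have hmm2 : mm ^ 2 = M := Real.sq_sqrt hM0
  have hmm0 : 0 ≤ mm := Real.sqrt_nonneg _
  have hva0 := va_nonneg (zX.L2 hp)
  have hc2 : ∫ x, z x * exp (z x) ∂(nu φ) ≤ a * mm := by
    refine (abs_le_of_sq_le_sq' ?_ (by positivity)).2
    refine hcov.trans ?_
    rw [mul_pow, hmm2, _root_.sq, mul_assoc]
    exact mul_le_mul hvz hv hva0 ha0
  set I := ∫ x, exp (z x) ∂(nu φ) with hI
  have hI0 : 0 ≤ I := integral_nonneg fun x => (exp_pos _).le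
  have hI1 : I - 1 ≤ a * mm := by
    refine le_trans ?_ hc2
    have : I - 1 = ∫ x, (exp (z x) - 1) ∂(nu φ) := by
      rw [integral_sub (zX.int hp) (integrable_const _)]; simp [hI]
    rw [this]
    refine integral_mono ((zX.sub (EG.const 1)).int hp) ((zE.mul zX).int hp) fun x => ?_
    have h3 := add_one_le_exp (-z x)
    have h4 : exp (-z x) * exp (z x) = 1 := by rw [← exp_add]; simp
    simp only
    nlinarith [exp_pos (z x)]
  have hvM : va (nu φ) (fun x => exp (z x)) = M - I ^ 2 := by
    rw [va, hM, hI]; congr 2; ext x; rw [← Real.exp_nat_mul]; norm_num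
  rw [hvM] at hv
  have h5 : mm * (1 - 2 * a) ≤ 1 := by
    have : ((1 - a) * mm) ^ 2 ≤ (1 + a * mm) ^ 2 := by
      have : I ^ 2 ≤ (1 + a * mm) ^ 2 := pow_le_pow_left₀ hI0 (by linarith) 2
      nlinarith [mul_nonneg ha0 (mul_nonneg hmm0 hmm0), mul_nonneg (mul_nonneg ha0 (by linarith : 0 ≤ 1 - a)) (sq_nonneg mm)]
    have := (abs_le_of_sq_le_sq' this (by positivity)).2
    nlinarith
  have h6 : mm ≤ exp (4 * a) := by
    have := add_one_le_exp (4 * a)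
    by_contra hcon
    push Not at hcon
    have : 1 + 4 * a < mm := by linarith
    nlinarith
  calc M = mm ^ 2 := hmm2.symm
    _ ≤ exp (4 * a) ^ 2 := pow_le_pow_left₀ hmm0 h6 2
    _ = exp (2 * c * L ^ 2) := by rw [← Real.exp_nat_mul, ha]; congr 1; push_cast; ring

/-- `∫ e^{g} ≤ e^{∫ g + 2 c L^2}` -/
lemma laplace' {φ : Euc n → ℝ} {m : ℝ} (hp : Pot φ m) [IsProbabilityMeasure (nu φ)] {L c : ℝ}
    {g : Euc n → ℝ} (hL : 0 ≤ L) (hg : Li L g) (hc : c ∈ poincareSet (nu φ)) (h1 : c * L ^ 2 ≤ 1) :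
    ∫ x, exp (g x) ∂(nu φ) ≤ exp (∫ y, g y ∂(nu φ) + 2 * c * L ^ 2) := by
  have := laplace hp hL hg hc h1
  simp_rw [exp_sub, div_eq_mul_inv] at this
  rw [integral_mul_const, ← div_eq_mul_inv, div_le_iff₀ (exp_pos _)] at this
  rw [exp_add, mul_comm]; exact this

lemma chain {k : Euc n → ℝ} {L c r : ℝ} (hr : 0 < r)
    (h : ∀ x v : Euc n, ‖v‖ ≤ r → |k (x + v) - k x| ≤ L * ‖v‖ * exp (c * ‖v‖ ^ 2)) : Li L k := by
  have key : ∀ x v : Euc n, |k (x + v) - k x| ≤ L * ‖v‖ := by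
    intro x v
    have step : ∀ N : ℕ, ‖v‖ / (N + 1) ≤ r → |k (x + v) - k x| ≤ L * ‖v‖ * exp (c * (‖v‖ / (N + 1)) ^ 2) := by
      intro N hN
      set w : Euc n := ((N : ℝ) + 1)⁻¹ • v with hw
      have hwn : ‖w‖ = ‖v‖ / (N + 1) := by
        rw [hw, norm_smul, Real.norm_of_nonneg (by positivity)]; field_simp
      have ind : ∀ j : ℕ, |k (x + (j : ℝ) • w) - k x| ≤ j * (L * ‖w‖ * exp (c * ‖w‖ ^ 2)) := by
        intro j
        induction j with
        | zero => simp
        | succ j ih =>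
          have h2 := h (x + (j : ℝ) • w) w (by rw [hwn]; exact hN)
          have e : x + ((j + 1 : ℕ) : ℝ) • w = x + (j : ℝ) • w + w := by
            push_cast; rw [add_smul, one_smul, add_assoc]
          rw [e]
          calc _ ≤ |k (x + (j : ℝ) • w + w) - k (x + (j : ℝ) • w)| + |k (x + (j : ℝ) • w) - k x| :=
                abs_sub_le _ _ _
            _ ≤ _ := by push_cast; linarith
      have := ind (N + 1)
      have e1 : ((N + 1 : ℕ) : ℝ) • w = v := by
        rw [hw, smul_smul]; push_cast; rw [mul_inv_cancel₀ (by positivity), one_smul]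
      rw [e1, hwn] at this
      refine this.trans (le_of_eq ?_)
      push_cast; field_simp
    have lim : Tendsto (fun N : ℕ => ‖v‖ / ((N : ℝ) + 1)) atTop (𝓝 0) :=
      Tendsto.div_atTop tendsto_const_nhds (tendsto_atTop_add_const_right _ _ tendsto_natCast_atTop_atTop)
    have lim2 : Tendsto (fun N : ℕ => L * ‖v‖ * exp (c * (‖v‖ / ((N : ℝ) + 1)) ^ 2)) atTop (𝓝 (L * ‖v‖ * exp (c * 0 ^ 2))) :=
      ((Real.continuous_exp.tendsto _).comp ((lim.pow 2).const_mul c)).const_mul _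
    have := ge_of_tendsto lim2 (by
      filter_upwards [lim.eventually (eventually_le_nhds hr)] with N hN using step N hN)
    simpa using this
  intro x y
  have := key y (x - y)
  simpa using this

lemma grad_of_local {k : Euc n → ℝ} {L c : ℝ} (hL : 0 ≤ L) {x : Euc n}
    (h : ∀ v : Euc n, |k (x + v) - k x| ≤ L * ‖v‖ * exp (c * ‖v‖ ^ 2)) : ‖gradient k x‖ ≤ L := by
  rw [grad_norm]
  refine le_of_forall_gt fun C hC => ?_
  obtain ⟨C', hC1, hC2⟩ := exists_between hC
  refine lt_of_le_of_lt (norm_fderiv_le_of_lip' (𝕜 := ℝ) (hL.trans hC1.le) ?_) hC2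
  have cont : Continuous fun y : Euc n => L * exp (c * ‖y - x‖ ^ 2) := by fun_prop
  have := cont.tendsto x
  simp only [sub_self, norm_zero] at this
  have h0 : L * exp (c * 0 ^ 2) < C' := by simpa using hC1
  filter_upwards [this.eventually (gt_mem_nhds h0)] with y hy
  have := h (y - x)
  rw [add_sub_cancel] at this
  rw [Real.norm_eq_abs]
  refine this.trans ?_
  nlinarith [norm_nonneg (y - x)]

/-- Lipschitz estimate for tilts -/
lemma tilt_diff {φ : Euc n → ℝ} {t : ℝ} (hp : Pot φ t) [IsProbabilityMeasure (nu φ)] {L : ℝ}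
    {g : Euc n → ℝ} (hL : 0 ≤ L) (hg : Li L g) (v : Euc n) (hv : 4 * ‖v‖ ^ 2 / t ≤ 1) :
    |(∫ x, g x * exp ⟪v, x⟫ ∂(nu φ)) / (∫ x, exp ⟪v, x⟫ ∂(nu φ)) - ∫ x, g x ∂(nu φ)|
      ≤ L / t * ‖v‖ * exp (4 / t * ‖v‖ ^ 2) := by
  have ht := hp.m_pos
  have hc := T1 hp
  have hlv : Li ‖v‖ fun x => ⟪v, x⟫ := fun x y => by
    rw [← inner_sub_right]; exact abs_real_inner_le_norm _ _
  set E := ∫ x, ⟪v, x⟫ ∂(nu φ) with hE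
  set z : Euc n → ℝ := fun x => ⟪v, x⟫ - E with hz
  have hzL : Li ‖v‖ z := hlv.sub_const E
  have gE := hg.eg hL
  have zE := hzL.eg (norm_nonneg v)
  have zX := hzL.expEG (norm_nonneg v)
  have eX : ∀ x, exp ⟪v, x⟫ = exp (z x) * exp E := fun x => by rw [← exp_add]; simp [hz]
  simp_rw [eX, ← mul_assoc]
  rw [integral_mul_const, integral_mul_const, mul_div_mul_right _ _ (exp_pos E).ne']
  set I := ∫ x, exp (z x) ∂(nu φ) with hI
  have hI1 : 1 ≤ I := by
    have h0 : ∫ x, (z x + 1) ∂(nu φ) = 1 := by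
      rw [integral_add (zE.int hp) (integrable_const _), hz,
        integral_sub ((hlv.eg (norm_nonneg v)).int hp) (integrable_const _)]
      simp [hE]
    rw [← h0]
    exact integral_mono ((zE.add (EG.const 1)).int hp) (zX.int hp) fun x => add_one_le_exp _
  have hcov := cov_le (gE.L2 hp) (zX.L2 hp)
  have h1 := hg.va_le (φ := φ) hL hc
  have h2 := hzL.va_exp hp (norm_nonneg v) hc
  have h3 : ∫ x, exp (2 * z x) ∂(nu φ) ≤ exp (8 / t * ‖v‖ ^ 2) := by
    have := laplace hp (g := fun x => 2 * ⟪v, x⟫) (L := 2 * ‖v‖) (by positivity)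
      (by simpa using hlv.const_mul 2) hc (by
        rw [mul_pow]; calc _ = 4 * ‖v‖ ^ 2 / t := by ring
          _ ≤ 1 := hv)
    rw [integral_const_mul, ← hE] at this
    have e : ∀ x, 2 * z x = 2 * ⟪v, x⟫ - 2 * E := fun x => by rw [hz]; ring
    simp_rw [e]
    refine this.trans (le_of_eq ?_)
    congr 1; ring
  have hI0 : 0 < I := by linarith
  have e1 : (∫ x, g x * exp (z x) ∂(nu φ)) / I - ∫ x, g x ∂(nu φ)
      = (∫ x, g x * exp (z x) ∂(nu φ) - (∫ x, g x ∂(nu φ)) * I) / I := by field_simp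
  rw [e1, abs_div, abs_of_pos hI0]
  refine (div_le_self (abs_nonneg _) hI1).trans ?_
  refine abs_le_of_sq_le_sq ?_ (by positivity)
  refine hcov.trans ?_
  have h4 : va (nu φ) (fun x => exp (z x)) ≤ 1 / t * ‖v‖ ^ 2 * exp (8 / t * ‖v‖ ^ 2) :=
    h2.trans (mul_le_mul_of_nonneg_left h3 (by positivity))
  refine (mul_le_mul h1 h4 (va_nonneg (zX.L2 hp)) (by positivity)).trans (le_of_eq ?_)
  have : exp (8 / t * ‖v‖ ^ 2) = exp (4 / t * ‖v‖ ^ 2) ^ 2 := by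
    rw [← Real.exp_nat_mul]; congr 1; push_cast; ring
  rw [this]; ring

end PartG1

open MeasureTheory Real
open scoped ENNReal RealInnerProductSpace

noncomputable section PartG2
open scoped ContDiff Convolution Topology
open Filter ProbabilityTheory

variable {n : ℕ}

def quad (b : ℝ) (θ : Euc n) (c : ℝ) : Euc n → ℝ := fun x => b / 2 * ‖x‖ ^ 2 - ⟪θ, x⟫ + c

lemma quad_smooth (b : ℝ) (θ : Euc n) (c : ℝ) : ContDiff ℝ ∞ (quad b θ c) := by
  unfold quad
  have h1 : ContDiff ℝ ∞ fun x : Euc n => ‖x‖ ^ 2 := contDiff_norm_sq ℝ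
  have h2 : ContDiff ℝ ∞ fun x : Euc n => (⟪θ, x⟫ : ℝ) := contDiff_const.inner ℝ contDiff_id
  exact ((contDiff_const.mul h1).sub h2).add contDiff_const

lemma quad_hess (b : ℝ) (θ : Euc n) (c : ℝ) (x v : Euc n) :
    fderiv ℝ (fderiv ℝ (quad b θ c)) x v v = b * ‖v‖ ^ 2 := by
  have h1 : ∀ x : Euc n, HasFDerivAt (quad b θ c) (b • innerSL ℝ x - innerSL ℝ θ) x := by
    intro x
    have a1 := (hasStrictFDerivAt_norm_sq x).hasFDerivAt.const_mul (b / 2)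
    have a2 : HasFDerivAt (fun x : Euc n => (⟪θ, x⟫ : ℝ)) (innerSL ℝ θ) x := (innerSL ℝ θ).hasFDerivAt
    have := (a1.sub a2).add_const c
    refine this.congr_fderiv ?_
    ext v; simp; ring
  have h2 : fderiv ℝ (quad b θ c) = fun x => (b • innerSL ℝ) x - innerSL ℝ θ := by
    ext1 x; rw [(h1 x).fderiv]; rfl
  have h3 : HasFDerivAt (fderiv ℝ (quad b θ c)) (b • innerSL ℝ : Euc n →L[ℝ] Euc n →L[ℝ] ℝ) x := by
    rw [h2]; exact (b • innerSL ℝ : Euc n →L[ℝ] Euc n →L[ℝ] ℝ).hasFDerivAt.sub_const _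
  rw [h3.fderiv]
  change b * ⟪v, v⟫ = _
  rw [real_inner_self_eq_norm_sq]

lemma pot_quad {b : ℝ} (hb : 0 < b) (θ : Euc n) (c : ℝ) : Pot (quad b θ c) b :=
  ⟨quad_smooth b θ c, hb, fun x v => (quad_hess b θ c x v).ge⟩

lemma Pot.mono {φ : Euc n → ℝ} {m m' : ℝ} (h : Pot φ m) (h0 : 0 < m') (hm : m' ≤ m) : Pot φ m' :=
  ⟨h.smooth, h0, fun x v => (mul_le_mul_of_nonneg_right hm (by positivity)).trans (h.lower x v)⟩

lemma Pot.add_quad {ψ : Euc n → ℝ} {m b : ℝ} (h : Pot ψ m) (hb : 0 < b) (θ : Euc n) (c : ℝ) :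
    Pot (fun x => ψ x + quad b θ c x) b := by
  have q := quad_smooth b θ c
  refine ⟨h.smooth.add q, hb, fun x v => ?_⟩
  have e1 : fderiv ℝ (fun x => ψ x + quad b θ c x) = fun x => fderiv ℝ ψ x + fderiv ℝ (quad b θ c) x := by
    ext1 x
    exact fderiv_add (diffAt h.smooth x) (diffAt q x)
  have d1 : DifferentiableAt ℝ (fderiv ℝ ψ) x :=
    (h.smooth.fderiv_right (m := ∞) (by simp)).differentiable (by simp) x
  have d2 : DifferentiableAt ℝ (fderiv ℝ (quad b θ c)) x :=
    (q.fderiv_right (m := ∞) (by simp)).differentiable (by simp) x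
  rw [e1, fderiv_fun_add d1 d2]
  simp only [ContinuousLinearMap.add_apply]
  rw [quad_hess]
  have := h.lower x v
  have := h.m_pos
  nlinarith [mul_nonneg this.le (sq_nonneg ‖v‖)]

lemma Pot.cont {φ : Euc n → ℝ} {m : ℝ} (h : Pot φ m) : Continuous φ := h.smooth.continuous

/-! Gaussian side -/

def phiP (t : ℝ) (x : Euc n) : Euc n → ℝ := quad (1 / t) x (t * ‖x‖ ^ 2 / 2 + n / 2 * Real.log (2 * π * t))

lemma rho_phiP {t : ℝ} (ht : 0 < t) (x θ : Euc n) : rho (phiP t x) θ = gaussDensity n t (θ - t • x) := by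
  have h0 : (0:ℝ) < 2 * π * t := by positivity
  rw [rho, gaussDensity, Real.rpow_def_of_pos h0, ← exp_add]
  congr 1
  rw [phiP, quad, norm_sub_sq_real, inner_smul_right, norm_smul, Real.norm_of_nonneg ht.le, real_inner_comm x θ]
  field_simp; ring

lemma gauss_one {t : ℝ} (ht : 0 < t) : ∫ x : Euc n, gaussDensity n t x = 1 := by
  have h := GaussianFourier.integral_rexp_neg_mul_sq_norm (V := Euc n) (b := 1 / (2 * t)) (by positivity)
  have e : ∀ x : Euc n, gaussDensity n t x = (2 * π * t) ^ (-(n : ℝ) / 2) * exp (-(1 / (2 * t)) * ‖x‖ ^ 2) := by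
    intro x; rw [gaussDensity]; congr 2; ring
  simp_rw [e]
  rw [integral_const_mul, h]
  have h0 : (0:ℝ) < 2 * π * t := by positivity
  have : π / (1 / (2 * t)) = 2 * π * t := by field_simp
  rw [this, ← Real.rpow_add h0]
  simp [finrank_euclideanSpace]
  ring_nf; simp

lemma gauss_int' {t : ℝ} (ht : 0 < t) : Integrable fun x : Euc n => gaussDensity n t x := by
  by_contra h
  have := gauss_one (n := n) ht
  rw [integral_undef h] at this
  norm_num at this

lemma prob_of_int {φ : Euc n → ℝ} (h1 : Integrable (rho φ)) (h : ∫ x, rho φ x = 1) :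
    IsProbabilityMeasure (nu φ) := by
  constructor
  rw [nu, withDensity_apply _ MeasurableSet.univ, Measure.restrict_univ]
  change ∫⁻ x, ENNReal.ofReal (rho φ x) = 1
  rw [← ofReal_integral_eq_lintegral_ofReal h1 (Eventually.of_forall fun x => (rho_pos φ x).le)]
  rw [h]; simp

lemma potP {t : ℝ} (ht : 0 < t) (x : Euc n) : Pot (phiP t x) (1 / t) := pot_quad (by positivity) _ _

lemma probP {t : ℝ} (ht : 0 < t) (x : Euc n) : IsProbabilityMeasure (nu (phiP t x)) := by
  have e : rho (phiP t x) = fun θ => gaussDensity n t (θ - t • x) := by ext θ; exact rho_phiP ht x θ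
  refine prob_of_int ?_ ?_
  · rw [e]; exact (gauss_int' ht).comp_sub_right _
  · rw [e, integral_sub_right_eq_self (fun θ => gaussDensity n t θ), gauss_one ht]

/-! tilt side -/

def phiQ (ψ : Euc n → ℝ) (t : ℝ) (θ : Euc n) : Euc n → ℝ :=
  fun x => ψ x + quad t θ (Real.log (tiltZ (rho ψ) t θ)) x

lemma potQ {ψ : Euc n → ℝ} {ε t : ℝ} (h : Pot ψ ε) (ht : 0 < t) (θ : Euc n) : Pot (phiQ ψ t θ) t :=
  h.add_quad ht _ _

lemma tiltZ_int {ψ : Euc n → ℝ} {ε t : ℝ} (h : Pot ψ ε) (ht : 0 < t) (θ : Euc n) :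
    Integrable fun x => Real.exp (⟪θ, x⟫ - t * ‖x‖ ^ 2 / 2) * rho ψ x := by
  have := pot_exp_int' (h.add_quad ht θ 0) 0
  have h2 := (EG.const (1:ℝ)).int (h.add_quad ht θ 0)
  rw [nu_integrable (h.add_quad ht θ 0).cont] at h2
  refine h2.congr (Eventually.of_forall fun x => ?_)
  simp only [rho, one_mul]
  rw [← exp_add]; congr 1; unfold quad; ring

lemma tiltZ_pos {ψ : Euc n → ℝ} {ε t : ℝ} (h : Pot ψ ε) (ht : 0 < t) (θ : Euc n) :
    0 < tiltZ (rho ψ) t θ := by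
  rw [tiltZ, integral_pos_iff_support_of_nonneg (fun x => (mul_pos (exp_pos _) (rho_pos ψ x)).le) (tiltZ_int h ht θ)]
  have : Function.support (fun x => Real.exp (⟪θ, x⟫ - t * ‖x‖ ^ 2 / 2) * rho ψ x) = Set.univ := by
    ext x; simp [(rho_pos ψ x).ne']
  rw [this]; exact Measure.measure_univ_pos.2 (NeZero.ne _)

lemma rho_phiQ {ψ : Euc n → ℝ} {ε t : ℝ} (h : Pot ψ ε) (ht : 0 < t) (θ x : Euc n) :
    rho (phiQ ψ t θ) x = tiltDensity (rho ψ) t θ x := by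
  have e : (tiltZ (rho ψ) t θ)⁻¹ = exp (-Real.log (tiltZ (rho ψ) t θ)) := by
    rw [exp_neg, Real.exp_log (tiltZ_pos h ht θ)]
  rw [tiltDensity, div_eq_mul_inv, e]
  simp only [rho]
  rw [← exp_add, ← exp_add]
  congr 1
  simp only [phiQ, quad, rho]; ring

lemma tilt_eq {ψ : Euc n → ℝ} {ε t : ℝ} (h : Pot ψ ε) (ht : 0 < t) (θ : Euc n) :
    tiltMeasure (fun y => Real.exp (-ψ y)) t θ = nu (phiQ ψ t θ) := by
  rw [tiltMeasure, nu]
  congr 1; ext x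
  have := rho_phiQ h ht θ x
  rw [rho] at this
  rw [this]; rfl

lemma probQ {ψ : Euc n → ℝ} {ε t : ℝ} (h : Pot ψ ε) (ht : 0 < t) (θ : Euc n) :
    IsProbabilityMeasure (nu (phiQ ψ t θ)) := by
  have e : rho (phiQ ψ t θ) = fun x => tiltDensity (rho ψ) t θ x := by ext x; exact rho_phiQ h ht θ x
  refine prob_of_int ?_ ?_
  · rw [e]; exact (tiltZ_int h ht θ).div_const _
  · rw [e]; simp only [tiltDensity]; rw [integral_div]; exact div_self (tiltZ_pos h ht θ).ne'

lemma tiltZ_meas {ψ : Euc n → ℝ} (h : Continuous ψ) (t : ℝ) : Measurable (tiltZ (rho ψ) t) := by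
  have : StronglyMeasurable (Function.uncurry fun (θ x : Euc n) => Real.exp (⟪θ, x⟫ - t * ‖x‖ ^ 2 / 2) * rho ψ x) := by
    apply Continuous.stronglyMeasurable
    unfold rho Function.uncurry
    fun_prop
  exact this.integral_prod_right.measurable

/-! kernels -/

def PK (n : ℕ) (t : ℝ) : Kernel (Euc n) (Euc n) :=
  Kernel.withDensity (Kernel.const _ volume) fun x θ => ENNReal.ofReal (Real.exp (-phiP t x θ))

def QK (ψ : Euc n → ℝ) (t : ℝ) : Kernel (Euc n) (Euc n) :=
  Kernel.withDensity (Kernel.const _ volume) fun θ x => ENNReal.ofReal (Real.exp (-phiQ ψ t θ x))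

lemma PK_meas (t : ℝ) : Measurable (Function.uncurry fun (x θ : Euc n) => ENNReal.ofReal (Real.exp (-phiP t x θ))) := by
  apply Measurable.ennreal_ofReal
  apply Continuous.measurable
  unfold phiP quad
  fun_prop

lemma QK_meas {ψ : Euc n → ℝ} (h : Continuous ψ) (t : ℝ) :
    Measurable (Function.uncurry fun (θ x : Euc n) => ENNReal.ofReal (Real.exp (-phiQ ψ t θ x))) := by
  apply Measurable.ennreal_ofReal
  apply Measurable.exp
  apply Measurable.neg
  unfold phiQ quad
  have h1 : Measurable fun p : Euc n × Euc n => Real.log (tiltZ (rho ψ) t p.1) :=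
    ((tiltZ_meas h t).comp measurable_fst).log
  have h2 : Measurable fun p : Euc n × Euc n => ψ p.2 + (t / 2 * ‖p.2‖ ^ 2 - ⟪p.1, p.2⟫) := by
    apply Continuous.measurable; fun_prop
  have e : (Function.uncurry fun (θ x : Euc n) => ψ x + (t / 2 * ‖x‖ ^ 2 - ⟪θ, x⟫ + Real.log (tiltZ (rho ψ) t θ)))
      = fun p : Euc n × Euc n => (ψ p.2 + (t / 2 * ‖p.2‖ ^ 2 - ⟪p.1, p.2⟫)) + Real.log (tiltZ (rho ψ) t p.1) := by
    ext p; simp only [Function.uncurry]; ring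
  change Measurable (Function.uncurry fun (θ x : Euc n) => ψ x + (t / 2 * ‖x‖ ^ 2 - ⟪θ, x⟫ + Real.log (tiltZ (rho ψ) t θ)))
  rw [e]
  exact h2.add h1

lemma PK_apply (t : ℝ) (x : Euc n) : PK n t x = nu (phiP t x) := by
  rw [PK, Kernel.withDensity_apply _ (PK_meas t)]; rfl

lemma QK_apply {ψ : Euc n → ℝ} (h : Continuous ψ) (t : ℝ) (θ : Euc n) : QK ψ t θ = nu (phiQ ψ t θ) := by
  rw [QK, Kernel.withDensity_apply _ (QK_meas h t)]; rfl

def kd (ψ : Euc n → ℝ) (t : ℝ) (θ : Euc n) : ℝ :=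
  exp (-(1 / t / 2 * ‖θ‖ ^ 2 + n / 2 * Real.log (2 * π * t) - Real.log (tiltZ (rho ψ) t θ)))

def mth (ψ : Euc n → ℝ) (t : ℝ) : Measure (Euc n) := volume.withDensity fun θ => ENNReal.ofReal (kd ψ t θ)

lemma kd_id (ψ : Euc n → ℝ) (t : ℝ) (x θ : Euc n) :
    exp (-ψ x) * exp (-phiP t x θ) = kd ψ t θ * exp (-phiQ ψ t θ x) := by
  rw [kd, ← exp_add, ← exp_add]
  congr 1
  simp only [phiP, phiQ, quad, real_inner_comm]
  ring

lemma swap_dens {a k : Euc n → ℝ≥0∞} {p q : Euc n → Euc n → ℝ≥0∞} (ha : Measurable a) (hk : Measurable k)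
    (hp : Measurable (Function.uncurry p)) (hq : Measurable (Function.uncurry q))
    (ha' : ∀ x, a x ≠ ⊤) (hk' : ∀ x, k x ≠ ⊤)
    (h : ∀ x θ, a x * p x θ = k θ * q θ x) {f : Euc n × Euc n → ℝ≥0∞} (hf : Measurable f) :
    ∫⁻ x, ∫⁻ θ, f (x, θ) ∂(volume.withDensity (p x)) ∂(volume.withDensity a)
      = ∫⁻ θ, ∫⁻ x, f (x, θ) ∂(volume.withDensity (q θ)) ∂(volume.withDensity k) := by
  have p1 : ∀ x, Measurable (p x) := fun x => hp.comp (measurable_prodMk_left (x := x))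
  have q1 : ∀ x, Measurable (q x) := fun x => hq.comp (measurable_prodMk_left (x := x))
  have f1 : ∀ x, Measurable fun θ => f (x, θ) := fun x => hf.comp (measurable_prodMk_left (x := x))
  have f2 : ∀ θ, Measurable fun x => f (x, θ) := fun θ => hf.comp (measurable_prodMk_right (y := θ))
  have e1 : ∀ x, ∫⁻ θ, f (x, θ) ∂(volume.withDensity (p x)) = ∫⁻ θ, p x θ * f (x, θ) := fun x => by
    rw [lintegral_withDensity_eq_lintegral_mul _ (p1 x) (f1 x)]; rfl
  have e2 : ∀ θ, ∫⁻ x, f (x, θ) ∂(volume.withDensity (q θ)) = ∫⁻ x, q θ x * f (x, θ) := fun θ => by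
    rw [lintegral_withDensity_eq_lintegral_mul _ (q1 θ) (f2 θ)]; rfl
  simp_rw [e1, e2]
  have m1 : Measurable fun x => ∫⁻ θ, p x θ * f (x, θ) := (hp.mul hf).lintegral_prod_right'
  have m2 : Measurable fun θ => ∫⁻ x, q θ x * f (x, θ) := (hq.mul (hf.comp measurable_swap)).lintegral_prod_right'
  rw [lintegral_withDensity_eq_lintegral_mul _ ha m1, lintegral_withDensity_eq_lintegral_mul _ hk m2]
  simp only [Pi.mul_apply]
  have e3 : ∀ x, a x * ∫⁻ θ, p x θ * f (x, θ) = ∫⁻ θ, a x * (p x θ * f (x, θ)) := fun x =>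
    (lintegral_const_mul' _ _ (ha' x)).symm
  have e4 : ∀ θ, k θ * ∫⁻ x, q θ x * f (x, θ) = ∫⁻ x, k θ * (q θ x * f (x, θ)) := fun θ =>
    (lintegral_const_mul' _ _ (hk' θ)).symm
  simp_rw [e3, e4]
  rw [lintegral_lintegral_swap]
  · refine lintegral_congr fun θ => lintegral_congr fun x => ?_
    rw [← mul_assoc, ← mul_assoc, h]
  · exact ((ha.comp measurable_fst).mul (hp.mul hf)).aemeasurable

lemma bayes {ψ : Euc n → ℝ} {ε t : ℝ} (h : Pot ψ ε) [hpr : IsProbabilityMeasure (nu ψ)] (ht : 0 < t) :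
    Bayes (nu ψ) (mth ψ t) (PK n t) (QK ψ t) := by
  have mP : IsMarkovKernel (PK n t) := ⟨fun x => by rw [PK_apply]; exact probP ht x⟩
  have mQ : IsMarkovKernel (QK ψ t) := ⟨fun x => by rw [QK_apply h.cont]; exact probQ h ht x⟩
  have km : Measurable (kd ψ t) := by
    unfold kd
    have h1 : Measurable fun θ : Euc n => Real.log (tiltZ (rho ψ) t θ) := (tiltZ_meas h.cont t).log
    fun_prop
  have sf : SFinite (mth ψ t) := by unfold mth; infer_instance
  have eq : nu ψ ⊗ₘ PK n t = (mth ψ t ⊗ₘ QK ψ t).map Prod.swap := by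
    refine Measure.ext_of_lintegral _ fun f hf => ?_
    rw [lintegral_map hf measurable_swap, Measure.lintegral_compProd hf,
      Measure.lintegral_compProd (by exact hf.comp measurable_swap)]
    simp_rw [PK_apply, QK_apply h.cont, nu, mth]
    have hc := h.cont
    have m0 : Measurable fun x : Euc n => ENNReal.ofReal (exp (-ψ x)) := by fun_prop
    refine swap_dens m0 km.ennreal_ofReal (PK_meas t) (QK_meas hc t) (fun _ => ENNReal.ofReal_ne_top)
      (fun _ => ENNReal.ofReal_ne_top) (fun x θ => ?_) hf
    rw [← ENNReal.ofReal_mul (exp_pos _).le, kd_id, ENNReal.ofReal_mul (show 0 ≤ kd ψ t θ from (exp_pos _).le)]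
  refine ⟨hpr, ⟨?_⟩, mP, mQ, eq⟩
  have h1 : (nu ψ ⊗ₘ PK n t) Set.univ = 1 := measure_univ
  rw [eq, Measure.map_apply measurable_swap MeasurableSet.univ, Set.preimage_univ,
    Measure.compProd_apply MeasurableSet.univ] at h1
  simpa using h1

lemma gauss_shift {t : ℝ} (ht : 0 < t) (F : Euc n → ℝ) (x : Euc n) :
    ∫ w, F (t • x + w) ∂(gaussMeasure n t) = ka (PK n t) F x := by
  have hm : Measurable (gaussDensity n t) := by unfold gaussDensity; fun_prop
  rw [ka, PK_apply, nu_integral (potP ht x).cont, gaussMeasure,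
    integral_withDensity_eq_integral_toReal_smul (by fun_prop) (by simp)]
  rw [← integral_add_left_eq_self (fun θ => F θ * rho (phiP t x) θ) (t • x)]
  congr 1; ext w
  rw [rho_phiP ht, ENNReal.toReal_ofReal (by unfold gaussDensity; positivity)]
  simp [mul_comm]

end PartG2

open MeasureTheory Real
open scoped ENNReal RealInnerProductSpace

noncomputable section PartG3
open scoped ContDiff Convolution Topology
open Filter ProbabilityTheory

variable {n : ℕ} {ψ : Euc n → ℝ} {ε t : ℝ}

lemma T1Q (hp : Pot ψ ε) (ht : 0 < t) (θ : Euc n) : 1 / t ∈ poincareSet (nu (phiQ ψ t θ)) := by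
  have := probQ hp ht θ
  exact T1 (potQ hp ht θ)

lemma T1P (ht : 0 < t) (x : Euc n) : t ∈ poincareSet (nu (phiP t x)) := by
  have := probP ht x
  simpa using T1 (potP ht x)

lemma EG.intP {f : Euc n → ℝ} (hf : EG f) (ht : 0 < t) (x : Euc n) : Integrable f (PK n t x) := by
  rw [PK_apply]; exact hf.int (potP ht x)

lemma EG.L2P {f : Euc n → ℝ} (hf : EG f) (ht : 0 < t) (x : Euc n) : MemLp f 2 (PK n t x) := by
  rw [PK_apply]; exact hf.L2 (potP ht x)

lemma EG.intQ {f : Euc n → ℝ} (hf : EG f) (hp : Pot ψ ε) (ht : 0 < t) (x : Euc n) : Integrable f (QK ψ t x) := by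
  rw [QK_apply hp.cont]; exact hf.int (potQ hp ht x)

lemma EG.L2Q {f : Euc n → ℝ} (hf : EG f) (hp : Pot ψ ε) (ht : 0 < t) (x : Euc n) : MemLp f 2 (QK ψ t x) := by
  rw [QK_apply hp.cont]; exact hf.L2 (potQ hp ht x)

lemma Q_shift (hp : Pot ψ ε) (ht : 0 < t) (f : Euc n → ℝ) (θ v : Euc n) :
    ka (QK ψ t) f (θ + v) = (∫ x, f x * exp ⟪v, x⟫ ∂(nu (phiQ ψ t θ))) / (∫ x, exp ⟪v, x⟫ ∂(nu (phiQ ψ t θ))) := by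
  set R := exp (Real.log (tiltZ (rho ψ) t θ) - Real.log (tiltZ (rho ψ) t (θ + v))) with hR
  have key : ∀ f : Euc n → ℝ, ∫ x, f x ∂(nu (phiQ ψ t (θ + v))) = R * ∫ x, f x * exp ⟪v, x⟫ ∂(nu (phiQ ψ t θ)) := by
    intro f
    rw [nu_integral (potQ hp ht _).cont, nu_integral (potQ hp ht _).cont, ← integral_const_mul]
    congr 1; ext x
    have : rho (phiQ ψ t (θ + v)) x = R * (exp ⟪v, x⟫ * rho (phiQ ψ t θ) x) := by
      rw [hR, rho, rho, ← exp_add, ← exp_add]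
      congr 1
      simp only [phiQ, quad, inner_add_left]; ring
    rw [this]; ring
  have h1 := key fun _ => 1
  have := probQ hp ht (θ + v)
  simp only [integral_const, one_mul, probReal_univ, smul_eq_mul, mul_one] at h1
  have hne : ∫ x, exp ⟪v, x⟫ ∂(nu (phiQ ψ t θ)) ≠ 0 := by
    intro h0; rw [h0] at h1; norm_num at h1
  rw [ka, QK_apply hp.cont, key f, eq_div_iff hne]
  linear_combination (-∫ x, f x * exp ⟪v, x⟫ ∂(nu (phiQ ψ t θ))) * h1

lemma Li.kaQ (hp : Pot ψ ε) (ht : 0 < t) {L : ℝ} {g : Euc n → ℝ} (hL : 0 ≤ L) (hg : Li L g) :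
    Li (L / t) (ka (QK ψ t) g) := by
  refine chain (c := 4 / t) (r := √t / 2) (by positivity) fun θ v hv => ?_
  have := probQ hp ht θ
  rw [Q_shift hp ht, show ka (QK ψ t) g θ = ∫ x, g x ∂(nu (phiQ ψ t θ)) by rw [ka, QK_apply hp.cont]]
  refine tilt_diff (potQ hp ht θ) hL hg v ?_
  rw [div_le_one ht]
  have := pow_le_pow_left₀ (norm_nonneg _) hv 2
  rw [div_pow, Real.sq_sqrt ht.le] at this
  linarith

lemma Li.kaP (ht : 0 < t) {L : ℝ} {h : Euc n → ℝ} (hL : 0 ≤ L) (hh : Li L h) :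
    Li (t * L) (ka (PK n t) h) := by
  have hg : gaussMeasure n t = nu (phiP t 0) := by
    rw [gaussMeasure, nu]; congr 1; ext x
    have := rho_phiP ht (0 : Euc n) x
    rw [smul_zero, sub_zero, rho] at this
    rw [this]
  have hs : ∀ x : Euc n, Li L fun w => h (t • x + w) := fun x a b => by
    have := hh (t • x + a) (t • x + b); simpa using this
  have := probP (n := n) ht 0
  have hi : ∀ x : Euc n, Integrable (fun w => h (t • x + w)) (nu (phiP t (0 : Euc n))) := fun x =>
    ((hs x).eg hL).int (potP ht 0)
  intro x y
  rw [← gauss_shift ht, ← gauss_shift ht, hg, ← integral_sub (hi x) (hi y)]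
  refine (abs_integral_le_integral_abs).trans ?_
  have := integral_mono ((hi x).sub (hi y)).abs (integrable_const (μ := nu (phiP t (0 : Euc n))) (t * L * ‖x - y‖)) fun w => ?_
  · simpa using this
  · have := hh (t • x + w) (t • y + w)
    refine this.trans (le_of_eq ?_)
    rw [add_sub_add_right_eq_sub, ← smul_sub, norm_smul, Real.norm_of_nonneg ht.le]; ring

/-- Cameron–Martin density -/
def ell (t : ℝ) (x v θ : Euc n) : ℝ := exp (⟪v, θ⟫ - t * (‖x + v‖ ^ 2 - ‖x‖ ^ 2) / 2)

lemma ell_eg (t : ℝ) (x v : Euc n) : EG (ell t x v) := by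
  have : Li ‖v‖ fun θ => ⟪v, θ⟫ - t * (‖x + v‖ ^ 2 - ‖x‖ ^ 2) / 2 := by
    refine Li.sub_const (fun x y => ?_) _
    rw [← inner_sub_right]; exact abs_real_inner_le_norm _ _
  exact this.expEG (norm_nonneg _)

lemma P_shift (ht : 0 < t) (h : Euc n → ℝ) (x v : Euc n) :
    ka (PK n t) h (x + v) = ∫ θ, h θ * ell t x v θ ∂(PK n t x) := by
  rw [ka, PK_apply, PK_apply, nu_integral (potP ht _).cont, nu_integral (potP ht _).cont]
  congr 1; ext θ
  have : rho (phiP t (x + v)) θ = ell t x v θ * rho (phiP t x) θ := by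
    rw [ell, rho, rho, ← exp_add]
    congr 1
    simp only [phiP, quad, inner_add_left]; ring
  rw [this]; ring

lemma ka_one {P : Kernel (Euc n) (Euc n)} [IsMarkovKernel P] (c : ℝ) (x : Euc n) : ka P (fun _ => c) x = c := by
  simp [ka]

lemma PK_markov (n : ℕ) (ht : 0 < t) : IsMarkovKernel (PK n t) :=
  ⟨fun x => by rw [PK_apply]; exact probP ht x⟩

lemma QK_markov (hp : Pot ψ ε) (ht : 0 < t) : IsMarkovKernel (QK ψ t) :=
  ⟨fun x => by rw [QK_apply hp.cont]; exact probQ hp ht x⟩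

lemma ell_int (ht : 0 < t) (x v : Euc n) : ∫ θ, ell t x v θ ∂(PK n t x) = 1 := by
  have := PK_markov n ht
  have h := P_shift ht (fun _ => 1) x v
  rw [ka_one] at h
  simpa using h.symm

lemma ell_sq (ht : 0 < t) (x v : Euc n) : ∫ θ, ell t x v θ ^ 2 ∂(PK n t x) = exp (t * ‖v‖ ^ 2) := by
  have e : ∀ θ, ell t x v θ ^ 2 = exp (t * ‖v‖ ^ 2) * ell t x ((2:ℝ) • v) θ := fun θ => by
    rw [ell, ell, ← Real.exp_nat_mul, ← exp_add]
    congr 1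
    rw [norm_add_sq_real, norm_add_sq_real, inner_smul_left, inner_smul_right, norm_smul]
    simp; ring
  simp_rw [e]
  rw [integral_const_mul, ell_int ht, mul_one]

lemma harnack (ht : 0 < t) {h : Euc n → ℝ} (hh : EG h) (x v : Euc n) :
    ka (PK n t) h (x + v) ^ 2 ≤ ka (PK n t) (fun y => h y ^ 2) x * exp (t * ‖v‖ ^ 2) := by
  rw [P_shift ht, ← ell_sq ht x v]
  exact cs_mul (hh.L2P ht x) ((ell_eg t x v).L2P ht x)

lemma P_diff (ht : 0 < t) {h : Euc n → ℝ} (hh : EG h) (x v : Euc n) :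
    (ka (PK n t) h (x + v) - ka (PK n t) h x) ^ 2 ≤ va (PK n t x) h * (exp (t * ‖v‖ ^ 2) - 1) := by
  have := PK_markov n ht
  have h1 := cov_le (hh.L2P ht x) ((ell_eg t x v).L2P ht x)
  have hv : va (PK n t x) (ell t x v) = exp (t * ‖v‖ ^ 2) - 1 := by
    rw [va, ell_sq ht, ell_int ht]; norm_num
  rw [ell_int ht, mul_one, hv, ← P_shift ht] at h1
  exact h1

lemma P_diff' (ht : 0 < t) {h : Euc n → ℝ} (hh : EG h) (x v : Euc n) :
    |ka (PK n t) h (x + v) - ka (PK n t) h x| ≤ √(t * va (PK n t x) h) * ‖v‖ * exp (t / 2 * ‖v‖ ^ 2) := by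
  have := PK_markov n ht
  have hv := va_nonneg (hh.L2P ht x)
  refine abs_le_of_sq_le_sq ?_ (by positivity)
  refine (P_diff ht hh x v).trans ?_
  rw [mul_pow, mul_pow, Real.sq_sqrt (by positivity), ← Real.exp_nat_mul]
  have e : ((2 : ℕ) : ℝ) * (t / 2 * ‖v‖ ^ 2) = t * ‖v‖ ^ 2 := by push_cast; ring
  rw [e]
  set y := t * ‖v‖ ^ 2 with hy
  have h1 : exp y - 1 ≤ y * exp y := by
    have a := add_one_le_exp (-y)
    have b : exp (-y) * exp y = 1 := by rw [← exp_add]; simp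
    nlinarith [exp_pos y]
  calc _ ≤ va (PK n t x) h * (y * exp y) := mul_le_mul_of_nonneg_left h1 hv
    _ = _ := by rw [hy]; ring

lemma P_grad (ht : 0 < t) {h : Euc n → ℝ} (hh : EG h) (x : Euc n) :
    ‖gradient (ka (PK n t) h) x‖ ^ 2 ≤ t * va (PK n t x) h := by
  have := PK_markov n ht
  have hv := va_nonneg (hh.L2P ht x)
  have := grad_of_local (Real.sqrt_nonneg _) (P_diff' ht hh x)
  have := pow_le_pow_left₀ (norm_nonneg _) this 2
  rwa [Real.sq_sqrt (by positivity)] at this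

lemma P_bdd_li (ht : 0 < t) {h : Euc n → ℝ} (hm : Measurable h) {M : ℝ} (hM : ∀ x, |h x| ≤ M) :
    Li (√t * M) (ka (PK n t) h) := by
  have := PK_markov n ht
  have hh := EG.of_bdd hm hM
  have hM0 : 0 ≤ M := (abs_nonneg _).trans (hM 0)
  refine chain (c := t / 2) (r := 1) one_pos fun x v _ => (P_diff' ht hh x v).trans ?_
  have h2 : va (PK n t x) h ≤ M ^ 2 := by
    have h1 : ∫ y, h y ^ 2 ∂(PK n t x) ≤ ∫ y, M ^ 2 ∂(PK n t x) :=
      integral_mono (hh.sq.intP ht x) (integrable_const _) fun y => sq_le_sq' (abs_le.1 (hM y)).1 (abs_le.1 (hM y)).2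
    rw [va]
    simp at h1
    nlinarith [sq_nonneg (∫ y, h y ∂(PK n t x))]
  have h3 : √(t * va (PK n t x) h) ≤ √t * M := by
    rw [Real.sqrt_mul ht.le]
    exact mul_le_mul_of_nonneg_left (Real.sqrt_le_iff.2 ⟨hM0, h2⟩) (Real.sqrt_nonneg _)
  gcongr

/-- exponential bound for `T = PQ` -/
lemma T_exp (hp : Pot ψ ε) (ht : 0 < t) {g : Euc n → ℝ} {β : ℝ} (hβ : 0 ≤ β) (hg : Li 1 g)
    (h1 : β ^ 2 / t ≤ 1) (x : Euc n) :
    ka (PK n t) (ka (QK ψ t) fun x => exp (β * g x)) x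
      ≤ exp (β * ka (PK n t) (ka (QK ψ t) g) x + 4 * (β ^ 2 / t)) := by
  have := probP ht x
  have := QK_markov hp ht
  have hbg : Li β fun x => β * g x := by
    have := hg.const_mul β; rwa [abs_of_nonneg hβ, mul_one] at this
  have a1 : ∀ θ, ka (QK ψ t) (fun x => exp (β * g x)) θ ≤ exp (β * ka (QK ψ t) g θ + 2 * (β ^ 2 / t)) := fun θ => by
    have := probQ hp ht θ
    have := laplace' (potQ hp ht θ) hβ hbg (T1Q hp ht θ) (by rw [one_div_mul_eq_div]; exact h1)
    rw [ka, ka, QK_apply hp.cont]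
    rw [integral_const_mul] at this
    refine this.trans (le_of_eq ?_)
    congr 2; ring
  have hQ : Li (β / t) fun θ => β * ka (QK ψ t) g θ := by
    have := (hg.kaQ hp ht zero_le_one).const_mul β
    rw [abs_of_nonneg hβ] at this; convert this using 1; ring
  have hQ0 : 0 ≤ β / t := by positivity
  have a2 := laplace' (potP ht x) hQ0 hQ (T1P ht x) (by
    rw [div_pow]; calc _ = β ^ 2 / t := by field_simp
      _ ≤ 1 := h1)
  rw [integral_const_mul] at a2
  have a3 : ka (PK n t) (ka (QK ψ t) fun x => exp (β * g x)) x ≤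
      ∫ θ, exp (β * ka (QK ψ t) g θ) * exp (2 * (β ^ 2 / t)) ∂(PK n t x) := by
    rw [ka]
    refine integral_mono_of_nonneg (Eventually.of_forall fun θ => integral_nonneg fun x => (exp_pos _).le) ?_
      (Eventually.of_forall fun θ => ?_)
    · exact ((hQ.expEG hQ0).intP ht x).mul_const _
    · simp only; rw [← exp_add]; exact a1 θ
  refine a3.trans ?_
  rw [integral_mul_const, PK_apply]
  refine (mul_le_mul_of_nonneg_right a2 (exp_pos _).le).trans (le_of_eq ?_)
  rw [← exp_add, ka, PK_apply]
  congr 1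
  field_simp; ring

end PartG3

open MeasureTheory Real
open scoped ENNReal RealInnerProductSpace

noncomputable section PartG4
open scoped ContDiff Convolution Topology
open Filter ProbabilityTheory

variable {n : ℕ} {ψ : Euc n → ℝ} {ε t : ℝ}

lemma CS.li {f : Euc n → ℝ} (hf : CS f) : ∃ L, 0 ≤ L ∧ Li L f := by
  obtain ⟨K, hK⟩ := ContDiff.lipschitzWith_of_hasCompactSupport hf.cpt hf.smooth (by simp)
  exact ⟨K, K.2, Li.of_lip hK⟩

lemma kaQ_cont (hp : Pot ψ ε) (ht : 0 < t) {f : Euc n → ℝ} (hf : CS f) : Continuous (ka (QK ψ t) f) := by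
  obtain ⟨L, hL, h⟩ := hf.li
  exact (h.kaQ hp ht hL).cont

lemma pc_meas (hp : Pot ψ ε) (ht : 0 < t) : Measurable fun θ => poincareConst (nu (phiQ ψ t θ)) := by
  refine measurable_of_Iic fun c => ?_
  by_cases hc : c < 0
  · convert MeasurableSet.empty
    ext θ
    simp only [Set.mem_preimage, Set.mem_Iic, Set.mem_empty_iff_false, iff_false, not_le]
    exact hc.trans_le (poincareConst_nonneg _)
  push Not at hc
  have : (fun θ => poincareConst (nu (phiQ ψ t θ))) ⁻¹' Set.Iic c =
      ⋂ h : {h : Euc n → ℝ // CS h}, {θ | ka (QK ψ t) (fun x => h.1 x ^ 2) θ - ka (QK ψ t) h.1 θ ^ 2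
        ≤ c * ka (QK ψ t) (fun x => ‖gradient h.1 x‖ ^ 2) θ} := by
    ext θ
    have := probQ hp ht θ
    have hq := potQ hp ht θ
    simp only [Set.mem_preimage, Set.mem_Iic, Set.mem_iInter, Set.mem_setOf_eq, ka, QK_apply hp.cont]
    constructor
    · intro h f
      exact (poincareSet_mono (poincareConst_mem ⟨_, T1Q hp ht θ⟩) h).2 f.1 f.2.ll (f.2.grad_sq.int_nu hq.cont)
    · intro h
      exact poincareConst_le (poincare_of_CS hq.smooth hc fun f hf => h ⟨f, hf⟩)
  rw [this]
  refine (isClosed_iInter fun h => ?_).measurableSet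
  have h2 : CS fun x => h.1 x ^ 2 := by
    simpa only [sq] using h.2.mul_left h.2.smooth
  exact isClosed_le ((kaQ_cont hp ht h2).sub ((kaQ_cont hp ht h.2).pow 2))
    ((kaQ_cont hp ht h.2.grad_sq).const_mul c)

lemma pc_int (hp : Pot ψ ε) [IsProbabilityMeasure (nu ψ)] (ht : 0 < t) :
    Integrable (fun θ => poincareConst (nu (phiQ ψ t θ))) (mth ψ t) := by
  have := (bayes hp ht).pm'
  refine (integrable_const (1 / t)).mono' (pc_meas hp ht).aestronglyMeasurable (Eventually.of_forall fun θ => ?_)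
  rw [Real.norm_of_nonneg (poincareConst_nonneg _)]
  exact poincareConst_le (T1Q hp ht θ)

lemma opn_cont : Continuous fun M : Fin n → Fin n → ℝ => opNorm (Matrix.of M) := by
  have h1 : Continuous fun M : Matrix (Fin n) (Fin n) ℝ => Matrix.toEuclideanCLM (𝕜 := ℝ) M :=
    LinearMap.continuous_of_finiteDimensional
      ((Matrix.toEuclideanCLM (n := Fin n) (𝕜 := ℝ)).toAlgEquiv.toLinearMap)
  exact (h1.comp (continuous_id : Continuous fun M : Fin n → Fin n → ℝ => Matrix.of M)).norm

lemma op_int (hp : Pot ψ ε) [IsProbabilityMeasure (nu ψ)] (ht : 0 < t) :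
    Integrable (fun θ => √(opNorm (covMatrix (nu (phiQ ψ t θ))))) (mth ψ t) := by
  have := (bayes hp ht).pm'
  have hli : ∀ i : Fin n, Li 1 fun x : Euc n => x i := fun i x y => by
    rw [one_mul]; exact coord_le (x - y) i
  set M : Euc n → Fin n → Fin n → ℝ := fun θ i j => ka (QK ψ t) (fun x => x i * x j) θ -
    ka (QK ψ t) (fun x => x i) θ * ka (QK ψ t) (fun x => x j) θ with hM
  have e : ∀ θ, covMatrix (nu (phiQ ψ t θ)) = Matrix.of (M θ) := fun θ => by
    simp only [covMatrix, hM, ka, QK_apply hp.cont]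
  have hMm : Measurable M := by
    refine measurable_pi_lambda _ fun i => measurable_pi_lambda _ fun j => ?_
    exact (ka_meas (by fun_prop) _).sub ((ka_meas (by fun_prop) _).mul (ka_meas (by fun_prop) _))
  have hMb : ∀ θ, M θ ∈ Metric.closedBall (0 : Fin n → Fin n → ℝ) (1 / t) := fun θ => by
    rw [mem_closedBall_zero_iff]
    refine (pi_norm_le_iff_of_nonneg (by positivity)).2 fun i => (pi_norm_le_iff_of_nonneg (by positivity)).2 fun j => ?_
    have := probQ hp ht θ
    have hq := potQ hp ht θ
    have h1 := cov_le (((hli i).eg zero_le_one).L2 hq) (((hli j).eg zero_le_one).L2 hq)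
    have h2 := (hli i).va_le (φ := phiQ ψ t θ) zero_le_one (T1Q hp ht θ)
    have h3 := (hli j).va_le (φ := phiQ ψ t θ) zero_le_one (T1Q hp ht θ)
    rw [Real.norm_eq_abs]
    refine abs_le_of_sq_le_sq ?_ (by positivity)
    simp only [hM, ka, QK_apply hp.cont]
    refine h1.trans ((mul_le_mul h2 h3 (va_nonneg (((hli j).eg zero_le_one).L2 hq)) (by positivity)).trans (le_of_eq (by ring)))
  simp_rw [e]
  have hc : Continuous fun M : Fin n → Fin n → ℝ => √(opNorm (Matrix.of M)) := opn_cont.sqrt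
  obtain ⟨C, hC⟩ := (isCompact_closedBall (0 : Fin n → Fin n → ℝ) (1 / t)).exists_bound_of_continuousOn hc.continuousOn
  refine (integrable_const C).mono' (hc.measurable.comp hMm).aestronglyMeasurable (Eventually.of_forall fun θ => ?_)
  exact hC _ (hMb θ)

/-- the averaged Poincaré constant -/
def Lam (ψ : Euc n → ℝ) (t : ℝ) : ℝ := ∫ θ, poincareConst (nu (phiQ ψ t θ)) ∂(mth ψ t)

lemma int_conv (hp : Pot ψ ε) [IsProbabilityMeasure (nu ψ)] (ht : 0 < t) {F : Euc n → ℝ}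
    (hF : Integrable F (mth ψ t)) :
    ∫ x, ∫ w, F (t • x + w) ∂(gaussMeasure n t) ∂(nu ψ) = ∫ θ, F θ ∂(mth ψ t) := by
  simp_rw [gauss_shift ht]
  exact (bayes hp ht).ka_integral hF

lemma Lam_le (hp : Pot ψ ε) [IsProbabilityMeasure (nu ψ)] (ht : 0 < t) :
    Lam ψ t ≤ (∫ θ, √(opNorm (covMatrix (nu (phiQ ψ t θ)))) ∂(mth ψ t)) / √t := by
  rw [Lam, ← integral_div]
  refine integral_mono (pc_int hp ht) ((op_int hp ht).div_const _) fun θ => ?_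
  have := probQ hp ht θ
  exact T2 (potQ hp ht θ)

lemma Lam_nonneg : 0 ≤ Lam ψ t := integral_nonneg fun _ => poincareConst_nonneg _

/-- M0 -/
lemma lip_var (hp : Pot ψ ε) [IsProbabilityMeasure (nu ψ)] (ht : 0 < t) {A : ℝ}
    (hA : poincareConst (nu ψ) * t ≤ A) {f : Euc n → ℝ} (hf : Li 1 f) :
    va (nu ψ) f ≤ (1 + A) * Lam ψ t := by
  have B := bayes hp ht
  have := B.pm'
  have hCm : poincareConst (nu ψ) ∈ poincareSet (nu ψ) := poincareConst_mem ⟨_, T1 hp⟩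
  set C := poincareConst (nu ψ) with hC
  have fL2 := (hf.eg zero_le_one).L2 hp
  set g : Euc n → ℝ := fun x => f x - ∫ y, f y ∂(nu ψ) with hg
  have gli : Li 1 g := hf.sub_const _
  have gE := gli.eg zero_le_one
  have gL2 := gE.L2 hp
  have gvar : va (nu ψ) f = ∫ x, g x ^ 2 ∂(nu ψ) := va_eq' fL2
  have gint : ∫ x, g x ∂(nu ψ) = 0 := by
    rw [hg, integral_sub (fL2.integrable (by norm_num)) (integrable_const _)]; simp
  have hli : Li (1 / t) (ka (QK ψ t) g) := gli.kaQ hp ht zero_le_one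
  have ht' : 0 ≤ 1 / t := by positivity
  have uli : Li 1 (ka (PK n t) (ka (QK ψ t) g)) := by
    have := hli.kaP ht ht'
    rwa [mul_one_div_cancel ht.ne'] at this
  set h := ka (QK ψ t) g with hh
  set u := ka (PK n t) h with hu
  have hL2 : MemLp h 2 (mth ψ t) := B.symm.ka_L2 gE.meas gL2
  have hE := hli.eg ht'
  have uL2 := (uli.eg zero_le_one).L2 hp
  have uint : ∫ x, u x ∂(nu ψ) = 0 := by
    rw [hu, B.ka_integral (hL2.integrable (by norm_num)), hh, B.symm.ka_integral (gL2.integrable (by norm_num)), gint]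
  have v1 := B.symm.va_int gE.meas gL2
  have v2 := B.va_int hE.meas hL2
  rw [← hu] at v2
  rw [← hh] at v1
  set x := ∫ x, g x ^ 2 ∂(nu ψ) with hx
  set y := ∫ x, h x ^ 2 ∂(mth ψ t) with hy
  set z := ∫ x, u x ^ 2 ∂(nu ψ) with hz
  have hz1 : z ≤ C * (t * (y - z)) := by
    have i1 := hCm.2 u uli.lip.locallyLipschitz (uli.grad_int zero_le_one).1
    rw [uint] at i1
    have i2 : ∫ x, ‖gradient u x‖ ^ 2 ∂(nu ψ) ≤ t * (y - z) := by
      rw [← v2.2, ← integral_const_mul]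
      exact integral_mono (uli.grad_int zero_le_one).1 (v2.1.const_mul t) fun x => P_grad ht hE x
    have := mul_le_mul_of_nonneg_left i2 hCm.1
    linarith
  have hy2 : y ^ 2 ≤ x * z := by
    have : y = ∫ x, g x * u x ∂(nu ψ) := by
      rw [hu, B.adj2 gL2 hL2, hy]; congr 1; ext x; rw [hh]; ring
    rw [this]; exact cs_mul gL2 uL2
  have hxy : x - y ≤ Lam ψ t := by
    rw [← v1.2, Lam]
    refine integral_mono v1.1 (pc_int hp ht) fun θ => ?_
    have := probQ hp ht θ
    simp only [QK_apply hp.cont]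
    have := gli.va_le (φ := phiQ ψ t θ) zero_le_one (poincareConst_mem ⟨_, T1Q hp ht θ⟩)
    simpa using this
  have x0 : 0 ≤ x := integral_nonneg fun _ => by positivity
  have y0 : 0 ≤ y := integral_nonneg fun _ => by positivity
  have z0 : 0 ≤ z := integral_nonneg fun _ => by positivity
  have a0 : 0 ≤ C * t := mul_nonneg hCm.1 ht.le
  rw [gvar]
  have k1 : (1 + C * t) * y ≤ C * t * x := by
    rcases y0.eq_or_lt with h0 | h0
    · rw [← h0]; simp; positivity
    · have : (1 + C * t) * z ≤ C * t * y := by linarith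
      have : (1 + C * t) * y * y ≤ C * t * x * y := by nlinarith
      exact le_of_mul_le_mul_right this h0
  have k2 : x ≤ (1 + C * t) * (x - y) := by nlinarith
  have k3 : 0 ≤ x - y := by
    by_contra hcon; push Not at hcon; nlinarith
  nlinarith

end PartG4

open MeasureTheory Real
open scoped ENNReal RealInnerProductSpace

noncomputable section PartG5
open scoped ContDiff Convolution Topology
open Filter ProbabilityTheory

variable {n : ℕ} {ψ : Euc n → ℝ} {ε t : ℝ}

/-- the self-adjoint operator -/
def TT (ψ : Euc n → ℝ) (t : ℝ) (f : Euc n → ℝ) : Euc n → ℝ := ka (PK n t) (ka (QK ψ t) f)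

lemma Li.TT (hp : Pot ψ ε) (ht : 0 < t) {g : Euc n → ℝ} (hg : Li 1 g) : Li 1 (TT ψ t g) := by
  have := (hg.kaQ hp ht zero_le_one).kaP ht (by positivity)
  rwa [mul_one_div_cancel ht.ne'] at this

lemma TT_nonneg {g : Euc n → ℝ} (hg : ∀ x, 0 ≤ g x) (x : Euc n) : 0 ≤ TT ψ t g x :=
  integral_nonneg fun _ => integral_nonneg fun _ => hg _

lemma Li.sub {L L' : ℝ} {f g : Euc n → ℝ} (hf : Li L f) (hg : Li L' g) : Li (L + L') fun x => f x - g x := by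
  intro x y
  have h1 := hf x y
  have h2 := hg x y
  rw [show f x - g x - (f y - g y) = (f x - f y) - (g x - g y) by ring, add_mul]
  exact (abs_sub _ _).trans (add_le_add h1 h2)

lemma key_ineq (hp : Pot ψ ε) [IsProbabilityMeasure (nu ψ)] (ht : 0 < t) {F g : Euc n → ℝ} {β S : ℝ}
    (hFm : Measurable F) (hF0 : ∀ x, 0 ≤ F x) (hFS : ∀ x, F x ≤ S) (hg : Li 1 g) (hg0 : ∀ x, 0 ≤ g x)
    (hβ : 0 ≤ β) (hβt : β ^ 2 / t ≤ 1) :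
    ∫ x, (β * (g x - TT ψ t g x) - 4 * (β ^ 2 / t)) * F x * TT ψ t F x ∂(nu ψ)
      ≤ ∫ x, F x ^ 2 ∂(nu ψ) - ∫ θ, ka (QK ψ t) F θ ^ 2 ∂(mth ψ t) := by
  have B := bayes hp ht
  have := B.pm'
  have mQ := QK_markov hp ht
  have FE : EG F := EG.of_bdd hFm (M := S) fun x => by rw [abs_of_nonneg (hF0 x)]; exact hFS x
  set g1 := TT ψ t g with hg1
  have g1L : Li 1 g1 := hg.TT hp ht
  have g10 : ∀ x, 0 ≤ g1 x := TT_nonneg hg0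
  set c := 4 * (β ^ 2 / t) with hc
  have c0 : 0 ≤ c := by positivity
  set U : Euc n → ℝ := fun x => β * (g x - g1 x) - c with hU
  have UL : Li (|β| * (1 + 1)) U := ((hg.sub g1L).const_mul β).sub_const c
  have UL0 : 0 ≤ |β| * (1 + 1) := by positivity
  have UE := UL.eg UL0
  have U2L : Li (|1/2| * (|β| * (1 + 1))) fun x => 1/2 * U x := UL.const_mul (1/2)
  have U2E := U2L.expEG (by positivity)
  have bL : Li (|β| * 1) fun x => β * g x := hg.const_mul β
  have WE := bL.expEG (by positivity)
  have W2E : EG fun x => exp (1/2 * (β * g x)) := (bL.const_mul (1/2)).expEG (by positivity)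
  set H : Euc n → ℝ := fun x => F x * exp (1/2 * (-(β * g1 x) - c)) with hH
  have hHb : ∀ x, |H x| ≤ S := fun x => by
    rw [hH, abs_of_nonneg (mul_nonneg (hF0 x) (exp_pos _).le)]
    have : exp (1/2 * (-(β * g1 x) - c)) ≤ 1 := exp_le_one_iff.2 (by
      have := mul_nonneg hβ (g10 x); linarith)
    calc F x * exp (1/2 * (-(β * g1 x) - c)) ≤ F x * 1 := mul_le_mul_of_nonneg_left this (hF0 x)
      _ ≤ S := by rw [mul_one]; exact hFS x
  have g1m : Measurable g1 := g1L.cont.measurable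
  have HE : EG H := EG.of_bdd (by rw [hH]; fun_prop) hHb
  have UF := UE.mul FE
  set W : Euc n → ℝ := fun x => exp (β * g x) with hW
  set J : Euc n → ℝ := fun x => H x ^ 2 with hJ
  have JE : EG J := HE.sq
  have QF2 := B.symm.ka_L2 FE.meas (FE.L2 hp)
  have QUF2 := B.symm.ka_L2 UF.meas (UF.L2 hp)
  have QJ2 := B.symm.ka_L2 JE.meas (JE.L2 hp)
  have QW2 := B.symm.ka_L2 WE.meas (WE.L2 hp)
  -- pointwise inequality
  have pw : ∀ θ, ka (QK ψ t) F θ ^ 2 + ka (QK ψ t) (fun x => U x * F x) θ * ka (QK ψ t) F θ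
      ≤ ka (QK ψ t) J θ * ka (QK ψ t) W θ := by
    intro θ
    set a := ka (QK ψ t) F θ with ha
    set b := ka (QK ψ t) (fun x => U x * F x) θ with hb
    have a0 : 0 ≤ a := integral_nonneg hF0
    have JW : (∫ x, H x * exp (1/2 * (β * g x)) ∂(QK ψ t θ)) ^ 2 ≤ ka (QK ψ t) J θ * ka (QK ψ t) W θ := by
      refine (cs_mul (HE.L2Q hp ht θ) (W2E.L2Q hp ht θ)).trans (le_of_eq ?_)
      rw [ka, ka]
      congr 2; ext x; rw [hW, ← Real.exp_nat_mul]; congr 1; push_cast; ring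
    refine le_trans ?_ JW
    have e1 : ∀ x, H x * exp (1/2 * (β * g x)) = F x * exp (1/2 * U x) := fun x => by
      rw [hH]; simp only; rw [mul_assoc, ← exp_add]; congr 2; rw [hU]; ring
    simp_rw [e1]
    have l1 : a + 1/2 * b ≤ ∫ x, F x * exp (1/2 * U x) ∂(QK ψ t θ) := by
      rw [ha, hb, ka, ka, ← integral_const_mul, ← integral_add (FE.intQ hp ht θ) ((UF.intQ hp ht θ).const_mul _)]
      refine integral_mono ((FE.intQ hp ht θ).add ((UF.intQ hp ht θ).const_mul _)) ((FE.mul U2E).intQ hp ht θ) fun x => ?_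
      have := mul_le_mul_of_nonneg_left (add_one_le_exp (1/2 * U x)) (hF0 x)
      simp only [Pi.add_apply]
      linarith
    by_cases hs : 0 ≤ a + 1/2 * b
    · have := pow_le_pow_left₀ hs l1 2
      nlinarith [sq_nonneg b]
    · push Not at hs
      have : a ^ 2 + b * a ≤ 0 := by nlinarith
      exact this.trans (sq_nonneg _)
  have i1 : ∫ θ, (ka (QK ψ t) F θ ^ 2 + ka (QK ψ t) (fun x => U x * F x) θ * ka (QK ψ t) F θ) ∂(mth ψ t)
      ≤ ∫ θ, ka (QK ψ t) J θ * ka (QK ψ t) W θ ∂(mth ψ t) :=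
    integral_mono (QF2.integrable_sq.add (QUF2.integrable_mul QF2)) (QJ2.integrable_mul QW2) pw
  rw [integral_add QF2.integrable_sq (by exact QUF2.integrable_mul QF2), ← B.adj2 (UF.L2 hp) QF2,
    ← B.adj2 (JE.L2 hp) QW2] at i1
  have i2 : ∫ x, J x * ka (PK n t) (ka (QK ψ t) W) x ∂(nu ψ) ≤ ∫ x, F x ^ 2 ∂(nu ψ) := by
    refine integral_mono ((JE.L2 hp).integrable_mul (B.ka_L2 (ka_meas WE.meas _) QW2)) (FE.sq.int hp) fun x => ?_
    have := T_exp hp ht hβ hg hβt x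
    have J0 : 0 ≤ J x := sq_nonneg _
    refine (mul_le_mul_of_nonneg_left this J0).trans (le_of_eq ?_)
    rw [hJ, hH]; simp only
    rw [mul_pow, ← Real.exp_nat_mul, mul_assoc, ← exp_add]
    have : ((2:ℕ):ℝ) * (1/2 * (-(β * g1 x) - c)) + (β * ka (PK n t) (ka (QK ψ t) g) x + 4 * (β ^ 2 / t)) = 0 := by
      rw [hc, hg1, TT]; push_cast; ring
    rw [this]; simp
  have e3 : ∫ x, U x * F x * TT ψ t F x ∂(nu ψ) = ∫ x, U x * F x * ka (PK n t) (ka (QK ψ t) F) x ∂(nu ψ) := rfl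
  rw [e3]
  linarith

lemma reach (hp : Pot ψ ε) (ht : 0 < t) {g : Euc n → ℝ} (hg : Li 1 g) {s : ℝ} (hs : 0 < s)
    (hts : t * (100 * s) ^ 2 = 1) {B' : Set (Euc n)} (hne : B'.Nonempty)
    (h1 : ∀ y ∈ B', TT ψ t g y ≤ 10 * s) (h2 : ∀ y ∈ B', va (PK n t y) (ka (QK ψ t) g) ≤ 10 * s ^ 2) (x : Euc n) :
    TT ψ t g x ≤ Metric.infDist x B' + 15 * s ∧
    (100 * s ≤ Metric.infDist x B' → TT ψ t g x ≤ Metric.infDist x B' + 15 * s - 100 * s) := by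
  have TL := hg.TT hp ht
  have QE : EG (ka (QK ψ t) g) := (hg.kaQ hp ht zero_le_one).eg (by positivity)
  constructor
  · have : TT ψ t g x - 15 * s ≤ Metric.infDist x B' := by
      refine (Metric.le_infDist hne).2 fun y hy => ?_
      have a := h1 y hy
      have b := (le_abs_self _).trans (TL x y)
      rw [dist_eq_norm]; linarith
    linarith
  · intro hr
    have : TT ψ t g x - 15 * s + 100 * s ≤ Metric.infDist x B' := by
      refine (Metric.le_infDist hne).2 fun y hy => ?_
      have hd : 100 * s ≤ ‖x - y‖ := by
        rw [← dist_eq_norm]; exact hr.trans (Metric.infDist_le_dist_of_mem hy)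
      have hd0 : 0 < ‖x - y‖ := by linarith
      set lam := 100 * s / ‖x - y‖ with hlam
      have l0 : 0 ≤ lam := by positivity
      have l1 : lam ≤ 1 := (div_le_one hd0).2 hd
      set v := lam • (x - y) with hv
      have vn : ‖v‖ = 100 * s := by
        rw [hv, norm_smul, Real.norm_of_nonneg l0, hlam]; field_simp
      have a := h1 y hy
      have b := P_diff ht QE y v
      rw [vn, hts] at b
      have e1 : exp 1 - 1 ≤ 1.7183 := by linarith [Real.exp_one_lt_d9]
      have e0 : 0 ≤ exp 1 - 1 := by linarith [Real.add_one_le_exp (1:ℝ)]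
      have b2 : (TT ψ t g (y + v) - TT ψ t g y) ^ 2 ≤ (5 * s) ^ 2 := by
        refine b.trans ((mul_le_mul (h2 y hy) e1 e0 (by positivity)).trans ?_)
        nlinarith [sq_nonneg s]
      have b3 := (abs_le_of_sq_le_sq' b2 (by positivity)).2
      have c := (le_abs_self _).trans (TL x (y + v))
      have e2 : x - (y + v) = (1 - lam) • (x - y) := by rw [hv, sub_smul, one_smul]; abel
      rw [e2, norm_smul, Real.norm_of_nonneg (by linarith)] at c
      have e3 : (1 - lam) * ‖x - y‖ = ‖x - y‖ - 100 * s := by rw [hlam]; field_simp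
      rw [dist_eq_norm]
      linarith
    linarith

lemma markov_real {μ : Measure (Euc n)} [IsProbabilityMeasure μ] {f : Euc n → ℝ} (hf : Measurable f) (hi : Integrable f μ)
    (h0 : ∀ x, 0 ≤ f x) {a b p : ℝ} (hb : 0 < b) (h : ∫ x, f x ∂μ ≤ a) (hp : a ≤ p * b) : 1 - p ≤ μ.real {x | f x ≤ b} := by
  have := mul_meas_ge_le_integral_of_nonneg (Eventually.of_forall h0) hi b
  have h2 : b * μ.real {x | f x ≤ b}ᶜ ≤ a := by
    refine le_trans (mul_le_mul_of_nonneg_left (measureReal_mono ?_) hb.le) (this.trans h)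
    intro x hx; simp at hx; exact hx.le
  have h3 : μ.real {x | f x ≤ b}ᶜ = 1 - μ.real {x | f x ≤ b} := probReal_compl_eq_one_sub (measurableSet_le hf measurable_const)
  rw [h3] at h2
  by_contra hcon
  push Not at hcon
  nlinarith

lemma inter_real {μ : Measure (Euc n)} [IsProbabilityMeasure μ] {A B : Set (Euc n)} (hB : MeasurableSet B)
    {p q : ℝ} (h1 : 1 - p ≤ μ.real A) (h2 : 1 - q ≤ μ.real B) : 1 - (p + q) ≤ μ.real (A ∩ B) := by
  have := measureReal_inter_add_sdiff (μ := μ) (s := A) hB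
  have h3 : μ.real (A \ B) ≤ μ.real Bᶜ := measureReal_mono fun x hx => hx.2
  rw [probReal_compl_eq_one_sub hB] at h3
  linarith

lemma infDist_li (B : Set (Euc n)) : Li 1 fun x => Metric.infDist x B :=
  Li.of_lip (Metric.lipschitz_infDist_pt B)

lemma mean_dist (hp : Pot ψ ε) [IsProbabilityMeasure (nu ψ)] {s : ℝ} (hs : 0 < s)
    (H : ∀ g : Euc n → ℝ, Li 1 g → va (nu ψ) g ≤ s ^ 2) {B : Set (Euc n)} (hB : MeasurableSet B)
    (hB2 : 1 / 2 ≤ (nu ψ).real B) : ∫ x, Metric.infDist x B ∂(nu ψ) ≤ 1.5 * s := by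
  have gl := infDist_li B
  have gL2 := (gl.eg zero_le_one).L2 hp
  have h1 := H _ gl
  rw [va_eq' gL2] at h1
  set a := ∫ x, Metric.infDist x B ∂(nu ψ) with ha
  have a0 : 0 ≤ a := integral_nonneg fun x => Metric.infDist_nonneg
  have h2 : a ^ 2 * (nu ψ).real B ≤ ∫ x, (Metric.infDist x B - a) ^ 2 ∂(nu ψ) := by
    have : ∫ x, B.indicator (fun _ => a ^ 2) x ∂(nu ψ) = a ^ 2 * (nu ψ).real B := by
      rw [integral_indicator hB, setIntegral_const, smul_eq_mul, mul_comm]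
    rw [← this]
    refine integral_mono ((integrable_const _).indicator hB) (gL2.sub (memLp_const a)).integrable_sq fun x => ?_
    by_cases hx : x ∈ B
    · simp [hx, Metric.infDist_zero_of_mem hx]
    · simp [hx]; positivity
  have h3 : a ^ 2 ≤ (1.5 * s) ^ 2 := by nlinarith [sq_nonneg a, sq_nonneg s]
  exact (abs_le_of_sq_le_sq' h3 (by positivity)).2

lemma class_step (hp : Pot ψ ε) [IsProbabilityMeasure (nu ψ)] (ht : 0 < t) {s : ℝ} (hs : 0 < s)
    (H : ∀ g : Euc n → ℝ, Li 1 g → va (nu ψ) g ≤ s ^ 2) {B Bs : Set (Euc n)} (hB : MeasurableSet B)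
    (hB2 : 1 / 2 ≤ (nu ψ).real B) (hBs : MeasurableSet Bs) (hBs2 : 1 - 0.1 ≤ (nu ψ).real Bs) :
    ∃ B' : Set (Euc n), MeasurableSet B' ∧ B' ⊆ Bs ∧ 1 / 2 ≤ (nu ψ).real B' ∧
      (∀ y ∈ B', TT ψ t (fun x => Metric.infDist x B) y ≤ 10 * s) ∧
      (∀ y ∈ B', va (PK n t y) (ka (QK ψ t) fun x => Metric.infDist x B) ≤ 10 * s ^ 2) := by
  have By := bayes hp ht
  have := By.pm'
  have mP := PK_markov n ht
  have gl := infDist_li B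
  have m := mean_dist hp hs H hB hB2
  have hv := H _ gl
  set g : Euc n → ℝ := fun x => Metric.infDist x B with hg
  have gE := gl.eg zero_le_one
  have gL2 := gE.L2 hp
  have g0 : ∀ x, 0 ≤ g x := fun x => Metric.infDist_nonneg
  have hE : EG (ka (QK ψ t) g) := (gl.kaQ hp ht zero_le_one).eg (by positivity)
  have hL2 := By.symm.ka_L2 gE.meas gL2
  have TL := gl.TT hp ht
  have TE := TL.eg zero_le_one
  have Tint : ∫ x, TT ψ t g x ∂(nu ψ) = ∫ x, g x ∂(nu ψ) := by
    rw [TT, By.ka_integral (hL2.integrable (by norm_num)), By.symm.ka_integral (gL2.integrable (by norm_num))]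
  have v2 := By.va_int hE.meas hL2
  have vm : Measurable fun y => va (PK n t y) (ka (QK ψ t) g) :=
    (ka_meas (hE.meas.pow_const 2) (PK n t)).sub ((ka_meas hE.meas (PK n t)).pow_const 2)
  have vle : ∫ y, va (PK n t y) (ka (QK ψ t) g) ∂(nu ψ) ≤ s ^ 2 := by
    rw [v2.2]
    have a1 := By.symm.ka_sq_le gE.meas gL2
    have a2 := va_nonneg (TE.L2 hp)
    rw [va, Tint] at a2
    rw [va] at hv
    have : ∫ x, ka (PK n t) (ka (QK ψ t) g) x ^ 2 ∂(nu ψ) = ∫ x, TT ψ t g x ^ 2 ∂(nu ψ) := rfl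
    rw [this]; linarith
  have k1 := markov_real TE.meas (TE.int hp) (TT_nonneg g0) (b := 10 * s) (p := 0.15) (by positivity) (Tint.trans_le m)
    (by linarith)
  have k2 := markov_real vm v2.1 (fun y => va_nonneg (hE.L2P ht y)) (b := 10 * s ^ 2) (p := 0.1) (by positivity) vle
    (by linarith)
  have m1 : MeasurableSet {x | TT ψ t g x ≤ 10 * s} := measurableSet_le TE.meas measurable_const
  have m2 : MeasurableSet {y | va (PK n t y) (ka (QK ψ t) g) ≤ 10 * s ^ 2} := measurableSet_le vm measurable_const
  refine ⟨(Bs ∩ {x | TT ψ t g x ≤ 10 * s}) ∩ {y | va (PK n t y) (ka (QK ψ t) g) ≤ 10 * s ^ 2},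
    (hBs.inter m1).inter m2, fun y hy => hy.1.1, ?_, fun y hy => hy.1.2, fun y hy => hy.2⟩
  have := inter_real m2 (inter_real m1 hBs2 k1) k2
  norm_num at this ⊢
  linarith

end PartG5

open MeasureTheory Real
open scoped ENNReal RealInnerProductSpace

noncomputable section PartG6
open scoped ContDiff Convolution Topology
open Filter ProbabilityTheory

variable {n : ℕ} {ψ : Euc n → ℝ} {ε t : ℝ}

/-- truncation -/
def clip (a : ℝ) : ℝ := max (-8) (min 8 a)

lemma clip_cont : Continuous clip := by unfold clip; fun_prop

lemma clip_bd (a : ℝ) : |clip a| ≤ 8 := by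
  unfold clip
  rw [abs_le]
  exact ⟨le_max_left _ _, max_le (by norm_num) (min_le_left _ _)⟩

lemma clip_id {a : ℝ} (h : |a| ≤ 8) : clip a = a := by
  rw [abs_le] at h
  unfold clip
  rw [min_eq_right h.2, max_eq_right h.1]

lemma clip_lip (a b : ℝ) : |clip a - clip b| ≤ |a - b| := by
  unfold clip
  refine (abs_max_sub_max_le_max _ _ _ _).trans ?_
  refine max_le (by simp) ((abs_min_sub_min_le_max _ _ _ _).trans (max_le (by simp) le_rfl))

lemma clip_up (a : ℝ) : clip (a - 1) ≤ a - 1 + a ^ 2 / 28 := by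
  unfold clip
  refine max_le (by nlinarith [sq_nonneg (a + 14)]) ((min_le_right _ _).trans (by nlinarith [sq_nonneg a]))

lemma clip_neg (a : ℝ) : clip (-a) = - clip a := by
  rcases le_total a (-8) with h | h <;> rcases le_total a 8 with h' | h' <;>
  simp only [clip, max_def, min_def] <;> split_ifs <;> linarith

lemma clip_dn (a : ℝ) : a + 1 - a ^ 2 / 28 ≤ clip (a + 1) := by
  have h := clip_up (-a)
  rw [show -a - 1 = -(a + 1) by ring, clip_neg] at h
  nlinarith

lemma clip_center {μ : Measure (Euc n)} [IsProbabilityMeasure μ] {u : Euc n → ℝ} (hm : Measurable u)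
    (h2 : MemLp u 2 μ) (h0 : ∫ x, u x ∂μ = 0) (h1 : ∫ x, u x ^ 2 ∂μ ≤ 1) :
    ∃ c : ℝ, c ^ 2 ≤ 1 ∧ ∫ x, clip (u x - c) ∂μ = 0 := by
  have hi : ∀ c, Integrable (fun x => clip (u x - c)) μ := fun c =>
    Integrable.of_bound ((clip_cont.measurable.comp (hm.sub_const c)).aestronglyMeasurable) 8
      (Eventually.of_forall fun x => clip_bd _)
  have hu : Integrable u μ := h2.integrable (by norm_num)
  have cont : Continuous fun c => ∫ x, clip (u x - c) ∂μ := by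
    refine continuous_of_dominated (bound := fun _ => 8) (fun c => (hi c).aestronglyMeasurable)
      (fun c => Eventually.of_forall fun x => clip_bd _) (integrable_const _)
      (Eventually.of_forall fun x => clip_cont.comp (continuous_const.sub continuous_id))
  have b1 : ∫ x, clip (u x - 1) ∂μ ≤ 0 := by
    have : ∫ x, clip (u x - 1) ∂μ ≤ ∫ x, (u x - 1 + u x ^ 2 / 28) ∂μ :=
      integral_mono (hi 1) (by exact (hu.sub (integrable_const _)).add (h2.integrable_sq.div_const _)) fun x => clip_up _
    rw [integral_add (by exact hu.sub (integrable_const _)) (h2.integrable_sq.div_const _),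
      integral_sub hu (integrable_const _), integral_div, h0] at this
    simp at this
    linarith
  have b2 : 0 ≤ ∫ x, clip (u x - (-1)) ∂μ := by
    have : ∫ x, (u x + 1 - u x ^ 2 / 28) ∂μ ≤ ∫ x, clip (u x - (-1)) ∂μ :=
      integral_mono (by exact (hu.add (integrable_const _)).sub (h2.integrable_sq.div_const _)) (hi (-1)) fun x => by
        simpa using clip_dn (u x)
    rw [integral_sub (by exact hu.add (integrable_const _)) (h2.integrable_sq.div_const _),
      integral_add hu (integrable_const _), integral_div, h0] at this
    simp at this
    simp only [sub_neg_eq_add]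
    linarith
  obtain ⟨c, hc, hc2⟩ := intermediate_value_Icc' (by norm_num : (-1:ℝ) ≤ 1) cont.continuousOn ⟨b1, b2⟩
  exact ⟨c, by nlinarith [hc.1, hc.2], hc2⟩

lemma ka_abs_le {P : Kernel (Euc n) (Euc n)} [IsMarkovKernel P] {f : Euc n → ℝ} {M : ℝ} (h : ∀ x, |f x| ≤ M) (x : Euc n) :
    |ka P f x| ≤ M := by
  have := norm_integral_le_of_norm_le_const (μ := P x) (C := M) (f := f) (Eventually.of_forall h)
  simpa [ka] using this

/-- contractions decrease the energy -/
lemma energy_contract (hp : Pot ψ ε) [IsProbabilityMeasure (nu ψ)] (ht : 0 < t) {u F : Euc n → ℝ} (hu : EG u)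
    (hF : EG F) {k : ℝ → ℝ} (hk : ∀ a b, |k a - k b| ≤ |a - b|) (hgf : ∀ x, F x = k (u x)) :
    ∫ x, F x ^ 2 ∂(nu ψ) - ∫ θ, ka (QK ψ t) F θ ^ 2 ∂(mth ψ t) ≤
    ∫ x, u x ^ 2 ∂(nu ψ) - ∫ θ, ka (QK ψ t) u θ ^ 2 ∂(mth ψ t) := by
  have B := bayes hp ht
  have mQ := QK_markov hp ht
  have a := B.symm.va_int hu.meas (hu.L2 hp)
  have b := B.symm.va_int hF.meas (hF.L2 hp)
  rw [← a.2, ← b.2]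
  exact integral_mono b.1 a.1 fun θ => va_contract (hu.L2Q hp ht θ) (hF.L2Q hp ht θ) hk hgf

/-- a centred bounded function of small energy is small -/
lemma small_of_energy (hp : Pot ψ ε) [IsProbabilityMeasure (nu ψ)] (ht : 0 < t) {s : ℝ}
    (hts : t * (100 * s) ^ 2 = 1) (H : ∀ g : Euc n → ℝ, Li 1 g → va (nu ψ) g ≤ s ^ 2) {G : Euc n → ℝ}
    (hm : Measurable G) (hb : ∀ x, |G x| ≤ 8) (h0 : ∫ x, G x ∂(nu ψ) = 0)
    (hE : ∫ x, G x ^ 2 ∂(nu ψ) - ∫ θ, ka (QK ψ t) G θ ^ 2 ∂(mth ψ t) ≤ 0.001) :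
    ∫ x, G x ^ 2 ∂(nu ψ) ≤ 0.0084 := by
  have B := bayes hp ht
  have := B.pm'
  have mQ := QK_markov hp ht
  have hG := EG.of_bdd hm hb
  have L2 := hG.L2 hp
  have Qm := ka_meas hm (QK ψ t)
  have QL2 := B.symm.ka_L2 hm L2
  have gp := B.symm.gap hm L2
  have TL := P_bdd_li ht Qm (fun x => ka_abs_le hb x)
  have hst : 0 < √t := Real.sqrt_pos.2 ht
  have T1 := TL.const_mul (1 / (√t * 8))
  rw [abs_of_pos (by positivity), one_div_mul_cancel (by positivity)] at T1
  have v := H _ T1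
  rw [va_const_mul] at v
  have T0 : ∫ x, ka (PK n t) (ka (QK ψ t) G) x ∂(nu ψ) = 0 := by
    rw [B.ka_integral (QL2.integrable (by norm_num)), B.symm.ka_integral (L2.integrable (by norm_num)), h0]
  rw [va, T0, div_pow, mul_pow, Real.sq_sqrt ht.le] at v
  have v2 : ∫ x, ka (PK n t) (ka (QK ψ t) G) x ^ 2 ∂(nu ψ) ≤ 0.0064 := by
    have e : 0.0064 = t * 8 ^ 2 * s ^ 2 := by nlinarith
    rw [e]
    have := mul_le_mul_of_nonneg_left v (by positivity : 0 ≤ t * 8 ^ 2)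
    refine le_trans (le_of_eq ?_) this
    field_simp; ring
  linarith

end PartG6

open MeasureTheory Real
open scoped ENNReal RealInnerProductSpace

noncomputable section PartG7
open scoped ContDiff Convolution Topology
open Filter ProbabilityTheory

variable {n : ℕ} {ψ : Euc n → ℝ} {ε t : ℝ}

/-- the iteration argument: a nonnegative low-energy weight which is small near a large set is impossible -/
lemma final_step (hp : Pot ψ ε) [IsProbabilityMeasure (nu ψ)] (ht : 0 < t) {s : ℝ} (hs : 0 < s)
    (hts : t * (100 * s) ^ 2 = 1) (H : ∀ g : Euc n → ℝ, Li 1 g → va (nu ψ) g ≤ s ^ 2) {F G : Euc n → ℝ} {S : ℝ}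
    (hFm : Measurable F) (hF0 : ∀ x, 0 ≤ F x) (hFS : ∀ x, F x ≤ S) (hGm : Measurable G) (hG8 : ∀ x, |G x| ≤ 8)
    (hF1 : 0.998 ≤ ∫ x, F x ^ 2 ∂(nu ψ)) (hF2 : ∫ x, F x ^ 2 ∂(nu ψ) ≤ 2)
    (hE : ∫ x, F x ^ 2 ∂(nu ψ) - ∫ θ, ka (QK ψ t) F θ ^ 2 ∂(mth ψ t) ≤ 0.001)
    (hG2 : ∫ x, G x ^ 2 ∂(nu ψ) ≤ 0.0084) {Bs : Set (Euc n)} (hBs : MeasurableSet Bs)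
    (hBs2 : 1 - 0.1 ≤ (nu ψ).real Bs)
    (hFG : ∀ x, ∀ y ∈ Bs, ‖x - y‖ ≤ 100 * s → F x = |G x|) : False := by
  have B := bayes hp ht
  have := B.pm'
  have mQ := QK_markov hp ht
  have mP := PK_markov n ht
  have hFa : ∀ x, |F x| ≤ S := fun x => by rw [abs_of_nonneg (hF0 x)]; exact hFS x
  have FE := EG.of_bdd hFm hFa
  have FL2 := FE.L2 hp
  have QFL2 := B.symm.ka_L2 hFm FL2
  have TFm : Measurable (TT ψ t F) := ka_meas (ka_meas hFm _) _
  have TFa : ∀ x, |TT ψ t F x| ≤ S := fun x => ka_abs_le (fun y => ka_abs_le hFa y) x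
  have TF0 : ∀ x, 0 ≤ TT ψ t F x := TT_nonneg hF0
  have TFE := EG.of_bdd TFm TFa
  have TFL2 := TFE.L2 hp
  have TFn : ∫ x, TT ψ t F x ^ 2 ∂(nu ψ) ≤ 2 :=
    ((B.ka_sq_le (ka_meas hFm _) QFL2).trans (B.symm.ka_sq_le hFm FL2)).trans hF2
  set w : Euc n → ℝ := fun x => F x * TT ψ t F x with hw
  have wE : EG w := FE.mul TFE
  have w0 : ∀ x, 0 ≤ w x := fun x => mul_nonneg (hF0 x) (TF0 x)
  have S0 : 0 ≤ S := (abs_nonneg _).trans (hFa 0)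
  have wS : ∀ x, w x ≤ S * S := fun x => mul_le_mul (hFS x) ((le_abs_self _).trans (TFa x)) (TF0 x) S0
  have Z : ∫ x, w x ∂(nu ψ) = ∫ θ, ka (QK ψ t) F θ ^ 2 ∂(mth ψ t) := by
    have := B.adj2 FL2 QFL2
    rw [show ∫ x, w x ∂(nu ψ) = ∫ x, F x * ka (PK n t) (ka (QK ψ t) F) x ∂(nu ψ) from rfl, this]
    congr 1; ext x; ring
  have Z1 : 0.997 ≤ ∫ x, w x ∂(nu ψ) := by rw [Z]; linarith
  set Φ : Set (Euc n) → ℝ := fun A => ∫ x, Metric.infDist x A * w x ∂(nu ψ) with hΦ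
  have dI : ∀ A : Set (Euc n), EG fun x => Metric.infDist x A := fun A => (infDist_li A).eg zero_le_one
  set cl : Set (Set (Euc n)) := {A | MeasurableSet A ∧ A ⊆ Bs ∧ 1 / 2 ≤ (nu ψ).real A} with hcl
  have bdd : BddAbove (Φ '' cl) := by
    refine ⟨S * S * (1.5 * s), ?_⟩
    rintro _ ⟨A, hA, rfl⟩
    have h1 := mean_dist hp hs H hA.1 hA.2.2
    have h2 : Φ A ≤ ∫ x, S * S * Metric.infDist x A ∂(nu ψ) := by
      refine integral_mono (((dI A).mul wE).int hp) (((dI A).int hp).const_mul _) fun x => ?_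
      dsimp only
      rw [mul_comm]
      exact mul_le_mul_of_nonneg_right (wS x) Metric.infDist_nonneg
    rw [integral_const_mul] at h2
    exact h2.trans (mul_le_mul_of_nonneg_left h1 (by positivity))
  have ne : (Φ '' cl).Nonempty := ⟨_, Bs, ⟨hBs, subset_rfl, by linarith⟩, rfl⟩
  obtain ⟨_, ⟨A, hA, rfl⟩, hlt⟩ := exists_lt_of_lt_csSup ne (by linarith : sSup (Φ '' cl) - 10 * s < sSup (Φ '' cl))
  obtain ⟨A', hA'm, hA's, hA'h, hT, hV⟩ := class_step hp ht hs H hA.1 hA.2.2 hBs hBs2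
  have hle : Φ A' ≤ Φ A + 10 * s := by
    have := le_csSup bdd ⟨A', ⟨hA'm, hA's, hA'h⟩, rfl⟩
    linarith
  have hne : A'.Nonempty := by
    by_contra h
    rw [Set.not_nonempty_iff_eq_empty] at h
    rw [h] at hA'h; norm_num at hA'h
  have gl := infDist_li A
  set g : Euc n → ℝ := fun x => Metric.infDist x A with hg
  have Rch := reach hp ht gl hs hts hne hT hV
  have hβ : (1 / (1600 * s)) ^ 2 / t = 1 / 256 := by
    have h1 : t = 1 / (100 * s) ^ 2 := by field_simp; linarith
    rw [h1]; field_simp; norm_num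
  have key := key_ineq hp ht hFm hF0 hFS gl (fun x => Metric.infDist_nonneg) (β := 1 / (1600 * s)) (by positivity)
    (by rw [hβ]; norm_num)
  rw [hβ] at key
  have TgE : EG (TT ψ t g) := (gl.TT hp ht).eg zero_le_one
  have GE := EG.of_bdd hGm hG8
  have GaE : EG fun x => |G x| := EG.of_bdd hGm.abs (M := 8) (fun x => by rw [abs_abs]; exact hG8 x)
  -- the cross term
  have cr : ∫ x, |G x| * TT ψ t F x ∂(nu ψ) ≤ 0.13 := by
    have h := cs_mul (GaE.L2 hp) TFL2
    simp_rw [sq_abs] at h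
    have h2 : (∫ x, G x ^ 2 ∂(nu ψ)) * ∫ x, TT ψ t F x ^ 2 ∂(nu ψ) ≤ 0.0084 * 2 :=
      mul_le_mul hG2 TFn (integral_nonneg fun x => by positivity) (by norm_num)
    exact (abs_le_of_sq_le_sq' (h.trans (h2.trans (by norm_num))) (by norm_num)).2
  have pw : ∀ x, 1 / (1600 * s) * (g x * w x - Metric.infDist x A' * w x + 85 * s * w x - 100 * s * (|G x| * TT ψ t F x))
      - 4 * (1 / 256) * w x ≤ (1 / (1600 * s) * (g x - TT ψ t g x) - 4 * (1 / 256)) * F x * TT ψ t F x := by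
    intro x
    have e : (1 / (1600 * s) * (g x - TT ψ t g x) - 4 * (1 / 256)) * F x * TT ψ t F x =
      1 / (1600 * s) * ((g x - TT ψ t g x) * w x) - 4 * (1 / 256) * w x := by rw [hw]; ring
    rw [e]
    refine sub_le_sub_right (mul_le_mul_of_nonneg_left ?_ (by positivity)) _
    have hwx := w0 x
    rcases le_or_gt (100 * s) (Metric.infDist x A') with hr | hr
    · have h1 := mul_le_mul_of_nonneg_right ((Rch x).2 hr) hwx
      have h2 : 0 ≤ 100 * s * (|G x| * TT ψ t F x) := by have := TF0 x; positivity
      nlinarith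
    · have h1 := mul_le_mul_of_nonneg_right (Rch x).1 hwx
      obtain ⟨y, hy, hxy⟩ := (Metric.infDist_lt_iff hne).1 hr
      rw [dist_eq_norm] at hxy
      have h2 := hFG x y (hA's hy) hxy.le
      have h3 : |G x| * TT ψ t F x = w x := by rw [← h2]
      rw [h3]
      nlinarith
  have I1 : Integrable (fun x => g x * w x) (nu ψ) := ((dI A).mul wE).int hp
  have I2 : Integrable (fun x => Metric.infDist x A' * w x) (nu ψ) := ((dI A').mul wE).int hp
  have I3 : Integrable w (nu ψ) := wE.int hp
  have I4 : Integrable (fun x => |G x| * TT ψ t F x) (nu ψ) := (GaE.mul TFE).int hp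
  have I5 : Integrable (fun x => (1 / (1600 * s) * (g x - TT ψ t g x) - 4 * (1 / 256)) * F x * TT ψ t F x) (nu ψ) :=
    ((((EG.const _).mul ((dI A).sub TgE)).sub (EG.const _)).mul FE |>.mul TFE).int hp
  have J : ∫ x, (1 / (1600 * s) * (g x * w x - Metric.infDist x A' * w x + 85 * s * w x - 100 * s * (|G x| * TT ψ t F x))
      - 4 * (1 / 256) * w x) ∂(nu ψ) = 1 / (1600 * s) * (Φ A - Φ A' + 85 * s * ∫ x, w x ∂(nu ψ)
        - 100 * s * ∫ x, |G x| * TT ψ t F x ∂(nu ψ)) - 4 * (1 / 256) * ∫ x, w x ∂(nu ψ) := by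
    rw [integral_sub (by exact ((((I1.sub I2).add (I3.const_mul _)).sub (I4.const_mul _)).const_mul _)) (I3.const_mul _),
      integral_const_mul, integral_sub (by exact (I1.sub I2).add (I3.const_mul _)) (I4.const_mul _),
      integral_add (by exact I1.sub I2) (I3.const_mul _), integral_sub I1 I2, integral_const_mul, integral_const_mul,
      integral_const_mul]
  have fin := integral_mono (((((I1.sub I2).add (I3.const_mul (85 * s))).sub (I4.const_mul (100 * s))).const_mul
    (1 / (1600 * s))).sub (I3.const_mul (4 * (1 / 256)))) I5 pw
  have fin2 := (le_of_eq J.symm).trans (fin.trans (key.trans hE))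
  set W := ∫ x, w x ∂(nu ψ)
  set K := ∫ x, |G x| * TT ψ t F x ∂(nu ψ)
  have lb : 1 / (1600 * s) * (s * (-10 + 85 * W - 13)) ≤ 1 / (1600 * s) * (Φ A - Φ A' + 85 * s * W - 100 * s * K) := by
    refine mul_le_mul_of_nonneg_left ?_ (by positivity)
    nlinarith
  have e : 1 / (1600 * s) * (s * (-10 + 85 * W - 13)) = (-10 + 85 * W - 13) / 1600 := by field_simp
  rw [e] at lb
  linarith

lemma core (hp : Pot ψ ε) [IsProbabilityMeasure (nu ψ)] (ht : 0 < t) {s : ℝ} (hs : 0 < s)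
    (hts : t * (100 * s) ^ 2 = 1) (H : ∀ g : Euc n → ℝ, Li 1 g → va (nu ψ) g ≤ s ^ 2) {f : Euc n → ℝ} {S : ℝ}
    (hfm : Measurable f) (hfS : ∀ x, |f x| ≤ S) (hf0 : ∫ x, f x ∂(nu ψ) = 0) (hf1 : ∫ x, f x ^ 2 ∂(nu ψ) = 1)
    (hE : ∫ x, f x ^ 2 ∂(nu ψ) - ∫ θ, ka (QK ψ t) f θ ^ 2 ∂(mth ψ t) ≤ 0.001) : False := by
  have B := bayes hp ht
  have := B.pm'
  have mQ := QK_markov hp ht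
  have mP := PK_markov n ht
  have fE := EG.of_bdd hfm hfS
  have fL2 := fE.L2 hp
  have hm := ka_meas hfm (QK ψ t)
  have hS : ∀ x, |ka (QK ψ t) f x| ≤ S := ka_abs_le hfS
  have hL2 := B.symm.ka_L2 hfm fL2
  have g1 := B.symm.gap hfm fL2
  have q1 := B.symm.ka_sq_le hfm fL2
  have hh0 : ∫ x, ka (QK ψ t) f x ∂(mth ψ t) = 0 := by rw [B.symm.ka_integral (fL2.integrable (by norm_num)), hf0]
  set h := ka (QK ψ t) f with hh
  have hEg := EG.of_bdd hm hS
  have g2 := B.gap hm hL2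
  have q2 := B.ka_sq_le hm hL2
  have um := ka_meas hm (PK n t)
  have uS : ∀ x, |ka (PK n t) h x| ≤ S := ka_abs_le hS
  have u0 : ∫ x, ka (PK n t) h x ∂(nu ψ) = 0 := by rw [B.ka_integral (hL2.integrable (by norm_num)), hh0]
  have uh : ∀ c x, ka (PK n t) (fun y => h y - c) x = ka (PK n t) h x - c := by
    intro c x
    rw [ka, integral_sub (hEg.intP ht x) (integrable_const _)]; simp [ka]
  set u := ka (PK n t) h with hu
  have uE := EG.of_bdd um uS
  have uL2 := uE.L2 hp
  obtain ⟨c, hc, hc0⟩ := clip_center um uL2 u0 (by linarith)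
  have cE : EG fun x => u x - c := uE.sub (EG.const c)
  have Gm : Measurable fun x => clip (u x - c) := clip_cont.measurable.comp cE.meas
  have GE := EG.of_bdd Gm (fun x => clip_bd _)
  have Fb : ∀ x, |u x - c| ≤ S + |c| := fun x => (abs_sub _ _).trans (add_le_add (uS x) le_rfl)
  have FE : EG fun x => |u x - c| := EG.of_bdd cE.meas.abs (M := S + |c|) fun x => by rw [abs_abs]; exact Fb x
  have e1 := energy_contract hp ht uE GE (k := fun a => clip (a - c)) (fun a b => by
    simpa using clip_lip (a - c) (b - c)) (fun x => rfl)
  have e2 := energy_contract hp ht uE FE (k := fun a => |a - c|) (fun a b => by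
    simpa using abs_abs_sub_abs_le (a - c) (b - c)) (fun x => rfl)
  have G2 := small_of_energy hp ht hts H Gm (fun x => clip_bd _) hc0 (by linarith)
  have F2 : ∫ x, |u x - c| ^ 2 ∂(nu ψ) = ∫ x, u x ^ 2 ∂(nu ψ) + c ^ 2 := by
    simp_rw [sq_abs]
    rw [va_eq uL2 c, va, u0]; ring
  have h2 : EG fun y => (h y - c) ^ 2 := (hEg.sub (EG.const c)).sq
  have h2i : Integrable (fun y => (h y - c) ^ 2) (mth ψ t) := (hL2.sub (memLp_const c)).integrable_sq
  have mk := markov_real (b := 20) (a := 2) (p := 0.1) (ka_meas h2.meas (PK n t)) (B.ka_int h2.meas h2i)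
    (fun x => integral_nonneg fun y => sq_nonneg _) (by norm_num) (by
      rw [B.ka_integral h2i, va_eq hL2 c, va, hh0]; nlinarith) (by norm_num)
  refine final_step hp ht hs hts H cE.meas.abs (fun x => abs_nonneg _) Fb Gm (fun x => clip_bd _) ?_ ?_ (by linarith) G2
    (measurableSet_le (ka_meas h2.meas (PK n t)) measurable_const) mk ?_
  · rw [F2]; nlinarith
  · rw [F2]; nlinarith
  · intro x y hy hxy
    have hk := harnack ht (hEg.sub (EG.const c)) y (x - y)
    rw [add_sub_cancel, uh] at hk
    have b1 : exp (t * ‖x - y‖ ^ 2) ≤ 2.7182818286 := by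
      refine le_trans (exp_le_exp.2 ?_) Real.exp_one_lt_d9.le
      rw [← hts]
      exact mul_le_mul_of_nonneg_left (pow_le_pow_left₀ (norm_nonneg _) hxy 2) ht.le
    have b2 : (u x - c) ^ 2 ≤ 8 ^ 2 := by
      refine hk.trans ((mul_le_mul hy b1 (exp_pos _).le (by norm_num)).trans (by norm_num))
    rw [clip_id (abs_le_of_sq_le_sq b2 (by norm_num))]

/-- comparison of the spectral gap with concentration of Lipschitz functions -/
lemma lip_to_poincare (hp : Pot ψ ε) [IsProbabilityMeasure (nu ψ)] {V : ℝ} (hV : 0 < V)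
    (H : ∀ g : Euc n → ℝ, Li 1 g → va (nu ψ) g ≤ V) : 10 ^ 7 * V ∈ poincareSet (nu ψ) := by
  refine poincare_of_CS hp.smooth (by positivity) fun f hf => ?_
  by_contra hcon
  push Not at hcon
  obtain ⟨L, hL, fL⟩ := hf.li
  obtain ⟨M, hM⟩ := hf.cpt.exists_bound_of_continuous hf.smooth.continuous
  have D0 : 0 ≤ ∫ x, ‖gradient f x‖ ^ 2 ∂(nu ψ) := integral_nonneg fun x => by positivity
  set D := ∫ x, ‖gradient f x‖ ^ 2 ∂(nu ψ) with hD
  have vpos : 0 < va (nu ψ) f := lt_of_le_of_lt (by positivity) hcon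
  have fE := fL.eg hL
  have fL2 := fE.L2 hp
  obtain ⟨t, ht0⟩ : ∃ t : ℝ, t = 1 / (10 ^ 4 * V) := ⟨_, rfl⟩
  have ht : 0 < t := by rw [ht0]; positivity
  have B := bayes hp ht
  have := B.pm'
  have hs2 : √V ^ 2 = V := Real.sq_sqrt hV.le
  have hts : t * (100 * √V) ^ 2 = 1 := by rw [mul_pow, hs2, ht0]; field_simp; norm_num
  -- energy bound
  have gm : Measurable fun x => ‖gradient f x‖ ^ 2 := (grad_meas _).pow_const 2
  have gi : Integrable (fun x => ‖gradient f x‖ ^ 2) (nu ψ) := (fL.grad_int hL).1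
  have en : ∫ x, f x ^ 2 ∂(nu ψ) - ∫ θ, ka (QK ψ t) f θ ^ 2 ∂(mth ψ t) ≤ 10 ^ 4 * V * D := by
    have a := B.symm.va_int fE.meas fL2
    rw [← a.2]
    have b := B.symm.ka_int gm gi
    have c := B.symm.ka_integral gi
    rw [hD, ← c, ← integral_const_mul]
    refine integral_mono a.1 (b.const_mul _) fun θ => ?_
    have pq := probQ hp ht θ
    have := (T1Q hp ht θ).2 f fL.lip.locallyLipschitz (fL.grad_int hL).1
    have e : (1 / t) = 10 ^ 4 * V := by rw [ht0]; field_simp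
    rw [e] at this
    dsimp only [ka]
    rw [QK_apply hp.cont]
    exact this
  set a := ∫ x, f x ∂(nu ψ) with ha
  set σ := √(va (nu ψ) f) with hσ
  have σ0 : 0 < σ := Real.sqrt_pos.2 vpos
  have σ2 : σ ^ 2 = va (nu ψ) f := Real.sq_sqrt vpos.le
  have mQ := QK_markov hp ht
  have fi : Integrable f (nu ψ) := fL2.integrable (by norm_num)
  have fm := fE.meas
  refine core hp ht (Real.sqrt_pos.2 hV) hts (by rw [hs2]; exact H) (f := fun x => σ⁻¹ * (f x - a))
    (S := σ⁻¹ * (M + |a|)) ((fm.sub_const a).const_mul _) (fun x => ?_) ?_ ?_ ?_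
  · rw [abs_mul, abs_of_pos (by positivity)]
    exact mul_le_mul_of_nonneg_left ((abs_sub _ _).trans (add_le_add (hM x) le_rfl)) (by positivity)
  · rw [integral_const_mul, integral_sub fi (integrable_const _)]; simp [ha]
  · simp_rw [mul_pow]
    rw [integral_const_mul, ← va_eq' fL2, ← σ2]; field_simp
  · have fE2 : EG fun x => σ⁻¹ * (f x - a) := (EG.const _).mul (fE.sub (EG.const _))
    have x1 := B.symm.va_int fE2.meas (fE2.L2 hp)
    have x2 := B.symm.va_int fE.meas fL2
    rw [← x1.2]
    have e : ∀ θ, va (QK ψ t θ) (fun x => σ⁻¹ * (f x - a)) = σ⁻¹ ^ 2 * va (QK ψ t θ) f := fun θ => by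
      rw [va_const_mul, va_sub_const (fE.L2Q hp ht θ)]
    simp_rw [e]
    rw [integral_const_mul, x2.2, inv_pow, σ2, inv_mul_le_iff₀ vpos]
    have : va (nu ψ) f > 10 ^ 7 * V * D := hcon
    linarith

end PartG7


/-- Corollary: for `0 < t < A·λ₀`,
`λ₀⁻¹ ≤ C(A+1)·E[λ_t⁻¹] ≤ C(A+1)·E[√‖A_t‖_op]/√t`. -/
theorem eigenvalue_localization_bound :
    ∃ C : ℝ, 0 < C ∧ ∀ n : ℕ, ∀ μ : Measure (Euc n), IsProbabilityMeasure μ →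
      ∀ ψ : Euc n → ℝ, IsRegularMeasure μ ψ →
      ∀ lam0 : ℝ, lam0 = 1 / poincareConst μ →
      ∀ A t : ℝ, 0 < A → 0 < t → t < A * lam0 →
      lam0⁻¹ ≤ C * (A + 1) *
          ∫ x, ∫ w, poincareConst (tiltMeasure (fun y => Real.exp (-ψ y)) t (t • x + w))
            ∂(gaussMeasure n t) ∂μ ∧
      C * (A + 1) *
          (∫ x, ∫ w, poincareConst (tiltMeasure (fun y => Real.exp (-ψ y)) t (t • x + w))
            ∂(gaussMeasure n t) ∂μ) ≤
        C * (A + 1) *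
          (∫ x, ∫ w,
              Real.sqrt (opNorm (covMatrix (tiltMeasure (fun y => Real.exp (-ψ y)) t (t • x + w))))
            ∂(gaussMeasure n t) ∂μ) / Real.sqrt t := by
  refine ⟨10 ^ 7, by norm_num, ?_⟩
  intro n μ hμ ψ hreg lam0 hlam A t hA ht htA
  obtain ⟨⟨hsm, ⟨ε, hε, hess⟩, -⟩, rfl⟩ := hreg
  change IsProbabilityMeasure (nu ψ) at hμ
  have hp : Pot ψ ε := by
    refine ⟨hsm, hε, fun x v => ?_⟩
    have := (hess x v).1
    rw [iteratedFDeriv_two_apply] at this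
    simpa using this
  have h0 : lam0 = 1 / poincareConst (nu ψ) := hlam
  have hl : lam0⁻¹ = poincareConst (nu ψ) := by rw [h0]; simp
  have hcn := poincareConst_nonneg (nu ψ)
  have hpos : 0 < poincareConst (nu ψ) := by
    refine lt_of_le_of_ne hcn fun h => ?_
    rw [h0, ← h] at htA
    simp at htA
    linarith
  have hct : poincareConst (nu ψ) * t ≤ A := by
    rw [h0, mul_one_div, lt_div_iff₀ hpos] at htA
    linarith
  have main : poincareConst (nu ψ) ≤ 10 ^ 7 * (A + 1) * Lam ψ t := by
    refine le_of_forall_pos_le_add fun η hη => ?_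
    have hΛ : 0 ≤ Lam ψ t := Lam_nonneg
    have hV : 0 < (1 + A) * Lam ψ t + η / 10 ^ 7 := by positivity
    have := poincareConst_le (lip_to_poincare hp hV fun g hg => (lip_var hp ht hct hg).trans (by
      have : 0 < η / 10 ^ 7 := by positivity
      linarith))
    refine this.trans (le_of_eq ?_)
    field_simp; ring
  have e1 : ∫ x, ∫ w, poincareConst (tiltMeasure (fun y => Real.exp (-ψ y)) t (t • x + w))
            ∂(gaussMeasure n t) ∂(nu ψ) = Lam ψ t := by
    simp_rw [tilt_eq hp ht]
    exact int_conv hp ht (pc_int hp ht)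
  have e2 : ∫ x, ∫ w, Real.sqrt (opNorm (covMatrix (tiltMeasure (fun y => Real.exp (-ψ y)) t (t • x + w))))
            ∂(gaussMeasure n t) ∂(nu ψ) = ∫ θ, √(opNorm (covMatrix (nu (phiQ ψ t θ)))) ∂(mth ψ t) := by
    simp_rw [tilt_eq hp ht]
    exact int_conv hp ht (op_int hp ht)
  change lam0⁻¹ ≤ 10 ^ 7 * (A + 1) * (∫ x, ∫ w, poincareConst (tiltMeasure (fun y => Real.exp (-ψ y)) t (t • x + w))
            ∂(gaussMeasure n t) ∂(nu ψ)) ∧ 10 ^ 7 * (A + 1) * (∫ x, ∫ w, poincareConst (tiltMeasure (fun y => Real.exp (-ψ y)) t (t • x + w))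
            ∂(gaussMeasure n t) ∂(nu ψ)) ≤ 10 ^ 7 * (A + 1) * (∫ x, ∫ w, Real.sqrt (opNorm (covMatrix (tiltMeasure (fun y => Real.exp (-ψ y)) t (t • x + w))))
            ∂(gaussMeasure n t) ∂(nu ψ)) / Real.sqrt t
  rw [e1, e2, hl]
  refine ⟨main, ?_⟩
  rw [mul_div_assoc]
  exact mul_le_mul_of_nonneg_left (Lam_le hp ht) (by positivity)
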